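/- arXiv:2001.01951 — 2 statements merged into one kernel-verified Lean document; each statement's English description precedes it below -/
import Mathlib

section
/- (Ronkin, 1978.) Let f : ℝ^d → ℂ be a function that is an exponential polynomial in each variable separately: for each k ∈ {1,...,d} and each point (a_1,...,a_{k-1},a_{k+1},...,a_d) ∈ ℝ^{d-1}, the one-variable function x_k ↦ f(a_1,...,a_{k-1},x_k,a_{k+1},...,a_d) is an exponential polynomial on ℝ. Then f has the form f(x_1,...,x_d) = Σ_{k=1}^s P_k(x_1,...,x_d) exp(λ_k(x_1,...,x_d)), where each P_k is a polynomial in ℂ[x_1,...,x_d] and each λ_k is a polynomial in ℂ[x_1,...,x_d] of degree at most 1 in each variable separately. -/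
/-- `g : ℝ → ℂ` is an exponential polynomial: a finite sum of terms
`Q_j(t) * exp(μ_j t)` with `Q_j` complex polynomials and `μ_j ∈ ℂ`. -/
def IsExpPoly1 (g : ℝ → ℂ) : Prop :=
  ∃ (m : ℕ) (Q : Fin m → Polynomial ℂ) (mu : Fin m → ℂ),
    ∀ t : ℝ, g t = ∑ j, Polynomial.eval (t : ℂ) (Q j) * Complex.exp (mu j * t)

open Polynomial in
/-- The operator `Q ↦ Q' + q' Q`, describing differentiation of `Q * exp q`. -/
noncomputable def expDeriv (q Q : ℂ[X]) : ℂ[X] := derivative Q + derivative q * Q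

open Polynomial in
theorem expDeriv_ne_zero {q Q : ℂ[X]} (hq : derivative q ≠ 0) (hQ : Q ≠ 0) :
    expDeriv q Q ≠ 0 := by
  intro h
  have h1 : derivative Q = -(derivative q * Q) := eq_neg_of_add_eq_zero_left h
  have h2 : (derivative Q).degree < Q.degree := degree_derivative_lt hQ
  rw [h1, degree_neg, degree_mul] at h2
  have h3 : 0 ≤ (derivative q).degree := zero_le_degree_iff.2 hq
  exact absurd h2 (not_lt.2 (le_add_of_nonneg_left h3))

open Polynomial in
theorem expDeriv_iterate_eq_zero {q Q : ℂ[X]} (hq : derivative q ≠ 0) {N : ℕ}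
    (h : (expDeriv q)^[N] Q = 0) : Q = 0 := by
  induction N with
  | zero => simpa using h
  | succ n ih =>
    rw [Function.iterate_succ_apply'] at h
    by_contra hQ
    exact expDeriv_ne_zero hq (fun h' => hQ (ih h')) h

open Polynomial in
theorem hasDerivAt_eval_ofReal (Q : ℂ[X]) (t : ℝ) :
    HasDerivAt (fun t : ℝ => Q.eval (t : ℂ)) ((derivative Q).eval (t : ℂ)) t :=
  (Q.hasDerivAt (t : ℂ)).comp_ofReal

open Polynomial in
theorem hasDerivAt_eval_mul_exp (Q q : ℂ[X]) (t : ℝ) :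
    HasDerivAt (fun t : ℝ => Q.eval (t : ℂ) * Complex.exp (q.eval (t : ℂ)))
      ((expDeriv q Q).eval (t : ℂ) * Complex.exp (q.eval (t : ℂ))) t := by
  have h := (hasDerivAt_eval_ofReal Q t).mul (hasDerivAt_eval_ofReal q t).cexp
  refine h.congr_deriv ?_
  simp only [expDeriv, eval_add, eval_mul]
  ring

open Polynomial in
theorem iterate_deriv_expSum {ι : Type*} (s : Finset ι) (R : ℂ[X]) (Q q : ι → ℂ[X])
    (h : ∀ t : ℝ, R.eval (t : ℂ) +
      ∑ i ∈ s, (Q i).eval (t : ℂ) * Complex.exp ((q i).eval (t : ℂ)) = 0) (N : ℕ) (t : ℝ) :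
    (derivative^[N] R).eval (t : ℂ) +
      ∑ i ∈ s, ((expDeriv (q i))^[N] (Q i)).eval (t : ℂ) * Complex.exp ((q i).eval (t : ℂ)) = 0 := by
  induction N generalizing t with
  | zero => simpa using h t
  | succ n ih =>
    simp only [Function.iterate_succ_apply']
    have h1 := (hasDerivAt_eval_ofReal (derivative^[n] R) t).add
      (HasDerivAt.fun_sum (u := s) fun i _ =>
        hasDerivAt_eval_mul_exp ((expDeriv (q i))^[n] (Q i)) (q i) t)
    refine h1.unique ?_
    have : ((fun t : ℝ => (derivative^[n] R).eval (t : ℂ)) + fun t : ℝ =>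
      ∑ i ∈ s, ((expDeriv (q i))^[n] (Q i)).eval (t : ℂ) * Complex.exp ((q i).eval (t : ℂ)))
        = fun _ => 0 := funext ih
    rw [this]
    exact hasDerivAt_const t 0

open Polynomial in
theorem polynomial_eq_zero_of_eval_ofReal {Q : ℂ[X]} (h : ∀ t : ℝ, Q.eval (t : ℂ) = 0) : Q = 0 :=
  Q.eq_zero_of_infinite_isRoot
    ((Set.infinite_range_of_injective Complex.ofReal_injective).mono (by rintro _ ⟨t, rfl⟩; exact h t))

open Polynomial in
/-- Exponentials of polynomials with pairwise nonconstant differences are linearly independent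
over the ring of polynomials. -/
theorem exp_polynomial_indep {ι : Type*} (s : Finset ι) (Q q : ι → ℂ[X])
    (hq : ∀ i ∈ s, ∀ j ∈ s, i ≠ j → derivative (q i - q j) ≠ 0)
    (h : ∀ t : ℝ, ∑ i ∈ s, (Q i).eval (t : ℂ) * Complex.exp ((q i).eval (t : ℂ)) = 0) :
    ∀ i ∈ s, Q i = 0 := by
  classical
  induction s using Finset.induction_on generalizing Q q with
  | empty => simp
  | insert a s ha ih =>
    have h1 : ∀ t : ℝ, (Q a).eval (t : ℂ) +
        ∑ i ∈ s, (Q i).eval (t : ℂ) * Complex.exp ((q i - q a).eval (t : ℂ)) = 0 := by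
      intro t
      have h2 := h t
      rw [Finset.sum_insert ha] at h2
      have h3 : Complex.exp (-(q a).eval (t : ℂ)) * Complex.exp ((q a).eval (t : ℂ)) = 1 := by
        rw [← Complex.exp_add]; simp
      calc _ = Complex.exp (-(q a).eval (t : ℂ)) * ((Q a).eval (t : ℂ) *
            Complex.exp ((q a).eval (t : ℂ)) +
            ∑ i ∈ s, (Q i).eval (t : ℂ) * Complex.exp ((q i).eval (t : ℂ))) := by
            rw [mul_add, Finset.mul_sum]
            congr 1
            · rw [mul_left_comm, h3, mul_one]
            · refine Finset.sum_congr rfl fun i _ => ?_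
              rw [eval_sub, sub_eq_neg_add, Complex.exp_add]; ring
        _ = 0 := by rw [h2, mul_zero]
    have h2 := iterate_deriv_expSum s (Q a) Q (fun i => q i - q a) h1 ((Q a).natDegree + 1)
    have h3 : derivative^[(Q a).natDegree + 1] (Q a) = 0 :=
      iterate_derivative_eq_zero (Nat.lt_succ_self _)
    simp only [h3, eval_zero, zero_add] at h2
    have h4 := ih (fun i => (expDeriv (q i - q a))^[(Q a).natDegree + 1] (Q i)) (fun i => q i - q a)
      (fun i hi j hj hij => by
        rw [sub_sub_sub_cancel_right]
        exact hq i (Finset.mem_insert_of_mem hi) j (Finset.mem_insert_of_mem hj) hij) h2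
    have h5 : ∀ i ∈ s, Q i = 0 := fun i hi => expDeriv_iterate_eq_zero
      (hq i (Finset.mem_insert_of_mem hi) a (Finset.mem_insert_self _ _)
        (fun e => ha (e ▸ hi))) (h4 i hi)
    intro i hi
    rcases Finset.mem_insert.1 hi with rfl | hi
    · refine polynomial_eq_zero_of_eval_ofReal fun t => ?_
      have := h1 t
      rwa [Finset.sum_eq_zero (fun j hj => by rw [h5 j hj]; simp), add_zero] at this
    · exact h5 i hi

open Polynomial in
/-- Exponentials with distinct frequencies are linearly independent over the polynomials. -/
theorem exp_indep {ι : Type*} (s : Finset ι) (Q : ι → ℂ[X]) (μ : ι → ℂ)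
    (hμ : Set.InjOn μ s)
    (h : ∀ t : ℝ, ∑ i ∈ s, (Q i).eval (t : ℂ) * Complex.exp (μ i * t) = 0) :
    ∀ i ∈ s, Q i = 0 := by
  refine exp_polynomial_indep s Q (fun i => C (μ i) * X) ?_ ?_
  · intro i hi j hj hij
    rw [← sub_mul, ← C_sub, derivative_C_mul, derivative_X, mul_one, Ne, C_eq_zero, sub_eq_zero]
    exact fun e => hij (hμ hi hj e)
  · simpa using h

open Polynomial in
/-- In a vanishing exponential sum every nonzero term shares its frequency with another term. -/
theorem exists_ne_of_expSum_eq_zero {ι : Type*} [Fintype ι] (Q : ι → ℂ[X]) (μ : ι → ℂ)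
    (h : ∀ t : ℝ, ∑ i, (Q i).eval (t : ℂ) * Complex.exp (μ i * t) = 0)
    (i₀ : ι) (h0 : Q i₀ ≠ 0) : ∃ i, i ≠ i₀ ∧ μ i = μ i₀ := by
  classical
  by_contra! hne
  have h1 : ∀ t : ℝ, ∑ ν ∈ Finset.univ.image μ,
      (∑ i with μ i = ν, Q i).eval (t : ℂ) * Complex.exp (ν * t) = 0 := by
    intro t
    rw [← h t, ← Finset.sum_fiberwise_of_maps_to (g := μ) (t := Finset.univ.image μ)
      (fun i _ => Finset.mem_image_of_mem _ (Finset.mem_univ i))]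
    refine Finset.sum_congr rfl fun ν _ => ?_
    rw [eval_finsetSum, Finset.sum_mul]
    refine Finset.sum_congr rfl fun i hi => ?_
    rw [(Finset.mem_filter.1 hi).2]
  have h2 := exp_indep _ _ (fun ν => ν) (fun _ _ _ _ e => e) h1 (μ i₀)
    (Finset.mem_image_of_mem _ (Finset.mem_univ i₀))
  have h3 : (Finset.univ.filter fun i => μ i = μ i₀) = {i₀} := by
    ext i
    simp only [Finset.mem_filter, Finset.mem_univ, true_and, Finset.mem_singleton]
    exact ⟨fun e => by_contra fun hi => hne i hi e, fun e => e ▸ rfl⟩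
  rw [h3, Finset.sum_singleton] at h2
  exact h0 h2

open Polynomial in
/-- Normal form of an exponential polynomial. -/
theorem IsExpPoly1.exists_normal_form {g : ℝ → ℂ} (hg : IsExpPoly1 g) :
    ∃ (Λ : Finset ℂ) (P : ℂ → ℂ[X]), (∀ ν ∈ Λ, P ν ≠ 0) ∧
      ∀ t : ℝ, g t = ∑ ν ∈ Λ, (P ν).eval (t : ℂ) * Complex.exp (ν * t) := by
  classical
  obtain ⟨m, Q, μ, h⟩ := hg
  let P : ℂ → ℂ[X] := fun ν => ∑ i with μ i = ν, Q i
  refine ⟨(Finset.univ.image μ).filter fun ν => P ν ≠ 0, P,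
    fun ν hν => (Finset.mem_filter.1 hν).2, fun t => ?_⟩
  have h1 : ∑ ν ∈ (Finset.univ.image μ).filter (fun ν => P ν ≠ 0),
      (P ν).eval (t : ℂ) * Complex.exp (ν * t) =
      ∑ ν ∈ Finset.univ.image μ, (P ν).eval (t : ℂ) * Complex.exp (ν * t) :=
    Finset.sum_filter_of_ne (fun ν _ hν hP => hν (by rw [hP]; simp))
  rw [h1, h t, ← Finset.sum_fiberwise_of_maps_to (g := μ) (t := Finset.univ.image μ)
      (fun i _ => Finset.mem_image_of_mem _ (Finset.mem_univ i))]
  refine Finset.sum_congr rfl fun ν _ => ?_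
  rw [eval_finsetSum, Finset.sum_mul]
  refine Finset.sum_congr rfl fun i hi => ?_
  rw [(Finset.mem_filter.1 hi).2]

open MvPolynomial in
/-- Polynomials of degree at most one in each variable, without constant term. -/
noncomputable def multiAffine (d : ℕ) : Submodule ℂ (MvPolynomial (Fin d) ℂ) where
  carrier := {p | (∀ i, p.degreeOf i ≤ 1) ∧ constantCoeff p = 0}
  add_mem' := fun {p q} hp hq =>
    ⟨fun i => (degreeOf_add_le i p q).trans (max_le (hp.1 i) (hq.1 i)), by simp [hp.2, hq.2]⟩
  zero_mem' := ⟨by simp, by simp⟩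
  smul_mem' := fun c p hp =>
    ⟨fun i => by rw [smul_eq_C_mul]; exact (degreeOf_C_mul_le p i c).trans (hp.1 i),
      by rw [smul_eq_C_mul, map_mul, hp.2, mul_zero]⟩

/-- Evaluation of a complex polynomial at a real point. -/
noncomputable abbrev realEval {d : ℕ} (x : Fin d → ℝ) : MvPolynomial (Fin d) ℂ →+* ℂ :=
  MvPolynomial.eval fun i => (x i : ℂ)

/-- Formal exponential polynomials with multi-affine exponents. -/
abbrev ExpPolyRing (d : ℕ) : Type := AddMonoidAlgebra (MvPolynomial (Fin d) ℂ) (multiAffine d)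

/-- Evaluation of a formal exponential polynomial at a real point. -/
noncomputable def evalExp {d : ℕ} (x : Fin d → ℝ) : ExpPolyRing d →+* ℂ :=
  AddMonoidAlgebra.liftNCRingHom (realEval x)
    { toFun := fun g => Complex.exp (realEval x (g.toAdd : MvPolynomial (Fin d) ℂ))
      map_one' := by simp
      map_mul' := fun g h => by simp [Complex.exp_add] }
    (fun _ _ => Commute.all _ _)

theorem evalExp_single {d : ℕ} (x : Fin d → ℝ) (g : multiAffine d) (P : MvPolynomial (Fin d) ℂ) :
    evalExp x (.single g P) = realEval x P * Complex.exp (realEval x (g : MvPolynomial (Fin d) ℂ)) :=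
  AddMonoidAlgebra.liftNCRingHom_single _ _ _ _ _

theorem evalExp_eq_sum {d : ℕ} (x : Fin d → ℝ) (a : ExpPolyRing d) :
    evalExp x a = ∑ g ∈ a.coeff.support,
      realEval x (a.coeff g) * Complex.exp (realEval x (g : MvPolynomial (Fin d) ℂ)) := by
  conv_lhs => rw [← AddMonoidAlgebra.sum_coeff_single a]
  rw [Finsupp.sum, map_sum]
  exact Finset.sum_congr rfl fun g _ => evalExp_single _ _ _

theorem exists_realEval_ne_zero {d : ℕ} {p : MvPolynomial (Fin d) ℂ} (hp : p ≠ 0) :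
    ∃ x : Fin d → ℝ, realEval x p ≠ 0 := by
  by_contra! h
  refine hp (MvPolynomial.funext_set (fun _ => Set.range Complex.ofReal)
    (fun _ => Set.infinite_range_of_injective Complex.ofReal_injective) fun x hx => ?_)
  choose y hy using fun i => hx i (Set.mem_univ i)
  have : x = fun i => (y i : ℂ) := funext fun i => (hy i).symm
  rw [this, map_zero]
  exact h y

open Polynomial in
/-- The restriction of a polynomial to the line `t ↦ t • a`. -/
noncomputable def lineRestrict {d : ℕ} (a : Fin d → ℝ) : MvPolynomial (Fin d) ℂ →+* ℂ[X] :=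
  MvPolynomial.eval₂Hom C fun i => C (a i : ℂ) * X

theorem eval_lineRestrict {d : ℕ} (a : Fin d → ℝ) (p : MvPolynomial (Fin d) ℂ) (t : ℝ) :
    (lineRestrict a p).eval (t : ℂ) = realEval (t • a) p := by
  have : (Polynomial.evalRingHom (t : ℂ)).comp (lineRestrict a) = realEval (t • a) := by
    apply MvPolynomial.ringHom_ext
    · intro r; simp [lineRestrict]
    · intro i
      simp only [lineRestrict, RingHom.comp_apply, MvPolynomial.coe_eval₂Hom, MvPolynomial.eval₂_X,
        Polynomial.coe_evalRingHom, Polynomial.eval_mul, Polynomial.eval_C, Polynomial.eval_X,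
        MvPolynomial.eval_X, Pi.smul_apply, smul_eq_mul, Complex.ofReal_mul]
      exact mul_comm _ _
  exact congrArg (fun f => f p) this

theorem derivative_lineRestrict_ne_zero {d : ℕ} {a : Fin d → ℝ} {g : MvPolynomial (Fin d) ℂ}
    (hg : g ∈ multiAffine d) (h : realEval a g ≠ 0) :
    Polynomial.derivative (lineRestrict a g) ≠ 0 := by
  intro h'
  have h1 := Polynomial.eq_C_of_derivative_eq_zero h'
  have h2 := eval_lineRestrict a g 1
  have h3 := eval_lineRestrict a g 0
  rw [h1, Polynomial.eval_C] at h2 h3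
  rw [one_smul] at h2
  have h4 : realEval ((0 : ℝ) • a) g = 0 := by
    rw [zero_smul, ← hg.2, ← MvPolynomial.eval_zero]
    exact congrArg (fun v => MvPolynomial.eval v g) (funext fun _ => Complex.ofReal_zero)
  rw [← h2, h3, h4] at h
  exact h rfl

theorem evalExp_injective {d : ℕ} {a : ExpPolyRing d} (h : ∀ x, evalExp x a = 0) : a = 0 := by
  classical
  let s := a.coeff.support
  let p : MvPolynomial (Fin d) ℂ := (∏ g ∈ s, a.coeff g) *
    ∏ g ∈ s, ∏ g' ∈ s.erase g, ((g : MvPolynomial (Fin d) ℂ) - g')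
  have hp : p ≠ 0 := by
    refine mul_ne_zero (Finset.prod_ne_zero_iff.2 fun g hg => Finsupp.mem_support_iff.1 hg)
      (Finset.prod_ne_zero_iff.2 fun g _ => Finset.prod_ne_zero_iff.2 fun g' hg' => ?_)
    rw [sub_ne_zero]
    exact fun e => Finset.ne_of_mem_erase hg' (Subtype.ext e.symm)
  obtain ⟨x, hx⟩ := exists_realEval_ne_zero hp
  simp only [p, map_mul, map_prod, mul_ne_zero_iff, Finset.prod_ne_zero_iff] at hx
  have key := exp_polynomial_indep s (fun g => lineRestrict x (a.coeff g))
    (fun g => lineRestrict x (g : MvPolynomial (Fin d) ℂ))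
    (fun g hg g' hg' hne => by
      rw [← map_sub]
      exact derivative_lineRestrict_ne_zero (g - g').2
        (hx.2 g hg g' (Finset.mem_erase.2 ⟨hne.symm, hg'⟩)))
    (fun t => by
      rw [← h (t • x), evalExp_eq_sum]
      simp only [eval_lineRestrict]
      rfl)
  have hs : s = ∅ := by
    refine Finset.eq_empty_of_forall_notMem fun g hg => hx.1 g hg ?_
    have h1 := eval_lineRestrict x (a.coeff g) 1
    rw [key g hg, one_smul, Polynomial.eval_zero] at h1
    exact h1.symm
  exact AddMonoidAlgebra.coeff_eq_zero.1 (Finsupp.support_eq_empty.1 hs)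

theorem analyticOnNhd_realEval {d : ℕ} (p : MvPolynomial (Fin d) ℂ) :
    AnalyticOnNhd ℝ (fun x : Fin d → ℝ => realEval x p) Set.univ :=
  AnalyticOnNhd.eval_continuousLinearMap' (𝕜 := ℝ) (E := Fin d → ℝ) (B := ℂ)
    (fun i => Complex.ofRealCLM.comp (ContinuousLinearMap.proj i)) p

theorem analyticOnNhd_evalExp {d : ℕ} (a : ExpPolyRing d) :
    AnalyticOnNhd ℝ (fun x : Fin d → ℝ => evalExp x a) Set.univ := by
  simp only [evalExp_eq_sum]
  refine Finset.analyticOnNhd_fun_sum _ fun g _ => ?_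
  exact (analyticOnNhd_realEval _).mul ((analyticOnNhd_cexp.restrictScalars (𝕜 := ℝ)).comp
    (analyticOnNhd_realEval _) (Set.mapsTo_univ _ _))

/-- The ring of functions of the form `∑ P_k exp λ_k` with multi-affine exponents. -/
noncomputable def expPolyFun (d : ℕ) : Subring ((Fin d → ℝ) → ℂ) :=
  (RingHom.pi fun x => evalExp x : ExpPolyRing d →+* ((Fin d → ℝ) → ℂ)).range

theorem mem_expPolyFun {d : ℕ} {f : (Fin d → ℝ) → ℂ} :
    f ∈ expPolyFun d ↔ ∃ a, ∀ x, f x = evalExp x a :=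
  ⟨fun ⟨a, ha⟩ => ⟨a, fun x => (congrFun ha x).symm⟩,
    fun ⟨a, ha⟩ => ⟨a, funext fun x => (ha x).symm⟩⟩

theorem analyticOnNhd_of_mem_expPolyFun {d : ℕ} {f : (Fin d → ℝ) → ℂ} (hf : f ∈ expPolyFun d) :
    AnalyticOnNhd ℝ f Set.univ := by
  obtain ⟨a, ha⟩ := mem_expPolyFun.1 hf
  rw [show f = _ from funext ha]
  exact analyticOnNhd_evalExp a

theorem continuous_of_mem_expPolyFun {d : ℕ} {f : (Fin d → ℝ) → ℂ} (hf : f ∈ expPolyFun d) :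
    Continuous f :=
  continuousOn_univ.1 (analyticOnNhd_of_mem_expPolyFun hf).continuousOn

/-- A function in `expPolyFun d` vanishing on a set dense in a nonempty open set vanishes. -/
theorem eq_zero_of_mem_expPolyFun {d : ℕ} {f : (Fin d → ℝ) → ℂ} (hf : f ∈ expPolyFun d)
    {V S : Set (Fin d → ℝ)} (hV : IsOpen V) (hne : V.Nonempty) (hVS : V ⊆ closure S)
    (h : ∀ x ∈ S, f x = 0) (x : Fin d → ℝ) : f x = 0 := by
  obtain ⟨z, hz⟩ := hne
  have hc := continuous_of_mem_expPolyFun hf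
  have h1 : ∀ y ∈ V, f y = 0 := fun y hy =>
    (isClosed_singleton.preimage hc).closure_subset_iff.2 h (hVS hy)
  have h2 : f = fun _ => 0 := (analyticOnNhd_of_mem_expPolyFun hf).eq_of_eventuallyEq
    analyticOnNhd_const (Filter.eventually_of_mem (hV.mem_nhds hz) h1)
  rw [h2]

theorem mul_cexp_mem_expPolyFun {d : ℕ} (P lam : MvPolynomial (Fin d) ℂ)
    (h : ∀ i, lam.degreeOf i ≤ 1) :
    (fun x => realEval x P * Complex.exp (realEval x lam)) ∈ expPolyFun d := by
  let c := MvPolynomial.constantCoeff lam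
  have hg : lam + MvPolynomial.C (-c) ∈ multiAffine d := by
    refine ⟨fun i => (MvPolynomial.degreeOf_add_le i _ _).trans (max_le (h i) ?_), ?_⟩
    · rw [MvPolynomial.degreeOf_C]; exact zero_le_one
    · simp [c]
  refine mem_expPolyFun.2 ⟨.single ⟨_, hg⟩ (P * MvPolynomial.C (Complex.exp c)), fun x => ?_⟩
  rw [evalExp_single, map_mul, map_add, MvPolynomial.eval_C, MvPolynomial.eval_C,
    Complex.exp_add, Complex.exp_neg]
  field_simp

theorem const_mem_expPolyFun {d : ℕ} (c : ℂ) : (fun _ => c) ∈ expPolyFun d := by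
  simpa using mul_cexp_mem_expPolyFun (MvPolynomial.C c : MvPolynomial (Fin d) ℂ) 0 (by simp)

theorem sum_mem_expPolyFun {d : ℕ} {ι : Type*} (s : Finset ι) (F : ι → (Fin d → ℝ) → ℂ)
    (h : ∀ i ∈ s, F i ∈ expPolyFun d) : (fun x => ∑ i ∈ s, F i x) ∈ expPolyFun d := by
  have := Subring.sum_mem (expPolyFun d) h
  rwa [show (∑ i ∈ s, F i) = fun x => ∑ i ∈ s, F i x from funext fun x => by simp] at this

theorem prod_mem_expPolyFun {d : ℕ} {ι : Type*} (s : Finset ι) (F : ι → (Fin d → ℝ) → ℂ)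
    (h : ∀ i ∈ s, F i ∈ expPolyFun d) : (fun x => ∏ i ∈ s, F i x) ∈ expPolyFun d := by
  have := Subring.prod_mem (expPolyFun d) h
  rwa [show (∏ i ∈ s, F i) = fun x => ∏ i ∈ s, F i x from funext fun x => by simp] at this

theorem mul_mem_expPolyFun {d : ℕ} {f g : (Fin d → ℝ) → ℂ} (hf : f ∈ expPolyFun d)
    (hg : g ∈ expPolyFun d) : (fun x => f x * g x) ∈ expPolyFun d :=
  Subring.mul_mem _ hf hg

theorem det_mem_expPolyFun {d : ℕ} {ι : Type*} [Fintype ι] [DecidableEq ι]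
    (F : ι → ι → (Fin d → ℝ) → ℂ) (h : ∀ i j, F i j ∈ expPolyFun d) :
    (fun x => (Matrix.of fun i j => F i j x).det) ∈ expPolyFun d := by
  simp only [Matrix.det_apply', Matrix.of_apply]
  exact sum_mem_expPolyFun _ _ fun σ _ => mul_mem_expPolyFun (const_mem_expPolyFun _)
    (prod_mem_expPolyFun _ _ fun i _ => h _ _)

/-- All Hankel determinants of size `n` of `g` vanish. -/
def HankelVanish (n : ℕ) (g : ℝ → ℂ) : Prop :=
  ∀ a b : Fin n → ℝ, (Matrix.of fun i j => g (a i + b j)).det = 0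

theorem Matrix.det_mul_eq_zero_of_card_lt {m n K : Type*} [Field K] [Fintype m] [DecidableEq m]
    [Fintype n] (A : Matrix m n K) (B : Matrix n m K) (h : Fintype.card n < Fintype.card m) :
    (A * B).det = 0 := by
  by_contra hdet
  have h1 := Matrix.rank_of_isUnit (A * B) ((Matrix.isUnit_iff_isUnit_det _).2 (Ne.isUnit hdet))
  have h2 := (Matrix.rank_mul_le_left A B).trans A.rank_le_card_width
  omega

theorem IsExpPoly1.exists_hankelVanish {g : ℝ → ℂ} (hg : IsExpPoly1 g) :
    ∃ n, HankelVanish n g := by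
  obtain ⟨m, Q, μ, h⟩ := hg
  let N := (Finset.univ.sup fun j => (Q j).natDegree) + 1
  have hN : ∀ j (r : ℂ), (Polynomial.taylor r (Q j)).natDegree < N := fun j r => by
    rw [Polynomial.natDegree_taylor]
    exact Nat.lt_succ_of_le (Finset.le_sup (f := fun j => (Q j).natDegree) (Finset.mem_univ j))
  refine ⟨Fintype.card (Fin m × Fin N) + 1, fun a b => ?_⟩
  have key : (Matrix.of fun i j => g (a i + b j)) =
      (Matrix.of fun i (k : Fin m × Fin N) => (a i : ℂ) ^ (k.2 : ℕ) * Complex.exp (μ k.1 * a i)) *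
      (Matrix.of fun (k : Fin m × Fin N) j => (Polynomial.taylor (b j : ℂ) (Q k.1)).coeff k.2 *
        Complex.exp (μ k.1 * b j)) := by
    ext i j
    rw [Matrix.mul_apply, Matrix.of_apply, h, Fintype.sum_prod_type]
    refine Finset.sum_congr rfl fun l _ => ?_
    rw [Complex.ofReal_add, ← Polynomial.taylor_eval, Polynomial.eval_eq_sum_range' (hN l _),
      Finset.sum_range, Finset.sum_mul]
    refine Finset.sum_congr rfl fun k _ => ?_
    rw [mul_add, Complex.exp_add]
    simp only [Matrix.of_apply]
    ring
  rw [key]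
  exact Matrix.det_mul_eq_zero_of_card_lt _ _ (by simp)

theorem hankelVanish_two_const (c : ℂ) : HankelVanish 2 fun _ => c := by
  intro a b
  simp [Matrix.det_fin_two]

/-- A form of the Baire category theorem relative to an open set. -/
theorem exists_isOpen_subset_closure {E ι : Type*} [TopologicalSpace E] [BaireSpace E]
    [Countable ι] {U : Set E} (hU : IsOpen U) (hne : U.Nonempty) (S : ι → Set E)
    (h : U ⊆ ⋃ i, S i) :
    ∃ i, ∃ V, IsOpen V ∧ V.Nonempty ∧ V ⊆ U ∧ V ⊆ closure (S i) := by
  let f : Option ι → Set E := fun o => o.elim Uᶜ fun i => closure (S i)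
  have hc : ∀ o, IsClosed (f o) := by
    rintro (_ | i)
    · exact hU.isClosed_compl
    · exact isClosed_closure
  have hcov : ⋃ o, f o = Set.univ := by
    refine Set.eq_univ_of_forall fun x => ?_
    by_cases hx : x ∈ U
    · obtain ⟨i, hi⟩ := Set.mem_iUnion.1 (h hx)
      exact Set.mem_iUnion.2 ⟨some i, subset_closure hi⟩
    · exact Set.mem_iUnion.2 ⟨none, hx⟩
  obtain ⟨x, hx, hxU⟩ := (dense_iUnion_interior_of_closed hc hcov).inter_open_nonempty U hU hne
    |>.imp fun x hx => And.intro hx.2 hx.1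
  obtain ⟨o, ho⟩ := Set.mem_iUnion.1 hx
  cases o with
  | none => exact absurd hxU (interior_subset ho)
  | some i => exact ⟨i, U ∩ interior (closure (S i)), hU.inter isOpen_interior, ⟨x, hxU, ho⟩,
      Set.inter_subset_left, fun y hy => interior_subset hy.2⟩

theorem exists_hankelVanish_of_mem_expPolyFun {d : ℕ} (H : (Fin d → ℝ) → ℝ → ℂ)
    (h1 : ∀ t, (fun x => H x t) ∈ expPolyFun d) (h2 : ∀ x, IsExpPoly1 (H x)) :
    ∃ n, ∀ x, HankelVanish n (H x) := by
  obtain ⟨n, V, hV, hne, -, hcl⟩ := exists_isOpen_subset_closure isOpen_univ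
    (Set.univ_nonempty (α := Fin d → ℝ)) (fun n => {x | HankelVanish n (H x)})
    (fun x _ => Set.mem_iUnion.2 (h2 x).exists_hankelVanish)
  exact ⟨n, fun x a b => eq_zero_of_mem_expPolyFun
    (det_mem_expPolyFun (fun i j x => H x (a i + b j)) fun i j => h1 _) hV hne hcl
    (fun x hx => hx a b) x⟩

theorem HankelVanish.det_eq_zero {n : ℕ} {g : ℝ → ℂ} (hg : HankelVanish n g) {ι : Type*} [Fintype ι]
    [DecidableEq ι] (hι : Fintype.card ι = n) (a b : ι → ℝ) :
    (Matrix.of fun i j => g (a i + b j)).det = 0 := by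
  have e := Fintype.equivFinOfCardEq hι
  rw [← hg (a ∘ e.symm) (b ∘ e.symm), ← Matrix.det_submatrix_equiv_self e.symm]
  rfl

/-- A function with vanishing Hankel determinants of size `r + 1` and a nonvanishing one of size
`r` has all its translates in the span of `r` of them. -/
theorem HankelVanish.exists_translate_eq_sum {r : ℕ} {g : ℝ → ℂ} (hg : HankelVanish (r + 1) g)
    {a b : Fin r → ℝ} (hdet : (Matrix.of fun i j => g (a i + b j)).det ≠ 0) (z : ℝ) :
    ∃ c : Fin r → ℂ, ∀ y, g (y + z) = ∑ j, c j * g (y + b j) := by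
  set M := Matrix.of fun i j => g (a i + b j) with hM
  have := Matrix.invertibleOfIsUnitDet M (Ne.isUnit hdet)
  refine ⟨(⅟M).mulVec fun i => g (a i + z), fun y => ?_⟩
  have h1 := hg.det_eq_zero (ι := Fin r ⊕ Unit) (by simp) (Sum.elim a fun _ => y)
    (Sum.elim b fun _ => z)
  have h2 : (Matrix.of fun i j => g ((Sum.elim a (fun _ : Unit => y)) i +
      (Sum.elim b (fun _ : Unit => z)) j)) =
      Matrix.fromBlocks M (Matrix.of fun i _ => g (a i + z)) (Matrix.of fun _ j => g (y + b j))
        (Matrix.of fun _ _ => g (y + z)) := by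
    ext (i | i) (j | j) <;> rfl
  rw [h2, Matrix.det_fromBlocks₁₁, mul_eq_zero, or_iff_right hdet, Matrix.det_unique,
    Matrix.sub_apply, sub_eq_zero, Matrix.mul_assoc, Matrix.mul_apply] at h1
  rw [Matrix.of_apply] at h1
  rw [h1]
  refine Finset.sum_congr rfl fun j _ => ?_
  rw [mul_comm]
  rfl

open Polynomial in
theorem sum_translate_expSum {s : Finset ℂ} {P : ℂ → ℂ[X]} {g : ℝ → ℂ}
    (hg : ∀ y : ℝ, g y = ∑ ν ∈ s, (P ν).eval (y : ℂ) * Complex.exp (ν * y))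
    {ι : Type*} [Fintype ι] (c : ι → ℂ) (z : ι → ℝ) (y : ℝ) :
    ∑ j, c j * g (y + z j) = ∑ ν ∈ s, (∑ j, C (c j * Complex.exp (ν * z j)) *
      taylor (z j : ℂ) (P ν)).eval (y : ℂ) * Complex.exp (ν * y) := by
  simp only [hg, Finset.mul_sum, eval_finsetSum, Finset.sum_mul]
  rw [Finset.sum_comm]
  refine Finset.sum_congr rfl fun ν _ => Finset.sum_congr rfl fun j _ => ?_
  rw [eval_mul, eval_C, taylor_eval, Complex.ofReal_add, mul_add, Complex.exp_add]
  ring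

open Polynomial in
/-- The frequencies of an exponential polynomial are zeros of the characteristic function of every
difference equation it satisfies. -/
theorem sum_mul_exp_eq_zero_of_sum_translate {s : Finset ℂ} {P : ℂ → ℂ[X]}
    (hP : ∀ ν ∈ s, P ν ≠ 0) {g : ℝ → ℂ}
    (hg : ∀ y : ℝ, g y = ∑ ν ∈ s, (P ν).eval (y : ℂ) * Complex.exp (ν * y))
    {ι : Type*} [Fintype ι] (c : ι → ℂ) (z : ι → ℝ) (h : ∀ y, ∑ j, c j * g (y + z j) = 0)
    {ν : ℂ} (hν : ν ∈ s) : ∑ j, c j * Complex.exp (ν * z j) = 0 := by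
  have h1 := exp_indep s _ (fun ν => ν) (fun _ _ _ _ e => e)
    (fun y => (sum_translate_expSum hg c z y).symm.trans (h y)) ν hν
  have h2 := congrArg (fun Q => Q.coeff (P ν).natDegree) h1
  simp only [finsetSum_coeff, coeff_C_mul, coeff_taylor_natDegree, coeff_zero,
    ← Finset.sum_mul] at h2
  exact (mul_eq_zero.1 h2).resolve_right (leadingCoeff_ne_zero.2 (hP ν hν))

section Pencil

open Polynomial

variable {r : ℕ} {g : ℝ → ℂ} {a b : Fin r → ℝ} {s : Finset ℂ} {P : ℂ → ℂ[X]}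

theorem HankelVanish.exists_translate_matrix (hH : HankelVanish (r + 1) g)
    (hdet : (Matrix.of fun i j => g (a i + b j)).det ≠ 0) (h : ℝ) :
    ∃ C : Matrix (Fin r) (Fin r) ℂ, (∀ y j, g (y + (b j + h)) = ∑ k, C k j * g (y + b k)) ∧
      (Matrix.of fun i j => g (a i + (b j + h))) = (Matrix.of fun i j => g (a i + b j)) * C := by
  choose c hc using fun j => hH.exists_translate_eq_sum hdet (b j + h)
  refine ⟨Matrix.of fun k j => c j k, fun y j => hc j y, ?_⟩
  ext i j
  rw [Matrix.mul_apply, Matrix.of_apply, hc j]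
  exact Finset.sum_congr rfl fun k _ => mul_comm _ _

theorem det_pencil_eq_zero_of_mem (hP : ∀ ν ∈ s, P ν ≠ 0)
    (hg : ∀ y : ℝ, g y = ∑ ν ∈ s, (P ν).eval (y : ℂ) * Complex.exp (ν * y))
    (hH : HankelVanish (r + 1) g) (hdet : (Matrix.of fun i j => g (a i + b j)).det ≠ 0)
    (h : ℝ) {ν : ℂ} (hν : ν ∈ s) :
    ((Matrix.of fun i j => g (a i + (b j + h))) -
      Complex.exp (ν * h) • Matrix.of fun i j => g (a i + b j)).det = 0 := by
  obtain ⟨C, hC, hM⟩ := hH.exists_translate_matrix hdet h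
  let v : Fin r → ℂ := fun k => Complex.exp (ν * b k)
  have aux : ∀ (z : ℝ) (c : Fin r → ℂ), (∀ y, g (y + z) = ∑ k, c k * g (y + b k)) →
      Complex.exp (ν * z) = ∑ k, c k * v k := by
    intro z c hc
    have := sum_mul_exp_eq_zero_of_sum_translate hP hg (ι := Option (Fin r))
      (fun o => o.elim (-1) c) (fun o => o.elim z b) (fun y => by
        simp [Fintype.sum_option, hc y]) hν
    simp only [Fintype.sum_option, Option.elim] at this
    linear_combination -this
  have hv : v ≠ 0 := by
    obtain ⟨c, hc⟩ := hH.exists_translate_eq_sum hdet 0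
    intro h0
    have := aux 0 c hc
    simp [h0] at this
  have h1 : Matrix.vecMul v (C - Complex.exp (ν * h) • 1) = 0 := by
    ext j
    have := aux (b j + h) (fun k => C k j) (fun y => hC y j)
    rw [Matrix.vecMul_sub, Matrix.vecMul_smul, Matrix.vecMul_one, Pi.sub_apply, Pi.zero_apply,
      sub_eq_zero, Pi.smul_apply, smul_eq_mul]
    calc Matrix.vecMul v C j = ∑ k, C k j * v k := by
          simp only [Matrix.vecMul, dotProduct, mul_comm]
      _ = Complex.exp (ν * h) * v j := by
        rw [← this, Complex.ofReal_add, mul_add, Complex.exp_add, mul_comm]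
  have h2 : (C - Complex.exp (ν * h) • 1).det = 0 := Matrix.exists_vecMul_eq_zero_iff.1 ⟨v, hv, h1⟩
  rw [hM, ← Matrix.mul_one (Complex.exp (ν * h) • Matrix.of fun i j => g (a i + b j)),
    Matrix.smul_mul, ← Matrix.mul_smul, ← Matrix.mul_sub, Matrix.det_mul, h2, mul_zero]

theorem exists_mem_of_det_pencil_eq_zero
    (hg : ∀ y : ℝ, g y = ∑ ν ∈ s, (P ν).eval (y : ℂ) * Complex.exp (ν * y))
    (hH : HankelVanish (r + 1) g) (hdet : (Matrix.of fun i j => g (a i + b j)).det ≠ 0)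
    (h : ℝ) {w : ℂ} (hw : ((Matrix.of fun i j => g (a i + (b j + h))) -
      w • Matrix.of fun i j => g (a i + b j)).det = 0) :
    ∃ ν ∈ s, Complex.exp (ν * h) = w := by
  classical
  obtain ⟨C, hC, hM⟩ := hH.exists_translate_matrix hdet h
  set M := Matrix.of fun i j => g (a i + b j)
  rw [hM, ← Matrix.mul_one (w • M), Matrix.smul_mul, ← Matrix.mul_smul, ← Matrix.mul_sub,
    Matrix.det_mul, mul_eq_zero, or_iff_right hdet] at hw
  obtain ⟨u, hu, hCu⟩ := Matrix.exists_mulVec_eq_zero_iff.2 hw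
  have hCu' : ∀ k, ∑ j, C k j * u j = w * u k := fun k => by
    have := congrFun hCu k
    rwa [Matrix.sub_mulVec, Matrix.smul_mulVec, Matrix.one_mulVec, Pi.sub_apply, Pi.zero_apply,
      sub_eq_zero] at this
  let G : ℝ → ℂ := fun y => ∑ j, u j * g (y + b j)
  let R : ℂ → ℂ[X] := fun ν => ∑ j, Polynomial.C (u j * Complex.exp (ν * b j)) *
    taylor (b j : ℂ) (P ν)
  have hG : ∀ y : ℝ, G y = ∑ ν ∈ s with R ν ≠ 0, (R ν).eval (y : ℂ) * Complex.exp (ν * y) := by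
    intro y
    have h1 : ∑ ν ∈ s with R ν ≠ 0, (R ν).eval (y : ℂ) * Complex.exp (ν * y) =
        ∑ ν ∈ s, (R ν).eval (y : ℂ) * Complex.exp (ν * y) :=
      Finset.sum_filter_of_ne (fun ν _ hν h0 => hν (by rw [h0]; simp))
    rw [h1]
    exact sum_translate_expSum hg u b y
  have hGh : ∀ y, G (y + h) = w * G y := by
    intro y
    have h1 : G (y + h) = ∑ j, ∑ k, u j * (C k j * g (y + b k)) :=
      Finset.sum_congr rfl fun j _ => by
        rw [← Finset.mul_sum, ← hC, add_right_comm, add_assoc]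
    rw [h1, Finset.sum_comm, Finset.mul_sum]
    refine Finset.sum_congr rfl fun k _ => ?_
    rw [← mul_assoc, ← hCu', Finset.sum_mul]
    exact Finset.sum_congr rfl fun j _ => by ring
  have hne : ∃ ν ∈ s, R ν ≠ 0 := by
    by_contra! h0
    have hG0 : ∀ y, G y = 0 := fun y => by
      rw [hG, Finset.sum_eq_zero]
      exact fun ν hν => absurd (h0 ν (Finset.mem_filter.1 hν).1) (Finset.mem_filter.1 hν).2
    refine hdet (Matrix.exists_mulVec_eq_zero_iff.1 ⟨u, hu, funext fun i => ?_⟩)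
    rw [Pi.zero_apply, ← hG0 (a i)]
    simp only [Matrix.mulVec, dotProduct, M, G, Matrix.of_apply, mul_comm]
  obtain ⟨ν, hν, hRν⟩ := hne
  have h2 := sum_mul_exp_eq_zero_of_sum_translate (fun ν hν => (Finset.mem_filter.1 hν).2) hG
    ![1, -w] ![h, 0] (fun y => by simp [Fin.sum_univ_two, hGh y])
    (Finset.mem_filter.2 ⟨hν, hRν⟩)
  refine ⟨ν, hν, ?_⟩
  simp [Fin.sum_univ_two] at h2
  linear_combination h2

end Pencil

theorem pow_card_le_norm_prod {m : Multiset ℂ} {w₀ : ℂ} {ε : ℝ} (hε : 0 ≤ ε)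
    (h : ∀ w ∈ m, ε ≤ ‖w₀ - w‖) : ε ^ m.card ≤ ‖(m.map (w₀ - ·)).prod‖ := by
  induction m using Multiset.induction_on with
  | empty => simp
  | cons a m ih =>
    rw [Multiset.card_cons, Multiset.map_cons, Multiset.prod_cons, norm_mul, pow_succ']
    exact mul_le_mul (h a (Multiset.mem_cons_self a m))
      (ih fun w hw => h w (Multiset.mem_cons_of_mem hw)) (pow_nonneg hε _) (norm_nonneg _)

/-- If `det (B - w₀ A)` is small compared to `det A`, the pencil has an eigenvalue near `w₀`. -/
theorem exists_det_pencil_eq_zero_near {r : ℕ} {A B : Matrix (Fin r) (Fin r) ℂ} (hA : A.det ≠ 0)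
    {w₀ : ℂ} {ε : ℝ} (hε : 0 < ε) (h : ‖(B - w₀ • A).det‖ < ‖A.det‖ * ε ^ r) :
    ∃ w, ‖w - w₀‖ < ε ∧ (B - w • A).det = 0 := by
  have hev : ∀ w, (B - w • A).det = A.det * ((-1) ^ r * (A⁻¹ * B).charpoly.eval w) := by
    intro w
    have h1 : B - w • A = A * -(Matrix.scalar (Fin r) w - A⁻¹ * B) := by
      rw [neg_sub, Matrix.mul_sub, ← Matrix.mul_assoc, Matrix.mul_nonsing_inv _ (Ne.isUnit hA),
        Matrix.one_mul, Matrix.scalar_apply, ← Matrix.smul_one_eq_diagonal, Matrix.mul_smul,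
        Matrix.mul_one]
    rw [h1, Matrix.det_mul, Matrix.det_neg, Matrix.eval_charpoly, Fintype.card_fin]
  set p := (A⁻¹ * B).charpoly
  have hp := IsAlgClosed.splits p
  have hcard : p.roots.card = r := by
    rw [hp.natDegree_eq_card_roots.symm, Matrix.charpoly_natDegree_eq_dim, Fintype.card_fin]
  by_contra! hno
  have h2 : ε ^ r ≤ ‖p.eval w₀‖ := by
    rw [hp.eval_eq_prod_roots_of_monic (Matrix.charpoly_monic _), ← hcard]
    refine pow_card_le_norm_prod hε.le fun w hw => ?_
    rw [norm_sub_rev]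
    by_contra! hlt
    refine hno w hlt ?_
    rw [hev, (Polynomial.isRoot_of_mem_roots hw).eq_zero, mul_zero, mul_zero]
  rw [hev, norm_mul, norm_mul, norm_pow, norm_neg, norm_one, one_pow, one_mul] at h
  exact absurd h (not_lt.2 (mul_le_mul_of_nonneg_left h2 (norm_nonneg _)))

theorem norm_sub_le_of_norm_le_quarter {u v : ℂ} (hu : ‖u‖ ≤ 1 / 4) (hv : ‖v‖ ≤ 1 / 4) :
    ‖u - v‖ ≤ 3 * ‖Complex.exp u - Complex.exp v‖ := by
  have h1 : ‖u - v‖ ≤ 1 / 2 := (norm_sub_le u v).trans (by linarith)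
  have h2 := Complex.norm_exp_sub_one_sub_id_le (x := u - v) (h1.trans (by norm_num))
  have h3 : ‖u - v‖ - ‖Complex.exp (u - v) - 1‖ ≤ ‖u - v‖ ^ 2 := by
    refine le_trans ?_ h2
    rw [norm_sub_rev (Complex.exp (u - v) - 1)]
    exact norm_sub_norm_le _ _
  have h4 : Complex.exp u - Complex.exp v = Complex.exp v * (Complex.exp (u - v) - 1) := by
    rw [mul_sub, ← Complex.exp_add, mul_one]; ring_nf
  have h5 : 3 / 4 ≤ ‖Complex.exp v‖ := by
    rw [Complex.norm_exp]
    have := (abs_le.1 ((Complex.abs_re_le_norm v).trans hv)).1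
    linarith [Real.add_one_le_exp v.re]
  rw [h4, norm_mul]
  have h6 := mul_le_mul_of_nonneg_right h5 (norm_nonneg (Complex.exp (u - v) - 1))
  nlinarith [norm_nonneg (u - v)]

theorem norm_ofReal_mul_le_quarter {N h : ℝ} (hN : 0 ≤ N) (hh : h = 1 / (4 * (N + 1))) {ν : ℂ}
    (hν : ‖ν‖ ≤ N) : ‖ν * (h : ℂ)‖ ≤ 1 / 4 := by
  have : 0 < N + 1 := by linarith
  rw [norm_mul, Complex.norm_real, Real.norm_eq_abs, hh, abs_of_pos (by positivity)]
  calc ‖ν‖ * (1 / (4 * (N + 1))) ≤ (N + 1) * (1 / (4 * (N + 1))) :=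
        mul_le_mul_of_nonneg_right (by linarith) (by positivity)
    _ = 1 / 4 := by field_simp

section Frequencies

open Polynomial Filter Topology

variable {X : Type*} [TopologicalSpace X] {F : X → ℝ → ℂ} {Λ : X → Finset ℂ} {P : X → ℂ → ℂ[X]}
  {r : ℕ} {a b : Fin r → ℝ}

theorem eventually_exists_exp_freq_near (hcont : ∀ y, Continuous fun x => F x y)
    (hP : ∀ x, ∀ ν ∈ Λ x, P x ν ≠ 0)
    (hF : ∀ x (y : ℝ), F x y = ∑ ν ∈ Λ x, (P x ν).eval (y : ℂ) * Complex.exp (ν * y))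
    (hH : ∀ x, HankelVanish (r + 1) (F x)) {x : X}
    (hx : (Matrix.of fun i j => F x (a i + b j)).det ≠ 0) {ν : ℂ} (hν : ν ∈ Λ x) (h : ℝ) {ε : ℝ}
    (hε : 0 < ε) :
    ∀ᶠ x' in 𝓝 x, ∃ ν' ∈ Λ x', ‖Complex.exp (ν' * h) - Complex.exp (ν * h)‖ < ε := by
  have hM : Continuous fun x => Matrix.of fun i j => F x (a i + b j) :=
    continuous_matrix fun i j => hcont _
  have h1 : Continuous fun x => ‖((Matrix.of fun i j => F x (a i + (b j + h))) -
      Complex.exp (ν * h) • Matrix.of fun i j => F x (a i + b j)).det‖ :=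
    (continuous_matrix fun i j => (hcont _).sub (continuous_const.mul (hcont _))).matrix_det.norm
  have h2 : Continuous fun x => ‖(Matrix.of fun i j => F x (a i + b j)).det‖ * ε ^ r :=
    hM.matrix_det.norm.mul continuous_const
  have h0 := det_pencil_eq_zero_of_mem (hP x) (hF x) (hH x) hx h hν
  have h3 := (h1.tendsto x).eventually_lt (h2.tendsto x) (by
    simp only [h0, norm_zero]
    exact mul_pos (norm_pos_iff.2 hx) (pow_pos hε r))
  filter_upwards [h3, hM.matrix_det.continuousAt.eventually_ne hx] with x' hx' hne
  obtain ⟨w, hw, hdet⟩ := exists_det_pencil_eq_zero_near hne hε hx'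
  obtain ⟨ν', hν', rfl⟩ := exists_mem_of_det_pencil_eq_zero (hF x') (hH x') hne h hdet
  exact ⟨ν', hν', hw⟩

theorem exists_isOpen_freq_bounded [BaireSpace X] (hcont : ∀ y, Continuous fun x => F x y)
    (hP : ∀ x, ∀ ν ∈ Λ x, P x ν ≠ 0)
    (hF : ∀ x (y : ℝ), F x y = ∑ ν ∈ Λ x, (P x ν).eval (y : ℂ) * Complex.exp (ν * y))
    (hH : ∀ x, HankelVanish (r + 1) (F x)) {U : Set X} (hU : IsOpen U) (hne : U.Nonempty)
    (hD : ∀ x ∈ U, (Matrix.of fun i j => F x (a i + b j)).det ≠ 0) :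
    ∃ (N : ℕ) (V : Set X), IsOpen V ∧ V.Nonempty ∧ V ⊆ U ∧ ∀ x ∈ V, ∀ ν ∈ Λ x, ‖ν‖ ≤ N := by
  obtain ⟨N, V, hV, hVne, hVU, hcl⟩ := exists_isOpen_subset_closure hU hne
    (fun N : ℕ => {x | ∀ ν ∈ Λ x, ‖ν‖ ≤ N}) (fun x _ => by
      obtain ⟨N, hN⟩ := exists_nat_ge (∑ ν ∈ Λ x, ‖ν‖)
      exact Set.mem_iUnion.2 ⟨N, fun ν hν =>
        (Finset.single_le_sum (f := fun ν => ‖ν‖) (fun _ _ => norm_nonneg _) hν).trans hN⟩)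
  refine ⟨N, V, hV, hVne, hVU, fun x hx ν hν => ?_⟩
  by_contra! hlt
  have hν0 : 0 ≤ ‖ν‖ := norm_nonneg ν
  set h : ℝ := 1 / (4 * (‖ν‖ + 1)) with hh
  have hpos : 0 < h := by positivity
  obtain ⟨x', ⟨ν', hν', hlt'⟩, hx'⟩ := ((eventually_exists_exp_freq_near hcont hP hF hH
    (hD x (hVU hx)) hν h (ε := h * (‖ν‖ - N) / 4) (by
      have := sub_pos.2 hlt; positivity)).and_frequently
        (mem_closure_iff_frequently.1 (hcl hx))).exists
  have hν'N := hx' ν' hν'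
  have h1 := norm_sub_le_of_norm_le_quarter
    (norm_ofReal_mul_le_quarter hν0 hh (hν'N.trans hlt.le))
    (norm_ofReal_mul_le_quarter hν0 hh le_rfl)
  rw [← sub_mul, norm_mul, Complex.norm_real, Real.norm_eq_abs, abs_of_pos hpos] at h1
  have h2 : ‖ν' - ν‖ * h < (‖ν‖ - N) * h := by nlinarith
  have h3 := lt_of_mul_lt_mul_right h2 hpos.le
  have h4 := norm_sub_norm_le ν ν'
  rw [norm_sub_rev] at h4
  linarith

theorem eventually_exists_freq_near (hcont : ∀ y, Continuous fun x => F x y)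
    (hP : ∀ x, ∀ ν ∈ Λ x, P x ν ≠ 0)
    (hF : ∀ x (y : ℝ), F x y = ∑ ν ∈ Λ x, (P x ν).eval (y : ℂ) * Complex.exp (ν * y))
    (hH : ∀ x, HankelVanish (r + 1) (F x)) {V : Set X} (hV : IsOpen V)
    (hD : ∀ x ∈ V, (Matrix.of fun i j => F x (a i + b j)).det ≠ 0) {N : ℕ}
    (hN : ∀ x ∈ V, ∀ ν ∈ Λ x, ‖ν‖ ≤ N) {x : X} (hx : x ∈ V) {ν : ℂ} (hν : ν ∈ Λ x) {δ : ℝ}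
    (hδ : 0 < δ) : ∀ᶠ x' in 𝓝 x, ∃ ν' ∈ Λ x', ‖ν' - ν‖ < δ := by
  have hN0 : (0 : ℝ) ≤ N := N.cast_nonneg
  set h : ℝ := 1 / (4 * ((N : ℝ) + 1)) with hh
  have hpos : 0 < h := by positivity
  filter_upwards [hV.mem_nhds hx, eventually_exists_exp_freq_near hcont hP hF hH (hD x hx) hν h
    (ε := h * δ / 3) (by positivity)] with x' hx' ⟨ν', hν', hlt⟩
  refine ⟨ν', hν', ?_⟩
  have h1 := norm_sub_le_of_norm_le_quarter
    (norm_ofReal_mul_le_quarter hN0 hh (hN x' hx' ν' hν'))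
    (norm_ofReal_mul_le_quarter hN0 hh (hN x hx ν hν))
  rw [← sub_mul, norm_mul, Complex.norm_real, Real.norm_eq_abs, abs_of_pos hpos] at h1
  refine lt_of_mul_lt_mul_right (?_ : _ < δ * h) hpos.le
  linarith

/-- The number of frequencies is at most the size of a maximal nonvanishing Hankel determinant. -/
theorem card_freq_le {g : ℝ → ℂ} {s : Finset ℂ} {Q : ℂ → ℂ[X]} (hP : ∀ ν ∈ s, Q ν ≠ 0)
    (hg : ∀ y : ℝ, g y = ∑ ν ∈ s, (Q ν).eval (y : ℂ) * Complex.exp (ν * y))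
    (hH : HankelVanish (r + 1) g) (hdet : (Matrix.of fun i j => g (a i + b j)).det ≠ 0) :
    s.card ≤ r := by
  classical
  obtain ⟨N, hN⟩ := exists_nat_ge (∑ ν ∈ s, ‖ν‖)
  have hN' : ∀ ν ∈ s, ‖ν‖ ≤ N := fun ν hν =>
    (Finset.single_le_sum (f := fun ν => ‖ν‖) (fun _ _ => norm_nonneg _) hν).trans hN
  have hN0 : (0 : ℝ) ≤ N := N.cast_nonneg
  set h : ℝ := 1 / (4 * ((N : ℝ) + 1)) with hh
  have hpos : 0 < h := by positivity
  set A := Matrix.of fun i j => g (a i + b j)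
  set B := Matrix.of fun i j => g (a i + (b j + h))
  rw [← Finset.card_image_of_injOn (f := fun ν : ℂ => Complex.exp (ν * h)) (fun ν hν ν' hν' e => by
    have h1 := norm_sub_le_of_norm_le_quarter (norm_ofReal_mul_le_quarter hN0 hh (hN' ν hν))
      (norm_ofReal_mul_le_quarter hN0 hh (hN' ν' hν'))
    rw [show Complex.exp (ν * h) = Complex.exp (ν' * h) from e, sub_self, norm_zero, mul_zero,
      norm_le_zero_iff, ← sub_mul, mul_eq_zero, sub_eq_zero] at h1
    exact h1.resolve_right (by exact_mod_cast hpos.ne'))]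
  have hsub : s.image (fun ν : ℂ => Complex.exp (ν * h)) ⊆ (A⁻¹ * B).charpoly.roots.toFinset := by
    intro w hw
    obtain ⟨ν, hν, rfl⟩ := Finset.mem_image.1 hw
    rw [Multiset.mem_toFinset, mem_roots (Matrix.charpoly_monic _).ne_zero, IsRoot,
      Matrix.eval_charpoly]
    have h1 := det_pencil_eq_zero_of_mem hP hg hH hdet h hν
    have h2 : Matrix.scalar (Fin r) (Complex.exp (ν * h)) - A⁻¹ * B =
        (-A⁻¹) * (B - Complex.exp (ν * h) • A) := by
      rw [Matrix.mul_sub, Matrix.neg_mul, Matrix.neg_mul, Matrix.mul_smul,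
        Matrix.nonsing_inv_mul _ (Ne.isUnit hdet), Matrix.scalar_apply,
        ← Matrix.smul_one_eq_diagonal]
      abel
    rw [h2, Matrix.det_mul, h1, mul_zero]
  calc _ ≤ _ := Finset.card_le_card hsub
    _ ≤ _ := Multiset.toFinset_card_le _
    _ ≤ _ := card_roots' _
    _ = r := by rw [Matrix.charpoly_natDegree_eq_dim, Fintype.card_fin]

end Frequencies

open Filter Topology in
/-- A finite set of complex numbers is separated by a real linear form, uniformly under small
perturbations. -/
theorem exists_dual_separating (s : Finset ℂ) :
    ∃ (l : Module.Dual ℝ ℂ) (δ : ℝ), 0 < δ ∧ (∀ ν ∈ s, ∀ ν' ∈ s, l ν = l ν' → ν = ν') ∧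
      ∀ ν ∈ s, ∀ ν' ∈ s, l ν < l ν' → ∀ z z', ‖z - ν‖ < δ → ‖z' - ν'‖ < δ → l z < l z' := by
  obtain ⟨l, hl⟩ := Module.exists_dual_forall_apply_ne_zero (K := ℝ)
    (fun p : {p : s × s // p.1 ≠ p.2} => (p.1.1 - p.1.2 : ℂ))
    (fun p => sub_ne_zero.2 fun e => p.2 (Subtype.ext e))
  have hl' : ∀ ν ∈ s, ∀ ν' ∈ s, l ν = l ν' → ν = ν' := fun ν hν ν' hν' e => by
    by_contra hne
    refine hl ⟨(⟨ν, hν⟩, ⟨ν', hν'⟩), fun e => hne (congrArg Subtype.val e)⟩ ?_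
    rw [map_sub, e, sub_self]
  set C := ‖l.toContinuousLinearMap‖ with hC
  have hCle : ∀ z ν δ, ‖z - ν‖ < δ → |l z - l ν| ≤ C * δ := fun z ν δ h => by
    rw [← map_sub]
    exact (l.toContinuousLinearMap.le_opNorm (z - ν)).trans
      (mul_le_mul_of_nonneg_left h.le (norm_nonneg _))
  have ht : Tendsto (fun δ => 2 * (C * δ)) (𝓝[>] (0 : ℝ)) (𝓝 0) := by
    have : Continuous fun δ : ℝ => 2 * (C * δ) := by fun_prop
    simpa using (this.tendsto 0).mono_left nhdsWithin_le_nhds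
  have hev : ∀ᶠ δ in 𝓝[>] (0 : ℝ), ∀ ν ∈ s, ∀ ν' ∈ s, l ν < l ν' →
      2 * (C * δ) < l ν' - l ν := by
    refine (eventually_all_finset s).2 fun ν _ => (eventually_all_finset s).2 fun ν' _ => ?_
    by_cases h : l ν < l ν'
    · exact (ht.eventually_lt_const (sub_pos.2 h)).mono fun _ hδ _ => hδ
    · exact Eventually.of_forall fun _ h' => absurd h' h
  obtain ⟨δ, hδ, hδ0⟩ := (hev.and self_mem_nhdsWithin).exists
  refine ⟨l, δ, hδ0, hl', fun ν hν ν' hν' hlt z z' hz hz' => ?_⟩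
  have h1 := abs_le.1 (hCle z ν δ hz)
  have h2 := abs_le.1 (hCle z' ν' δ hz')
  have h3 := hδ ν hν ν' hν' hlt
  linarith [h1.2, h2.1]

open Filter Topology Polynomial in
/-- On some open set the frequencies of a continuous family of exponential polynomials of bounded
order are given by continuous branches, strictly ordered by a real linear form. -/
theorem exists_continuous_branches {X : Type*} [TopologicalSpace X] [BaireSpace X] [Nonempty X]
    {F : X → ℝ → ℂ} (hcont : ∀ y, Continuous fun x => F x y) (hexp : ∀ x, IsExpPoly1 (F x))
    (hH : ∃ n, ∀ x, HankelVanish n (F x)) :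
    ∃ (J : Finset ℂ) (l : Module.Dual ℝ ℂ) (V : Set X) (L : J → X → ℂ) (Q : J → X → ℂ[X]),
      IsOpen V ∧ V.Nonempty ∧ (∀ j, ContinuousOn (L j) V) ∧ (∀ j, ∀ x ∈ V, Q j x ≠ 0) ∧
      (∀ x ∈ V, ∀ y : ℝ, F x y = ∑ j, (Q j x).eval (y : ℂ) * Complex.exp (L j x * y)) ∧
      (∀ j j' : J, l j = l j' → j = j') ∧
      ∀ j j' : J, l j < l j' → ∀ x ∈ V, l (L j x) < l (L j' x) := by
  classical
  choose Λ P hP hF using fun x => (hexp x).exists_normal_form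
  obtain ⟨x₁⟩ := ‹Nonempty X›
  obtain ⟨r, hr⟩ : ∃ r, Nat.find hH = r + 1 := Nat.exists_eq_succ_of_ne_zero fun h0 => by
    have h1 := Nat.find_spec hH x₁
    rw [h0] at h1
    exact one_ne_zero (Matrix.det_isEmpty.symm.trans (h1 (fun _ => 0) fun _ => 0))
  have hHr := Nat.find_spec hH
  rw [hr] at hHr
  have hmin := Nat.find_min hH (m := r) (by omega)
  simp only [HankelVanish, not_forall] at hmin
  obtain ⟨x₂, a, b, hx₂⟩ := hmin
  have hM : Continuous fun x => (Matrix.of fun i j => F x (a i + b j)).det :=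
    (continuous_matrix fun i j => hcont _).matrix_det
  obtain ⟨N, U, hU, hUne, hUD, hUN⟩ := exists_isOpen_freq_bounded hcont hP hF hHr
    (isOpen_ne_fun hM continuous_const) ⟨x₂, hx₂⟩ (fun _ hx => hx)
  obtain ⟨x₀, hx₀, hmax⟩ : ∃ x₀ ∈ U, ∀ x ∈ U, (Λ x).card ≤ (Λ x₀).card := by
    have hbdd : BddAbove ((fun x => (Λ x).card) '' U) := ⟨r, by
      rintro _ ⟨x, hx, rfl⟩
      exact card_freq_le (hP x) (hF x) (hHr x) (hUD hx)⟩
    obtain ⟨x₀, hx₀, he⟩ := Nat.sSup_mem (hUne.image _) hbdd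
    exact ⟨x₀, hx₀, fun x hx => le_of_le_of_eq (le_csSup hbdd ⟨x, hx, rfl⟩) he.symm⟩
  have hnear : ∀ x ∈ U, ∀ ν ∈ Λ x, ∀ ε, 0 < ε → ∀ᶠ x' in 𝓝 x, ∃ ν' ∈ Λ x', ‖ν' - ν‖ < ε :=
    fun x hx ν hν ε hε => eventually_exists_freq_near hcont hP hF hHr hU hUD hUN hx hν hε
  obtain ⟨l, δ, hδ, hinj, hsep⟩ := exists_dual_separating (Λ x₀)
  obtain ⟨V, hVsub, hV, hxV⟩ := mem_nhds_iff.1 ((hU.eventually_mem hx₀).and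
    ((eventually_all_finset (Λ x₀)).2 fun ν hν => hnear x₀ hx₀ ν hν δ hδ))
  have hex : ∀ (j : Λ x₀) (x : X), x ∈ V → ∃ ν, ν ∈ Λ x ∧ ‖ν - j‖ < δ := fun j x hx =>
    (hVsub hx).2 j j.2
  choose! L hL hLδ using hex
  have hlt : ∀ j j' : Λ x₀, l j < l j' → ∀ x ∈ V, l (L j x) < l (L j' x) :=
    fun j j' h x hx => hsep j j.2 j' j'.2 h _ _ (hLδ j x hx) (hLδ j' x hx)
  have huniq : ∀ (j j' : Λ x₀) (z z' : ℂ), ‖z - j‖ < δ → ‖z' - j'‖ < δ → z = z' → j = j' := by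
    intro j j' z z' hz hz' e
    subst e
    by_contra hne
    have hne' : l j ≠ l j' := fun e => hne (Subtype.ext (hinj j j.2 j' j'.2 e))
    rcases lt_or_gt_of_ne hne' with h | h
    · exact lt_irrefl _ (hsep j j.2 j' j'.2 h z z hz hz')
    · exact lt_irrefl _ (hsep j' j'.2 j j.2 h z z hz' hz)
  have hLinj : ∀ x ∈ V, Function.Injective fun j => L j x := fun x hx j j' e =>
    huniq j j' _ _ (hLδ j x hx) (hLδ j' x hx) e
  have himg : ∀ x ∈ V, Finset.univ.image (fun j => L j x) = Λ x := fun x hx => by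
    refine Finset.eq_of_subset_of_card_le ?_ ?_
    · intro ν hν
      obtain ⟨j, -, rfl⟩ := Finset.mem_image.1 hν
      exact hL j x hx
    · rw [Finset.card_image_of_injective _ (hLinj x hx), Finset.card_univ, Fintype.card_coe]
      exact hmax x (hVsub hx).1
  refine ⟨Λ x₀, l, V, L, fun j x => P x (L j x), hV, ⟨x₀, hxV⟩, fun j x hx => ?_,
    fun j x hx => hP x _ (hL j x hx), fun x hx y => ?_,
    fun j j' e => Subtype.ext (hinj j j.2 j' j'.2 e), hlt⟩
  · refine ContinuousAt.continuousWithinAt (Metric.tendsto_nhds.2 fun ε hε => ?_)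
    have hpos : 0 < min ε (δ - ‖L j x - j‖) := lt_min hε (sub_pos.2 (hLδ j x hx))
    filter_upwards [hV.mem_nhds hx, hnear x (hVsub hx).1 _ (hL j x hx) _ hpos]
      with x' hx' ⟨ν, hν, hlt'⟩
    rw [← himg x' hx'] at hν
    obtain ⟨j', -, rfl⟩ := Finset.mem_image.1 hν
    have h1 : ‖L j' x' - j‖ < δ := by
      have := norm_sub_le_norm_sub_add_norm_sub (L j' x') (L j x) j
      linarith [hlt'.trans_le (min_le_right _ _)]
    have h2 : j' = j := huniq j' j _ _ (hLδ j' x' hx') h1 rfl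
    subst h2
    rw [dist_eq_norm]
    exact hlt'.trans_le (min_le_left _ _)
  · rw [hF x y, ← himg x hx, Finset.sum_image fun j _ j' _ e => hLinj x hx e]

/-- On `V`, the function `L` is additive (up to a constant) along the direction `e`. -/
def AddAlong {E : Type*} [AddCommGroup E] [Module ℝ E] (L : E → ℂ) (e : E) (V : Set E) : Prop :=
  ∀ (z : E) (p q : ℝ), z ∈ V → z + p • e ∈ V → z + q • e ∈ V → z + (p + q) • e ∈ V →
    L (z + (p + q) • e) + L z = L (z + p • e) + L (z + q • e)

theorem AddAlong.mono {E : Type*} [AddCommGroup E] [Module ℝ E] {L : E → ℂ} {e : E} {V W : Set E}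
    (h : AddAlong L e V) (hWV : W ⊆ V) : AddAlong L e W :=
  fun z p q h0 h1 h2 h3 => h z p q (hWV h0) (hWV h1) (hWV h2) (hWV h3)

theorem exists_frequency_relation {J : Type*} [Fintype J] [DecidableEq J] {n : ℕ}
    (F : Fin n → Fin n → ℝ → ℂ) (L : J → Fin n → Fin n → ℂ)
    (Q : J → Fin n → Fin n → Polynomial ℂ) (hQ : ∀ j a b, Q j a b ≠ 0)
    (hF : ∀ a b y, F a b y = ∑ j, (Q j a b).eval (y : ℂ) * Complex.exp (L j a b * y))
    (hdet : ∀ y, (Matrix.of fun a b => F a b y).det = 0) (k : J) :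
    ∃ p : Equiv.Perm (Fin n) × (Fin n → J), p ≠ (1, fun _ => k) ∧
      ∑ i, L (p.2 i) (p.1 i) i = ∑ i, L k i i := by
  refine exists_ne_of_expSum_eq_zero
    (fun p : Equiv.Perm (Fin n) × (Fin n → J) =>
      Polynomial.C ((Equiv.Perm.sign p.1 : ℤ) : ℂ) * ∏ i, Q (p.2 i) (p.1 i) i)
    (fun p => ∑ i, L (p.2 i) (p.1 i) i) (fun y => ?_) (1, fun _ => k) ?_
  · rw [← hdet y, Matrix.det_apply', Fintype.sum_prod_type]
    refine Finset.sum_congr rfl fun σ _ => ?_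
    simp only [Matrix.of_apply, hF]
    rw [Finset.prod_univ_sum, Fintype.piFinset_univ, Finset.mul_sum]
    refine Finset.sum_congr rfl fun κ _ => ?_
    rw [Polynomial.eval_mul, Polynomial.eval_C, Polynomial.eval_prod, Finset.sum_mul,
      Complex.exp_sum, Finset.prod_mul_distrib, mul_assoc]
  · simp [Finset.prod_ne_zero_iff, hQ]

section Directional

variable {E : Type*} [NormedAddCommGroup E] [NormedSpace ℝ E]

/-- The nodes `x + (s i + u j) • e` of a Hankel matrix in direction `e`. -/
def hankelNode {n : ℕ} (e : E) (w : E × (Fin n → ℝ) × (Fin n → ℝ)) (i j : Fin n) : E :=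
  w.1 + (w.2.1 i + w.2.2 j) • e

theorem continuous_hankelNode {n : ℕ} (e : E) (i j : Fin n) :
    Continuous fun w => hankelNode (n := n) e w i j := by
  unfold hankelNode
  fun_prop

theorem addAlong_of_relation {J : Type*} {n : ℕ} {e : E} (he : ‖e‖ = 1) {L : J → E → ℂ}
    {σ : Equiv.Perm (Fin n)} {κ : Fin n → J} {k : J} {O : Set (E × (Fin n → ℝ) × (Fin n → ℝ))}
    (hO : IsOpen O) {w : E × (Fin n → ℝ) × (Fin n → ℝ)} (hw : w ∈ O)
    (hrel : ∀ w ∈ O, ∑ i, L (κ i) (hankelNode e w (σ i) i) = ∑ i, L k (hankelNode e w i i))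
    {i₀ : Fin n} (hi₀ : σ i₀ ≠ i₀) :
    ∃ V, IsOpen V ∧ hankelNode e w i₀ i₀ ∈ V ∧ AddAlong (L k) e V := by
  obtain ⟨δ, hδ, hball⟩ := Metric.isOpen_iff.1 hO w hw
  refine ⟨Metric.ball (hankelNode e w i₀ i₀) (δ / 2), Metric.isOpen_ball,
    Metric.mem_ball_self (half_pos hδ), fun z p q hz hp hq _ => ?_⟩
  have hsmall : ∀ {p : ℝ}, z + p • e ∈ Metric.ball (hankelNode e w i₀ i₀) (δ / 2) → |p| < δ := by
    intro p hp
    have h1 := dist_triangle_right (z + p • e) z (hankelNode e w i₀ i₀)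
    rw [dist_eq_norm, add_sub_cancel_left, norm_smul, he, mul_one, Real.norm_eq_abs] at h1
    rw [Metric.mem_ball] at hp hz
    linarith
  let v : ℝ → ℝ → E × (Fin n → ℝ) × (Fin n → ℝ) := fun p q =>
    (w.1 + (z - hankelNode e w i₀ i₀), w.2.1 + Pi.single i₀ p, w.2.2 + Pi.single i₀ q)
  have hv : ∀ {p q : ℝ}, |p| < δ → |q| < δ → v p q ∈ O := by
    intro p q hp hq
    refine hball ?_
    rw [Metric.mem_ball, Prod.dist_eq, Prod.dist_eq, max_lt_iff, max_lt_iff]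
    refine ⟨?_, ?_, ?_⟩
    · rw [dist_eq_norm, add_sub_cancel_left, ← dist_eq_norm]
      exact (Metric.mem_ball.1 hz).trans (half_lt_self hδ)
    · rw [dist_eq_norm, add_sub_cancel_left, Pi.norm_single]
      exact hp
    · rw [dist_eq_norm, add_sub_cancel_left, Pi.norm_single]
      exact hq
  have h0 : |(0 : ℝ)| < δ := by simpa using hδ
  have hp' := hsmall hp
  have hq' := hsmall hq
  have hnode : ∀ p q a b, hankelNode e (v p q) a b = hankelNode e w a b +
      (z - hankelNode e w i₀ i₀) + ((Pi.single i₀ p : Fin n → ℝ) a +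
        (Pi.single i₀ q : Fin n → ℝ) b) • e := by
    intro p q a b
    simp only [hankelNode, v, Pi.add_apply]
    module
  have hl : ∑ i, (L k (hankelNode e (v p q) i i) - L k (hankelNode e (v p 0) i i) -
      L k (hankelNode e (v 0 q) i i) + L k (hankelNode e (v 0 0) i i)) =
      L k (z + (p + q) • e) - L k (z + p • e) - L k (z + q • e) + L k z := by
    rw [Finset.sum_eq_single i₀]
    · simp [hnode]
    · intro i _ hi
      simp [hnode, hi]
    · simp
  have hr : ∑ i, (L (κ i) (hankelNode e (v p q) (σ i) i) - L (κ i) (hankelNode e (v p 0) (σ i) i) -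
      L (κ i) (hankelNode e (v 0 q) (σ i) i) + L (κ i) (hankelNode e (v 0 0) (σ i) i)) = 0 := by
    refine Finset.sum_eq_zero fun i _ => ?_
    by_cases hi : i = i₀
    · subst hi
      simp [hnode, hi₀]
    · simp [hnode, hi]
  simp only [Finset.sum_add_distrib, Finset.sum_sub_distrib] at hl hr
  rw [hrel _ (hv hp' hq'), hrel _ (hv hp' h0), hrel _ (hv h0 hq'), hrel _ (hv h0 h0), hl] at hr
  linear_combination hr

theorem sub_const_of_relation {J : Type*} {n : ℕ} {e : E} (he : ‖e‖ = 1) {L : J → E → ℂ}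
    {κ : Fin n → J} {k : J} {O : Set (E × (Fin n → ℝ) × (Fin n → ℝ))}
    (hO : IsOpen O) {w : E × (Fin n → ℝ) × (Fin n → ℝ)} (hw : w ∈ O)
    (hrel : ∀ w ∈ O, ∑ i, L (κ i) (hankelNode e w i i) = ∑ i, L k (hankelNode e w i i))
    (i₀ : Fin n) :
    ∃ V, IsOpen V ∧ hankelNode e w i₀ i₀ ∈ V ∧ ∀ z ∈ V, ∀ p : ℝ, z + p • e ∈ V →
      L k (z + p • e) - L (κ i₀) (z + p • e) = L k z - L (κ i₀) z := by
  obtain ⟨δ, hδ, hball⟩ := Metric.isOpen_iff.1 hO w hw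
  refine ⟨Metric.ball (hankelNode e w i₀ i₀) (δ / 2), Metric.isOpen_ball,
    Metric.mem_ball_self (half_pos hδ), fun z hz p hp => ?_⟩
  have hsmall : |p| < δ := by
    have h1 := dist_triangle_right (z + p • e) z (hankelNode e w i₀ i₀)
    rw [dist_eq_norm, add_sub_cancel_left, norm_smul, he, mul_one, Real.norm_eq_abs] at h1
    rw [Metric.mem_ball] at hp hz
    linarith
  let v : ℝ → E × (Fin n → ℝ) × (Fin n → ℝ) := fun p =>
    (w.1 + (z - hankelNode e w i₀ i₀), w.2.1 + Pi.single i₀ p, w.2.2)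
  have hv : ∀ {p : ℝ}, |p| < δ → v p ∈ O := by
    intro p hp
    refine hball ?_
    rw [Metric.mem_ball, Prod.dist_eq, Prod.dist_eq, max_lt_iff, max_lt_iff]
    refine ⟨?_, ?_, ?_⟩
    · rw [dist_eq_norm, add_sub_cancel_left, ← dist_eq_norm]
      exact (Metric.mem_ball.1 hz).trans (half_lt_self hδ)
    · rw [dist_eq_norm, add_sub_cancel_left, Pi.norm_single]
      exact hp
    · rw [dist_self]
      exact hδ
  have hnode : ∀ p a b, hankelNode e (v p) a b = hankelNode e w a b +
      (z - hankelNode e w i₀ i₀) + ((Pi.single i₀ p : Fin n → ℝ) a) • e := by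
    intro p a b
    simp only [hankelNode, v, Pi.add_apply]
    module
  have hl : ∑ i, ((L k (hankelNode e (v p) i i) - L (κ i) (hankelNode e (v p) i i)) -
      (L k (hankelNode e (v 0) i i) - L (κ i) (hankelNode e (v 0) i i))) =
      (L k (z + p • e) - L (κ i₀) (z + p • e)) - (L k z - L (κ i₀) z) := by
    rw [Finset.sum_eq_single i₀]
    · simp [hnode]
    · intro i _ hi
      simp [hnode, hi]
    · simp
  simp only [Finset.sum_sub_distrib] at hl
  rw [hrel _ (hv hsmall), hrel _ (hv (by simpa using hδ)), sub_self, sub_self, sub_self] at hl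
  exact (sub_eq_zero.1 hl.symm)

theorem exists_addAlong [CompleteSpace E] {J : Type*} [Fintype J] [DecidableEq J]
    {F : E → ℝ → ℂ} {l : J → ℝ} {r : ℂ →+ ℝ} {V : Set E} {L : J → E → ℂ}
    {Q : J → E → Polynomial ℂ} (hL : ∀ j, ContinuousOn (L j) V)
    (hQ : ∀ j, ∀ x ∈ V, Q j x ≠ 0)
    (hF : ∀ x ∈ V, ∀ y : ℝ, F x y = ∑ j, (Q j x).eval (y : ℂ) * Complex.exp (L j x * y))
    (hinj : ∀ j j', l j = l j' → j = j')
    (hlt : ∀ j j', l j < l j' → ∀ x ∈ V, r (L j x) < r (L j' x))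
    {e : E} (he : ‖e‖ = 1) {n : ℕ}
    (hdet : ∀ x y (s u : Fin n → ℝ), (Matrix.of fun i j => F (x + (s i + u j) • e) y).det = 0)
    (k : J) {V₀ : Set E} (hV₀ : IsOpen V₀) (hne : V₀.Nonempty) (hsub : V₀ ⊆ V) :
    ∃ V', IsOpen V' ∧ V'.Nonempty ∧ V' ⊆ V₀ ∧ AddAlong (L k) e V' := by
  have hwf : WellFounded fun j j' : J => l j' < l j :=
    @Finite.wellFounded_of_trans_of_irrefl J _ (fun j j' => l j' < l j)
      ⟨fun _ _ _ h h' => lt_trans h' h⟩ ⟨fun _ => lt_irrefl _⟩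
  induction k using hwf.induction generalizing V₀ with
  | _ k ih =>
    let O : Set (E × (Fin n → ℝ) × (Fin n → ℝ)) := {w | ∀ i j, hankelNode e w i j ∈ V₀}
    have hO : IsOpen O := by
      simp only [O, Set.ofPred_forall]
      exact isOpen_iInter_of_finite fun i => isOpen_iInter_of_finite fun j =>
        hV₀.preimage (continuous_hankelNode e i j)
    obtain ⟨x, hx⟩ := hne
    have hOne : O.Nonempty := ⟨(x, 0, 0), fun i j => by simpa [hankelNode] using hx⟩
    obtain ⟨⟨⟨σ, κ⟩, hpne⟩, O', hO', ⟨w, hw⟩, hO'O, hcl⟩ := exists_isOpen_subset_closure hO hOne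
      (fun p : {p : Equiv.Perm (Fin n) × (Fin n → J) // p ≠ (1, fun _ => k)} =>
        {w | w ∈ O ∧ ∑ i, L (p.1.2 i) (hankelNode e w (p.1.1 i) i) =
          ∑ i, L k (hankelNode e w i i)})
      (fun w hw => by
        obtain ⟨p, hp, h⟩ := exists_frequency_relation
          (fun a b => F (hankelNode e w a b)) (fun j a b => L j (hankelNode e w a b))
          (fun j a b => Q j (hankelNode e w a b)) (fun j a b => hQ j _ (hsub (hw a b)))
          (fun a b => hF _ (hsub (hw a b))) (fun y => hdet w.1 y w.2.1 w.2.2) k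
        exact Set.mem_iUnion.2 ⟨⟨p, hp⟩, hw, h⟩)
    have hnode : ∀ j a b, ContinuousOn (fun w => L j (hankelNode (n := n) e w a b)) O := fun j a b =>
      (hL j).comp (continuous_hankelNode e a b).continuousOn fun w hw => hsub (hw a b)
    have hrel : ∀ w ∈ O', ∑ i, L (κ i) (hankelNode e w (σ i) i) =
        ∑ i, L k (hankelNode e w i i) := by
      intro w hw
      have hc : ContinuousAt (fun w => ∑ i, L (κ i) (hankelNode e w (σ i) i) -
          ∑ i, L k (hankelNode e w i i)) w :=
        ((continuousOn_finsetSum _ fun i _ => hnode _ _ _).sub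
          (continuousOn_finsetSum _ fun i _ => hnode _ _ _)).continuousAt
          (hO.mem_nhds (hO'O hw))
      have hmem := mem_closure_image hc (hcl hw)
      refine sub_eq_zero.1 (isClosed_singleton.closure_subset_iff.2 ?_ hmem)
      rintro _ ⟨w', hw', rfl⟩
      exact sub_eq_zero.2 hw'.2
    by_cases hσ : σ = 1
    · subst hσ
      obtain ⟨i₀, hi₀⟩ : ∃ i, l k < l (κ i) := by
        by_contra! hcon
        obtain ⟨i₁, hi₁⟩ : ∃ i, κ i ≠ k := by
          by_contra! h
          exact hpne (Prod.ext rfl (funext h))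
        refine absurd (congrArg r (hrel w hw)) (ne_of_lt ?_)
        rw [map_sum, map_sum]
        have hlt' : ∀ i, κ i ≠ k →
            r (L (κ i) (hankelNode e w i i)) < r (L k (hankelNode e w i i)) := fun i hi =>
          hlt _ _ (lt_of_le_of_ne (hcon i) fun h => hi (hinj _ _ h)) _ (hsub (hO'O hw i i))
        refine Finset.sum_lt_sum (fun i _ => ?_) ⟨i₁, Finset.mem_univ _, hlt' i₁ hi₁⟩
        by_cases hi : κ i = k
        · simp [hi]
        · exact (hlt' i hi).le
      obtain ⟨W, hW, hwW, hconst⟩ := sub_const_of_relation he hO' hw hrel i₀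
      obtain ⟨V', hV', hV'ne, hV'W, hadd⟩ := ih (κ i₀) hi₀ (hW.inter hV₀)
        ⟨_, hwW, hO'O hw i₀ i₀⟩ (Set.inter_subset_right.trans hsub)
      refine ⟨V', hV', hV'ne, hV'W.trans Set.inter_subset_right, fun z p q hz hp hq hpq => ?_⟩
      have h1 := hadd z p q hz hp hq hpq
      have h2 := hconst z (hV'W hz).1 p (hV'W hp).1
      have h3 := hconst z (hV'W hz).1 q (hV'W hq).1
      have h4 := hconst z (hV'W hz).1 (p + q) (hV'W hpq).1
      linear_combination h1 - h2 - h3 + h4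
    · obtain ⟨i₀, hi₀⟩ : ∃ i, σ i ≠ i := by
        by_contra! h
        exact hσ (Equiv.ext h)
      obtain ⟨W, hW, hwW, hadd⟩ := addAlong_of_relation he hO' hw hrel hi₀
      exact ⟨W ∩ V₀, hW.inter hV₀, ⟨_, hwW, hO'O hw i₀ i₀⟩, Set.inter_subset_right,
        hadd.mono Set.inter_subset_left⟩

end Directional

theorem eq_affine_of_midpoint {g : ℝ → ℂ} {a b : ℝ} (hab : a < b)
    (hg : ContinuousOn g (Set.Icc a b))
    (hmid : ∀ t s, t - s ∈ Set.Icc a b → t + s ∈ Set.Icc a b → g (t - s) + g (t + s) = 2 * g t) :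
    ∀ t ∈ Set.Icc a b, g t = g a + ((t - a) / (b - a) : ℝ) * (g b - g a) := by
  let h : ℝ → ℂ := fun t => g t - (g a + ((t - a) / (b - a) : ℝ) * (g b - g a))
  have hba : b - a ≠ 0 := (sub_pos.2 hab).ne'
  have hc : ContinuousOn h (Set.Icc a b) := by
    refine hg.sub (Continuous.continuousOn ?_)
    fun_prop
  have ha : h a = 0 := by simp [h]
  have hb : h b = 0 := by simp only [h]; rw [div_self hba]; simp
  have hmid' : ∀ t s, t - s ∈ Set.Icc a b → t + s ∈ Set.Icc a b →
      h (t - s) + h (t + s) = 2 * h t := by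
    intro t s h1 h2
    have h3 := hmid t s h1 h2
    simp only [h]
    push_cast
    linear_combination h3
  obtain ⟨m, hm, hmax⟩ := isCompact_Icc.exists_isMaxOn (Set.nonempty_Icc.2 hab.le) hc.norm
  have key : ∀ s, m - s ∈ Set.Icc a b → m + s ∈ Set.Icc a b →
      (h (m - s) = 0 ∨ h (m + s) = 0) → ‖h m‖ = 0 := by
    intro s h1 h2 h0
    have h3 : ‖h (m - s) + h (m + s)‖ = 2 * ‖h m‖ := by rw [hmid' m s h1 h2]; simp
    have h4 : ‖h (m - s)‖ ≤ ‖h m‖ := hmax h1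
    have h5 : ‖h (m + s)‖ ≤ ‖h m‖ := hmax h2
    have h6 := norm_nonneg (h m)
    rcases h0 with h0 | h0
    · rw [h0, zero_add] at h3
      linarith
    · rw [h0, add_zero] at h3
      linarith
  have hm0 : ‖h m‖ = 0 := by
    obtain ⟨hm1, hm2⟩ := hm
    rcases le_total (m - a) (b - m) with hle | hle
    · exact key (m - a) ⟨by linarith, by linarith⟩ ⟨by linarith, by linarith⟩
        (Or.inl (by rw [sub_sub_cancel, ha]))
    · exact key (b - m) ⟨by linarith, by linarith⟩ ⟨by linarith, by linarith⟩
        (Or.inr (by rw [add_sub_cancel, hb]))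
  intro t ht
  have h1 : ‖h t‖ ≤ ‖h m‖ := hmax ht
  exact sub_eq_zero.1 (norm_le_zero_iff.1 (h1.trans hm0.le))

/-- A continuous function which is affine in each coordinate on a box agrees there with a
polynomial of degree at most one in each variable. -/
theorem exists_multiAffine_of_midpoint {d : ℕ} {L : (Fin d → ℝ) → ℂ} {α β : Fin d → ℝ}
    (hαβ : ∀ i, α i < β i) (hL : ContinuousOn L (Set.Icc α β))
    (hmid : ∀ x ∈ Set.Icc α β, ∀ l t s, t - s ∈ Set.Icc (α l) (β l) → t + s ∈ Set.Icc (α l) (β l) →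
      L (Function.update x l (t - s)) + L (Function.update x l (t + s)) =
        2 * L (Function.update x l t)) :
    ∃ P : MvPolynomial (Fin d) ℂ, (∀ i, P.degreeOf i ≤ 1) ∧
      ∀ x ∈ Set.Icc α β, L x = realEval x P := by
  have hupd : ∀ x ∈ Set.Icc α β, ∀ l, ∀ t ∈ Set.Icc (α l) (β l),
      Function.update x l t ∈ Set.Icc α β := by
    intro x hx l t ht
    constructor
    · exact le_update_iff.2 ⟨ht.1, fun i _ => hx.1 i⟩
    · exact update_le_iff.2 ⟨ht.2, fun i _ => hx.2 i⟩
  suffices key : ∀ T : Finset (Fin d), ∀ z ∈ Set.Icc α β, ∃ P : MvPolynomial (Fin d) ℂ,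
      (∀ i, P.degreeOf i ≤ 1) ∧ (∀ i ∉ T, P.degreeOf i = 0) ∧
      ∀ x ∈ Set.Icc α β, L (T.piecewise x z) = realEval x P by
    obtain ⟨P, h1, -, h2⟩ := key Finset.univ α ⟨le_rfl, fun i => (hαβ i).le⟩
    exact ⟨P, h1, fun x hx => by rw [← h2 x hx, Finset.piecewise_univ]⟩
  intro T
  induction T using Finset.induction_on with
  | empty =>
    intro z _
    exact ⟨MvPolynomial.C (L z), fun i => by simp, fun i _ => by simp, fun x _ => by simp⟩
  | insert l T hl ih =>
    intro z hz
    have hα : α l ∈ Set.Icc (α l) (β l) := ⟨le_rfl, (hαβ l).le⟩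
    have hβ : β l ∈ Set.Icc (α l) (β l) := ⟨(hαβ l).le, le_rfl⟩
    obtain ⟨P₀, h01, h02, h03⟩ := ih _ (hupd z hz l _ hα)
    obtain ⟨P₁, h11, h12, h13⟩ := ih _ (hupd z hz l _ hβ)
    have hdiff : ∀ i, (P₁ - P₀).degreeOf i ≤ max (P₁.degreeOf i) (P₀.degreeOf i) := fun i =>
      MvPolynomial.degreeOf_sub_le i P₁ P₀
    let R : MvPolynomial (Fin d) ℂ := MvPolynomial.C ((β l - α l : ℂ)⁻¹) *
      (MvPolynomial.X l - MvPolynomial.C (α l : ℂ))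
    have hR : ∀ i, R.degreeOf i ≤ if i = l then 1 else 0 := by
      intro i
      refine (MvPolynomial.degreeOf_C_mul_le _ _ _).trans
        ((MvPolynomial.degreeOf_sub_le _ _ _).trans ?_)
      rw [MvPolynomial.degreeOf_C, MvPolynomial.degreeOf_X]
      simp
    have hmul : ∀ i, (R * (P₁ - P₀)).degreeOf i ≤
        (if i = l then 1 else 0) + max (P₁.degreeOf i) (P₀.degreeOf i) := fun i =>
      (MvPolynomial.degreeOf_mul_le _ _ _).trans (add_le_add (hR i) (hdiff i))
    refine ⟨P₀ + R * (P₁ - P₀), fun i => ?_, fun i hi => ?_, fun x hx => ?_⟩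
    · refine (MvPolynomial.degreeOf_add_le _ _ _).trans (max_le (h01 i) ((hmul i).trans ?_))
      split_ifs with hil
      · subst hil
        simp [h02 i hl, h12 i hl]
      · simp [h01 i, h11 i]
    · rw [Finset.mem_insert, not_or] at hi
      have := (MvPolynomial.degreeOf_add_le i P₀ (R * (P₁ - P₀)))
      have := hmul i
      simp only [hi.1, if_false, h02 i hi.2, h12 i hi.2] at *
      omega
    · have hcomm : ∀ t, T.piecewise x (Function.update z l t) =
          Function.update (T.piecewise x z) l t := fun t =>
        (Finset.update_piecewise_of_notMem T x z hl t).symm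
      have hpw : T.piecewise x z ∈ Set.Icc α β :=
        ⟨Finset.le_piecewise_of_le_of_le T hx.1 hz.1, Finset.piecewise_le_of_le_of_le T hx.2 hz.2⟩
      have hline := eq_affine_of_midpoint (g := fun t => L (Function.update (T.piecewise x z) l t))
        (hαβ l) (hL.comp (by fun_prop) fun t ht => hupd _ hpw l t ht)
        (fun t s => hmid _ hpw l t s) (x l) ⟨hx.1 l, hx.2 l⟩
      rw [Finset.piecewise_insert, hline, ← hcomm, ← hcomm, h03 x hx, h13 x hx]
      simp only [R, map_add, map_mul, map_sub, MvPolynomial.eval_C, MvPolynomial.eval_X]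
      push_cast
      ring

theorem exists_multiAffine_of_addAlong {d : ℕ} {L : (Fin d → ℝ) → ℂ} {V : Set (Fin d → ℝ)}
    (hV : IsOpen V) (hL : ContinuousOn L V)
    (hadd : ∀ l, AddAlong L (Pi.single l (1 : ℝ)) V) {x₀ : Fin d → ℝ} (hx₀ : x₀ ∈ V) :
    ∃ P : MvPolynomial (Fin d) ℂ, (∀ i, P.degreeOf i ≤ 1) ∧
      ∃ W, IsOpen W ∧ x₀ ∈ W ∧ W ⊆ V ∧ ∀ x ∈ W, L x = realEval x P := by
  obtain ⟨ε, hε, hball⟩ := Metric.nhds_basis_closedBall.mem_iff.1 (hV.mem_nhds hx₀)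
  have hIcc : Set.Icc (fun i => x₀ i - ε) (fun i => x₀ i + ε) = Metric.closedBall x₀ ε := by
    ext x
    rw [Metric.mem_closedBall, dist_pi_le_iff hε.le, Set.mem_Icc, Pi.le_def, Pi.le_def,
      ← forall_and]
    refine forall_congr' fun i => ?_
    rw [Real.dist_eq, abs_le]
    constructor <;> rintro ⟨h1, h2⟩ <;> constructor <;> linarith
  have hsub : Set.Icc (fun i => x₀ i - ε) (fun i => x₀ i + ε) ⊆ V := hIcc.trans_subset hball
  obtain ⟨P, hP, hPL⟩ := exists_multiAffine_of_midpoint (L := L)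
    (α := fun i => x₀ i - ε) (β := fun i => x₀ i + ε) (fun i => by linarith) (hL.mono hsub) (by
      intro x hx l t s h1 h2
      have hmem : ∀ u ∈ Set.Icc (x₀ l - ε) (x₀ l + ε), Function.update x l u ∈ V := by
        intro u hu
        refine hsub ⟨?_, ?_⟩
        · exact le_update_iff.2 ⟨hu.1, fun i _ => hx.1 i⟩
        · exact update_le_iff.2 ⟨hu.2, fun i _ => hx.2 i⟩
      have hshift : ∀ u p, Function.update x l u + p • Pi.single l (1 : ℝ) =
          Function.update x l (u + p) := by
        intro u p
        ext i
        by_cases hi : i = l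
        · subst hi; simp
        · simp [hi]
      have ht : t ∈ Set.Icc (x₀ l - ε) (x₀ l + ε) :=
        ⟨by linarith [h1.1, h2.1], by linarith [h1.2, h2.2]⟩
      have e1 : t - s + s = t := by ring
      have e2 : t - s + (s + s) = t + s := by ring
      have := hadd l (Function.update x l (t - s)) s s
      simp only [hshift, e1, e2] at this
      linear_combination this (hmem _ h1) (hmem _ ht) (hmem _ ht) (hmem _ h2))
  refine ⟨P, hP, Metric.ball x₀ ε, Metric.isOpen_ball, Metric.mem_ball_self hε,
    Metric.ball_subset_closedBall.trans hball, fun x hx => hPL x ?_⟩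
  rw [hIcc]
  exact Metric.ball_subset_closedBall hx

theorem countable_setOf_smul_mem {G : Type*} [AddCommGroup G] [Module ℂ G] {Γ : Submodule ℤ G}
    (hΓ : (Γ : Set G).Countable) {g : G} (hg : g ≠ 0) : {y : ℝ | (y : ℂ) • g ∈ Γ}.Countable :=
  hΓ.preimage (f := fun y : ℝ => (y : ℂ) • g) fun _ _ h =>
    Complex.ofReal_injective (smul_left_injective ℂ hg h)

/-- A divisibility criterion obtained by splitting exponents into cosets. -/
theorem dvd_of_mul_eq_sum_single {d : ℕ} {B : Type*} [Fintype B] [DecidableEq (multiAffine d)]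
    (α : B → multiAffine d) (φ : B → ℝ → ℂ) (D : ExpPolyRing d) (N : B → ExpPolyRing d)
    (f : ℝ → ExpPolyRing d)
    (h : ∀ y, D * f y = ∑ b, .single ((y : ℂ) • α b) (MvPolynomial.C (φ b y)) * N b)
    (hφ : ∀ (a : multiAffine d) (Y : Set ℝ), Yᶜ.Countable → ∀ c : B → ℂ,
      (∀ y ∈ Y, ∑ b with α b = a, c b * φ b y = 0) → ∀ b, α b = a → c b = 0) (b₀ : B) :
    D ∣ N b₀ := by
  classical
  let T : Finset (multiAffine d) := D.coeff.support ∪ Finset.univ.biUnion fun b => (N b).coeff.support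
  let Γ : Submodule ℤ (multiAffine d) := Submodule.span ℤ (T : Set (multiAffine d))
  have hΓ : (Γ : Set (multiAffine d)).Countable := by
    have : Module.Finite ℤ Γ := Module.Finite.span_of_finite ℤ T.finite_toSet
    exact Set.countable_coe_iff.1 (Finsupp.Countable.of_moduleFinite (R := ℤ) (M := Γ))
  let π : multiAffine d →+ multiAffine d ⧸ Γ := Γ.mkQ.toAddMonoidHom
  let 𝒜 := AddMonoidAlgebra.gradeBy (MvPolynomial (Fin d) ℂ) π
  have hπ : ∀ g ∈ T, π g = 0 := fun g hg =>
    (Submodule.Quotient.mk_eq_zero Γ).2 (Submodule.subset_span hg)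
  have hD : D ∈ 𝒜 0 := fun g hg => hπ g (Finset.mem_union_left _ hg)
  have hN : ∀ b, N b ∈ 𝒜 0 := fun b g hg => hπ g
    (Finset.mem_union_right _ (Finset.mem_biUnion.2 ⟨b, Finset.mem_univ b, hg⟩))
  let a := α b₀
  let Y : Set ℝ := {y | ∀ b, α b ≠ a → (y : ℂ) • (α b - a) ∉ Γ}
  have hY : Yᶜ.Countable := by
    refine (Set.countable_iUnion fun b : {b // α b ≠ a} =>
      countable_setOf_smul_mem hΓ (sub_ne_zero.2 b.2)).mono fun y hy => ?_
    simp only [Y, Set.mem_compl_iff, Set.mem_ofPred_eq, not_forall, not_not] at hy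
    obtain ⟨b, hb, hy⟩ := hy
    exact Set.mem_iUnion.2 ⟨⟨b, hb⟩, hy⟩
  have hdvd : ∀ y ∈ Y, D ∣ ∑ b with α b = a, φ b y • N b := by
    intro y hy
    have hterm : ∀ b, (.single ((y : ℂ) • α b) (MvPolynomial.C (φ b y)) * N b : ExpPolyRing d) ∈
        𝒜 (π ((y : ℂ) • α b)) := fun b => by
      have := SetLike.mul_mem_graded (A := 𝒜)
        (AddMonoidAlgebra.single_mem_gradeBy π ((y : ℂ) • α b) (MvPolynomial.C (φ b y))) (hN b)
      rwa [add_zero] at this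
    have h1 := congrArg (GradedRing.proj 𝒜 (π ((y : ℂ) • a))) (h y)
    rw [map_sum] at h1
    simp only [GradedRing.proj_apply, DirectSum.coe_decompose_mul_of_left_mem_zero 𝒜 hD] at h1
    have h2 : ∑ b, (DirectSum.decompose 𝒜
        (.single ((y : ℂ) • α b) (MvPolynomial.C (φ b y)) * N b : ExpPolyRing d)
          (π ((y : ℂ) • a)) : ExpPolyRing d) =
        .single ((y : ℂ) • a) 1 * ∑ b with α b = a, φ b y • N b := by
      rw [Finset.sum_filter, Finset.mul_sum]
      refine Finset.sum_congr rfl fun b _ => ?_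
      split_ifs with hb
      · rw [← hb, DirectSum.decompose_of_mem_same 𝒜 (hterm b), mul_smul_comm, ← smul_mul_assoc,
          AddMonoidAlgebra.smul_single, MvPolynomial.smul_eq_C_mul, mul_one]
      · rw [mul_zero]
        refine DirectSum.decompose_of_mem_ne 𝒜 (hterm b) fun e => hy b hb ?_
        rw [smul_sub, ← Submodule.Quotient.mk_eq_zero]
        exact (map_sub π _ _).trans (sub_eq_zero.2 e)
    rw [h2] at h1
    refine ⟨.single (-((y : ℂ) • a)) 1 * (DirectSum.decompose 𝒜 (f y) (π ((y : ℂ) • a))), ?_⟩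
    rw [mul_left_comm, h1, ← mul_assoc, AddMonoidAlgebra.single_mul_single, neg_add_cancel, mul_one,
      ← AddMonoidAlgebra.one_def, one_mul]
  by_contra hcon
  let W : Submodule ℂ (ExpPolyRing d) := (Ideal.span {D}).restrictScalars ℂ
  obtain ⟨θ, hθ, hW⟩ := Submodule.exists_le_ker_of_notMem (p := W) (v := N b₀)
    (fun hmem => hcon (Ideal.mem_span_singleton.1 hmem))
  refine hθ (hφ a Y hY (fun b => θ (N b)) (fun y hy => ?_) b₀ rfl)
  have h3 : θ (∑ b with α b = a, φ b y • N b) = 0 := hW (Ideal.mem_span_singleton.2 (hdvd y hy))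
  rw [map_sum] at h3
  rw [← h3]
  refine Finset.sum_congr rfl fun b _ => ?_
  rw [map_smul, smul_eq_mul, mul_comm]

theorem expMonomial_indep {B : Type*} (s : Finset B) (j : B → ℕ) (ν : B → ℂ)
    (hinj : Set.InjOn (fun b => (j b, ν b)) s) {Y : Set ℝ} (hY : Dense Y) (c : B → ℂ)
    (h : ∀ y ∈ Y, ∑ b ∈ s, c b * ((y : ℂ) ^ j b * Complex.exp (ν b * y)) = 0) :
    ∀ b ∈ s, c b = 0 := by
  classical
  have hall : ∀ y : ℝ, ∑ b ∈ s, c b * ((y : ℂ) ^ j b * Complex.exp (ν b * y)) = 0 := by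
    have hc : Continuous fun y : ℝ => ∑ b ∈ s, c b * ((y : ℂ) ^ j b * Complex.exp (ν b * y)) := by
      fun_prop
    exact congrFun (hc.ext_on hY continuous_const h)
  have key := exp_indep (s.image ν)
    (fun μ => ∑ b ∈ s with ν b = μ, Polynomial.C (c b) * Polynomial.X ^ j b) id
    (Set.injOn_id _) (fun y => by
      rw [← hall y, ← Finset.sum_fiberwise_of_maps_to (g := ν) (t := s.image ν)
        fun b hb => Finset.mem_image_of_mem _ hb]
      refine Finset.sum_congr rfl fun μ _ => ?_
      rw [Polynomial.eval_finsetSum, Finset.sum_mul]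
      refine Finset.sum_congr rfl fun b hb => ?_
      rw [(Finset.mem_filter.1 hb).2]
      simp [mul_assoc])
  intro b hb
  have h1 := congrArg (fun p => Polynomial.coeff p (j b)) (key _ (Finset.mem_image_of_mem ν hb))
  simp only [Polynomial.finsetSum_coeff, Polynomial.coeff_C_mul_X_pow, Polynomial.coeff_zero] at h1
  rw [Finset.sum_eq_single b] at h1
  · simpa using h1
  · intro b' hb' hne
    rw [Finset.mem_filter] at hb'
    exact if_neg fun e => hne (hinj hb'.1 hb (Prod.ext e.symm hb'.2))
  · intro hb'
    exact (hb' (by simp [hb])).elim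

/-- Linearly independent functions are independent on suitable finitely many points. -/
theorem exists_det_ne_zero_of_indep {B T K : Type*} [Fintype B] [DecidableEq B] [Field K]
    (φ : B → T → K) (h : ∀ c : B → K, (∀ t, ∑ b, c b * φ b t = 0) → c = 0) :
    ∃ t : B → T, (Matrix.of fun a b => φ b (t a)).det ≠ 0 := by
  let v : T → B → K := fun t b => φ b t
  have hspan : Submodule.span K (Set.range v) = ⊤ := by
    by_contra hne
    obtain ⟨θ, hθ, hle⟩ := Submodule.exists_le_ker_of_lt_top _ (lt_top_iff_ne_top.2 hne)
    have h0 := h (fun b => θ (Pi.single b 1)) fun t => by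
      have h1 : θ (v t) = 0 := hle (Submodule.subset_span ⟨t, rfl⟩)
      rw [← h1, LinearMap.pi_apply_eq_sum_univ θ (v t)]
      refine Finset.sum_congr rfl fun b _ => ?_
      rw [smul_eq_mul, mul_comm]
      congr 2
      ext b'
      simp [Pi.single_apply, eq_comm]
    refine hθ (LinearMap.pi_ext' fun b => LinearMap.ext_ring ?_)
    simpa using congrFun h0 b
  obtain ⟨S, hS, hSspan, hSind⟩ := exists_linearIndependent K (Set.range v)
  let e := Module.Basis.mk hSind (by rw [Subtype.range_coe, hSspan, hspan])
  let E : B ≃ S := (Pi.basisFun K B).indexEquiv e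
  choose t ht using fun b : B => hS (E b).2
  refine ⟨t, ((Matrix.isUnit_iff_isUnit_det _).1
    (Matrix.linearIndependent_rows_iff_isUnit.1 ?_)).ne_zero⟩
  have : (Matrix.of fun a b => φ b (t a)).row = Subtype.val ∘ E := funext ht
  rw [this]
  exact hSind.comp _ E.injective

theorem exists_local_form {d : ℕ} {F : (Fin d → ℝ) → ℝ → ℂ}
    (hmem : ∀ y, (fun x => F x y) ∈ expPolyFun d) (hexp : ∀ x, IsExpPoly1 (F x))
    (hH : ∀ l, ∃ n, ∀ x y, HankelVanish n fun t => F (Function.update x l t) y) :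
    ∃ (B : Type) (_ : Fintype B) (j : B → ℕ) (Λ : B → MvPolynomial (Fin d) ℂ)
      (V S : Set (Fin d → ℝ)), (∀ b i, (Λ b).degreeOf i ≤ 1) ∧ IsOpen V ∧ V.Nonempty ∧
      V ⊆ closure S ∧ (∀ x ∈ S, Function.Injective fun b => (j b, realEval x (Λ b))) ∧
      ∀ x ∈ S, ∃ c : B → ℂ, ∀ y : ℝ,
        F x y = ∑ b, c b * ((y : ℂ) ^ j b * Complex.exp (realEval x (Λ b) * y)) := by
  classical
  obtain ⟨J, l, V, L, Q, hV, hne, hL, hQ, hF, hinj, hlt⟩ :=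
    exists_continuous_branches (fun y => continuous_of_mem_expPolyFun (hmem y)) hexp
      (exists_hankelVanish_of_mem_expPolyFun F hmem hexp)
  have hdir : ∀ T : Finset (J × Fin d), ∃ V', IsOpen V' ∧ V'.Nonempty ∧ V' ⊆ V ∧
      ∀ p ∈ T, AddAlong (L p.1) (Pi.single p.2 (1 : ℝ)) V' := by
    intro T
    induction T using Finset.induction_on with
    | empty => exact ⟨V, hV, hne, le_rfl, by simp⟩
    | insert p T hp ih =>
      obtain ⟨V₀, hV₀, hne₀, hsub₀, hadd₀⟩ := ih
      obtain ⟨n, hn⟩ := hH p.2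
      obtain ⟨V', hV', hne', hsub', hadd'⟩ := exists_addAlong (l := fun j : J => l j)
        (r := l.toAddMonoidHom) hL hQ hF hinj hlt (e := Pi.single p.2 (1 : ℝ))
        (by rw [Pi.norm_single, norm_one]) (n := n) (fun x y s u => by
          rw [← hn x y (fun i => x p.2 + s i) u]
          congr 2
          ext i k
          congr 1
          ext i'
          by_cases hi : i' = p.2
          · subst hi; simp [add_assoc]
          · simp [hi]) p.1 hV₀ hne₀ hsub₀
      refine ⟨V', hV', hne', hsub'.trans hsub₀, fun p' hp' => ?_⟩
      rcases Finset.mem_insert.1 hp' with rfl | hp'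
      · exact hadd'
      · exact (hadd₀ p' hp').mono hsub'
  obtain ⟨V₁, hV₁, ⟨x₀, hx₀⟩, hV₁V, hadd⟩ := hdir Finset.univ
  choose Λ hΛ W hW hxW hWV hLΛ using fun j => exists_multiAffine_of_addAlong hV₁
    ((hL j).mono hV₁V) (fun i => hadd (j, i) (Finset.mem_univ _)) hx₀
  obtain ⟨N, V₂, hV₂, hne₂, -, hcl⟩ := exists_isOpen_subset_closure
    ((isOpen_iInter_of_finite hW).inter hV₁) ⟨x₀, Set.mem_iInter.2 hxW, hx₀⟩
    (fun N : ℕ => {x | x ∈ (⋂ j, W j) ∩ V₁ ∧ ∀ j, (Q j x).natDegree ≤ N})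
    (fun x hx => Set.mem_iUnion.2 ⟨Finset.univ.sup fun j => (Q j x).natDegree, hx, fun j =>
      Finset.le_sup (f := fun j => (Q j x).natDegree) (Finset.mem_univ j)⟩)
  refine ⟨J × Fin (N + 1), inferInstance, fun b => b.2, fun b => Λ b.1, V₂, _, fun b => hΛ b.1,
    hV₂, hne₂, hcl, ?_, ?_⟩
  · rintro x ⟨⟨hxW, hxV⟩, -⟩ ⟨j, i⟩ ⟨j', i'⟩ he
    rw [Prod.mk.injEq] at he
    obtain ⟨he₁, he₂⟩ := he
    rw [Set.mem_iInter] at hxW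
    simp only [← hLΛ _ x (hxW _)] at he₂
    refine Prod.ext (hinj j j' ?_) (Fin.ext he₁)
    rcases lt_trichotomy (l j) (l j') with h | h | h
    · exact absurd (congrArg l he₂) (hlt _ _ h x (hV₁V hxV)).ne
    · exact h
    · exact absurd (congrArg l he₂) (hlt _ _ h x (hV₁V hxV)).ne'
  · rintro x ⟨⟨hxW, hxV⟩, hdeg⟩
    rw [Set.mem_iInter] at hxW
    refine ⟨fun b => (Q b.1 x).coeff b.2, fun y => ?_⟩
    rw [hF x (hV₁V hxV), Fintype.sum_prod_type]
    refine Finset.sum_congr rfl fun j _ => ?_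
    rw [Polynomial.eval_eq_sum_range' (Nat.lt_succ_of_le (hdeg j)), Finset.sum_range,
      Finset.sum_mul, hLΛ j x (hxW j)]
    simp only [mul_assoc]

theorem add_C_neg_constantCoeff_mem_multiAffine {d : ℕ} {p : MvPolynomial (Fin d) ℂ}
    (h : ∀ i, p.degreeOf i ≤ 1) :
    p + MvPolynomial.C (-MvPolynomial.constantCoeff p) ∈ multiAffine d := by
  refine ⟨fun i => (MvPolynomial.degreeOf_add_le i _ _).trans (max_le (h i) ?_), by simp⟩
  rw [MvPolynomial.degreeOf_C]
  exact zero_le_one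

/-- A family of exponential polynomials in `y` whose values at each `y` are exponential
polynomials in `x`, with bounded Hankel ranks in all directions, is a single exponential
polynomial in `(x, y)` with polynomial frequencies. -/
theorem exists_global_form {d : ℕ} {F : (Fin d → ℝ) → ℝ → ℂ}
    (hmem : ∀ y, (fun x => F x y) ∈ expPolyFun d) (hexp : ∀ x, IsExpPoly1 (F x))
    (hH : ∀ l, ∃ n, ∀ x y, HankelVanish n fun t => F (Function.update x l t) y) :
    ∃ (B : Type) (_ : Fintype B) (j : B → ℕ) (Λ : B → MvPolynomial (Fin d) ℂ)
      (q : B → (Fin d → ℝ) → ℂ), (∀ b i, (Λ b).degreeOf i ≤ 1) ∧ (∀ b, q b ∈ expPolyFun d) ∧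
      ∀ (x : Fin d → ℝ) (y : ℝ),
        F x y = ∑ b, q b x * ((y : ℂ) ^ j b * Complex.exp (realEval x (Λ b) * y)) := by
  classical
  obtain ⟨B, _, j, Λ, V, S, hΛ, hV, hne, hVS, hinj, hS⟩ := exists_local_form hmem hexp hH
  refine ⟨B, inferInstance, j, Λ, ?_⟩
  obtain ⟨x₁, hx₁⟩ : S.Nonempty := closure_nonempty_iff.1 (hne.mono hVS)
  choose f hf using fun y => mem_expPolyFun.1 (hmem y)
  let α : B → multiAffine d := fun b => ⟨_, add_C_neg_constantCoeff_mem_multiAffine (hΛ b)⟩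
  let β : B → ℂ := fun b => MvPolynomial.constantCoeff (Λ b)
  let φ : B → ℝ → ℂ := fun b y => (y : ℂ) ^ j b * Complex.exp (β b * y)
  let E : B → ℝ → ExpPolyRing d := fun b y =>
    .single ((y : ℂ) • α b) (MvPolynomial.C (φ b y))
  have hE : ∀ x b y, evalExp x (E b y) =
      (y : ℂ) ^ j b * Complex.exp (realEval x (Λ b) * y) := by
    intro x b y
    rw [evalExp_single]
    simp only [φ, α, β, MvPolynomial.eval_C, Submodule.coe_smul, MvPolynomial.smul_eq_C_mul,
      map_mul, map_add]
    rw [mul_assoc, ← Complex.exp_add]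
    congr 2
    ring
  obtain ⟨t, ht⟩ := exists_det_ne_zero_of_indep (fun b y => evalExp x₁ (E b y)) fun c hc =>
    funext fun b => expMonomial_indep Finset.univ j (fun b => realEval x₁ (Λ b))
      ((hinj x₁ hx₁).injOn) dense_univ c (fun y _ => by simpa only [hE] using hc y) b
      (Finset.mem_univ b)
  let M : Matrix B B (ExpPolyRing d) := Matrix.of fun a b => E b (t a)
  let N : B → ExpPolyRing d := M.adjugate.mulVec fun a => f (t a)
  have hdet : ∀ x, evalExp x M.det = (Matrix.of fun a b => evalExp x (E b (t a))).det := fun x => by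
    rw [RingHom.map_det]
    rfl
  have hid : ∀ y, M.det * f y = ∑ b, E b y * N b := by
    intro y
    rw [← sub_eq_zero]
    refine evalExp_injective fun x => eq_zero_of_mem_expPolyFun
      (mem_expPolyFun.2 ⟨_, fun _ => rfl⟩) hV hne hVS (fun x hx => ?_) x
    obtain ⟨c, hc⟩ := hS x hx
    have hN : ∀ b, evalExp x (N b) = evalExp x M.det * c b := by
      intro b
      have h1 : evalExp x (N b) =
          ((evalExp x).mapMatrix M).adjugate.mulVec (((evalExp x).mapMatrix M).mulVec c) b := by
        simp only [N, Matrix.mulVec, dotProduct, map_sum, map_mul]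
        refine Finset.sum_congr rfl fun a _ => ?_
        rw [← hf, hc, ← RingHom.map_adjugate]
        simp only [RingHom.mapMatrix_apply, Matrix.map_apply]
        congr 1
        refine Finset.sum_congr rfl fun b _ => ?_
        rw [mul_comm, ← hE]
        rfl
      rw [h1, Matrix.mulVec_mulVec, Matrix.adjugate_mul, Matrix.smul_mulVec, Matrix.one_mulVec,
        RingHom.map_det]
      rfl
    rw [map_sub, map_mul, map_sum, ← hf, hc, Finset.mul_sum, sub_eq_zero]
    refine Finset.sum_congr rfl fun b _ => ?_
    rw [map_mul, hN, hE]
    ring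
  have hdvd := dvd_of_mul_eq_sum_single α φ M.det N f hid fun a Y hY c hc b hb =>
    expMonomial_indep ({b | α b = a} : Finset B) j β (fun b hb b' hb' he => by
      simp only [Finset.coe_filter, Finset.mem_univ, true_and, Set.mem_ofPred_eq] at hb hb'
      rw [Prod.mk.injEq] at he
      have h1 : Λ b = Λ b' := by
        have h2 := congrArg Subtype.val (hb.trans hb'.symm)
        simp only [α] at h2
        have h3 : MvPolynomial.constantCoeff (Λ b) = MvPolynomial.constantCoeff (Λ b') := he.2
        rwa [h3, add_left_inj] at h2
      exact hinj x₁ hx₁ (Prod.ext he.1 (by simp only [h1])))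
      (by simpa using hY.dense_compl ℝ) c hc b (by simpa using hb)
  choose q hq using hdvd
  refine ⟨fun b x => evalExp x (q b), hΛ, fun b => mem_expPolyFun.2 ⟨_, fun _ => rfl⟩,
    fun x y => ?_⟩
  have hD : M.det ≠ 0 := fun h0 => ht (by rw [← hdet, h0, map_zero])
  have hfy : f y = ∑ b, E b y * q b := by
    refine mul_left_cancel₀ hD ((hid y).trans ?_)
    rw [Finset.mul_sum]
    refine Finset.sum_congr rfl fun b _ => ?_
    rw [hq b, mul_left_comm]
  rw [hf, hfy, map_sum]
  refine Finset.sum_congr rfl fun b _ => ?_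
  rw [map_mul, hE, mul_comm]

theorem exists_eval_update_zero {d : ℕ} (k : Fin d) (p : MvPolynomial (Fin d) ℂ) :
    ∃ p' : MvPolynomial (Fin d) ℂ, (∀ i, p'.degreeOf i ≤ p.degreeOf i) ∧ p'.degreeOf k = 0 ∧
      ∀ x : Fin d → ℝ, realEval x p' = realEval (Function.update x k 0) p := by
  classical
  refine ⟨∑ m ∈ p.support with m k = 0, MvPolynomial.monomial m (p.coeff m), fun i => ?_, ?_,
    fun x => ?_⟩
  · refine (MvPolynomial.degreeOf_sum_le _ _ _).trans (Finset.sup_le fun m hm => ?_)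
    have hm' := (Finset.mem_filter.1 hm).1
    rw [MvPolynomial.degreeOf_monomial_eq _ _ (MvPolynomial.mem_support_iff.1 hm')]
    exact MvPolynomial.monomial_le_degreeOf i hm'
  · refine Nat.le_zero.1 ((MvPolynomial.degreeOf_sum_le _ _ _).trans (Finset.sup_le fun m hm => ?_))
    obtain ⟨hm', hmk⟩ := Finset.mem_filter.1 hm
    rw [MvPolynomial.degreeOf_monomial_eq _ _ (MvPolynomial.mem_support_iff.1 hm'), hmk]
  · rw [map_sum, realEval, MvPolynomial.eval_eq', Finset.sum_filter]
    refine Finset.sum_congr rfl fun m _ => ?_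
    split_ifs with hm
    · rw [MvPolynomial.eval_monomial, Finsupp.prod_fintype _ _ fun i => pow_zero _]
      congr 1
      refine Finset.prod_congr rfl fun i _ => ?_
      by_cases hi : i = k
      · subst hi; simp [hm]
      · simp [hi]
    · rw [Finset.prod_eq_zero (Finset.mem_univ k) (by simp [hm]), mul_zero]

theorem comp_update_zero_mem_expPolyFun {d : ℕ} {f : (Fin d → ℝ) → ℂ} (hf : f ∈ expPolyFun d)
    (k : Fin d) : (fun x => f (Function.update x k 0)) ∈ expPolyFun d := by
  obtain ⟨a, ha⟩ := mem_expPolyFun.1 hf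
  simp only [ha, evalExp_eq_sum]
  refine sum_mem_expPolyFun _ _ fun g _ => ?_
  obtain ⟨P, -, -, hP⟩ := exists_eval_update_zero k (a.coeff g)
  obtain ⟨lam, hlam, -, hlam'⟩ := exists_eval_update_zero k (g : MvPolynomial (Fin d) ℂ)
  simp only [← hP, ← hlam']
  exact mul_cexp_mem_expPolyFun P lam fun i => (hlam i).trans (g.2.1 i)

theorem isExpPoly1_const (c : ℂ) : IsExpPoly1 fun _ => c :=
  ⟨1, fun _ => Polynomial.C c, fun _ => 0, fun t => by simp⟩

theorem mem_expPolyFun_of_separately {d : ℕ} (S : Finset (Fin d)) (f : (Fin d → ℝ) → ℂ)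
    (hsep : ∀ k a, IsExpPoly1 fun t => f (Function.update a k t))
    (hdep : ∀ x x' : Fin d → ℝ, (∀ i ∈ S, x i = x' i) → f x = f x') : f ∈ expPolyFun d := by
  induction S using Finset.strongInduction generalizing f with
  | H S ih =>
    rcases S.eq_empty_or_nonempty with rfl | ⟨k, hk⟩
    · rw [show f = fun _ => f 0 from funext fun x => hdep x 0 (by simp)]
      exact const_mem_expPolyFun _
    have hfreeze : ∀ l ∈ S, ∀ y, (fun x => f (Function.update x l y)) ∈ expPolyFun d := by
      intro l hl y
      refine ih _ (Finset.erase_ssubset hl) _ (fun k' a => ?_) fun x x' hx => hdep _ _ fun i hi => ?_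
      · by_cases hk' : k' = l
        · subst hk'
          simp only [Function.update_idem]
          exact isExpPoly1_const _
        · simp only [Function.update_comm hk']
          exact hsep k' _
      · by_cases hil : i = l
        · subst hil; simp
        · simpa [hil] using hx i (Finset.mem_erase.2 ⟨hil, hi⟩)
    obtain ⟨B, _, j, Λ, q, hΛ, hq, hF⟩ := exists_global_form
      (F := fun x y => f (Function.update x k y)) (hfreeze k hk) (fun x => hsep k x) (fun l => by
        by_cases hlk : l = k
        · subst hlk
          refine ⟨2, fun x y => ?_⟩
          simp only [Function.update_idem]
          exact hankelVanish_two_const _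
        · simp only [Function.update_comm hlk]
          by_cases hl : l ∈ S
          · obtain ⟨n, hn⟩ := exists_hankelVanish_of_mem_expPolyFun
              (fun x t => f (Function.update x l t)) (hfreeze l hl) (hsep l)
            exact ⟨n, fun x y => hn (Function.update x k y)⟩
          · refine ⟨2, fun x y => ?_⟩
            rw [show (fun t => f (Function.update (Function.update x k y) l t)) =
              fun _ => f (Function.update x k y) from funext fun t => hdep _ _ fun i hi =>
                Function.update_of_ne (fun e : i = l => hl (e ▸ hi)) _ _]
            exact hankelVanish_two_const _)
    have hf : f = fun x => ∑ b, q b (Function.update x k 0) * ((x k : ℂ) ^ j b *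
        Complex.exp (realEval (Function.update x k 0) (Λ b) * x k)) := by
      funext x
      rw [← hF, Function.update_idem, Function.update_eq_self]
    rw [hf]
    refine sum_mem_expPolyFun _ _ fun b _ =>
      mul_mem_expPolyFun (comp_update_zero_mem_expPolyFun (hq b) k) ?_
    obtain ⟨lam, hlam, hlamk, hlam'⟩ := exists_eval_update_zero k (Λ b)
    have := mul_cexp_mem_expPolyFun (MvPolynomial.X k ^ j b) (lam * MvPolynomial.X k) fun i => by
      refine (MvPolynomial.degreeOf_mul_le _ _ _).trans ?_
      rw [MvPolynomial.degreeOf_X]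
      split_ifs with hi
      · rw [hi, hlamk]
      · exact (hlam i).trans (hΛ b i)
    simpa only [map_mul, map_pow, MvPolynomial.eval_X, hlam'] using this

theorem ronkin_1978
    {d : ℕ} (f : (Fin d → ℝ) → ℂ)
    (hsep : ∀ (k : Fin d) (a : Fin d → ℝ),
      IsExpPoly1 (fun t : ℝ => f (Function.update a k t))) :
    ∃ (s : ℕ) (P lam : Fin s → MvPolynomial (Fin d) ℂ),
      (∀ k i, MvPolynomial.degreeOf i (lam k) ≤ 1) ∧
      ∀ x : Fin d → ℝ,
        f x = ∑ k, MvPolynomial.eval (fun i => (x i : ℂ)) (P k) *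
          Complex.exp (MvPolynomial.eval (fun i => (x i : ℂ)) (lam k)) := by
  obtain ⟨a, ha⟩ := mem_expPolyFun.1
    (mem_expPolyFun_of_separately Finset.univ f hsep fun x x' h =>
      congrArg f (funext fun i => h i (Finset.mem_univ i)))
  let e := a.coeff.support.equivFin.symm
  refine ⟨a.coeff.support.card, fun k => a.coeff (e k), fun k => ((e k).1 : MvPolynomial _ ℂ),
    fun k i => (e k).1.2.1 i, fun x => ?_⟩
  rw [ha, evalExp_eq_sum, ← Finset.sum_coe_sort, ← e.sum_comp]
end

section
/- (Solution of the Popoviciu–Ionescu functional equation in several variables.) Let n be a positive integer and let f : ℝ^d → ℂ be a continuous function such that for all x, h ∈ ℝ^d, the determinant of the (n+1)×(n+1) matrix whose (i,j) entry is f(x + (i+j)h), for 0 ≤ i, j ≤ n, equals zero. Then f is an exponential polynomial. -/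
/-- `f : ℝ^d → ℂ` is an exponential polynomial: a finite sum of terms
`P_k(x) * exp(⟨λ_k, x⟩)` with `P_k` complex polynomials and `λ_k ∈ ℂ^d`. -/
def IsExpPoly {d : ℕ} (f : (Fin d → ℝ) → ℂ) : Prop :=
  ∃ (m : ℕ) (P : Fin m → MvPolynomial (Fin d) ℂ) (lam : Fin m → Fin d → ℂ),
    ∀ x : Fin d → ℝ,
      f x = ∑ k, MvPolynomial.eval (fun i => (x i : ℂ)) (P k) *
        Complex.exp (∑ i, lam k i * x i)

/-!
# The Popoviciu–Ionescu functional equation in several variables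

A continuous solution on `ℝ^d` satisfies, for steps `h` in a nonempty open set, a linear recurrence
with constant coefficients depending only on `h` (`HankelEq.exists_recurrence`). Hence its
translates span a finite-dimensional space, and it is a matrix coefficient of a continuous
finite-dimensional representation of `ℝ^d`.
-/

section
open Matrix Filter Topology

/-- All `N × N` minors of the kernel `K` vanish. -/
def VanishingMinors {X Y : Type*} (K : X → Y → ℂ) (N : ℕ) : Prop :=
  ∀ (x : Fin N → X) (y : Fin N → Y), (Matrix.of fun i j => K (x i) (y j)).det = 0

theorem VanishingMinors.schur_expansion {X Y : Type*} {K : X → Y → ℂ} {n : ℕ}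
    (h : VanishingMinors K (n + 1)) (x : Fin n → X) (y : Fin n → Y)
    (hP : (Matrix.of fun i j => K (x i) (y j)).det ≠ 0) (a : X) (b : Y) :
    K a b = ∑ i, ∑ j, K a (y j) * (Matrix.of fun i j => K (x i) (y j))⁻¹ j i * K (x i) b := by
  set P : Matrix (Fin n) (Fin n) ℂ := Matrix.of fun i j => K (x i) (y j) with hPdef
  let e : Fin n ⊕ Fin 1 ≃ Fin (n + 1) := finSumFinEquiv
  have h0 := h (Sum.elim x (fun _ => a) ∘ e.symm) (Sum.elim y (fun _ => b) ∘ e.symm)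
  rw [← Matrix.det_submatrix_equiv_self e] at h0
  have hb : (Matrix.of fun i j => K ((Sum.elim x (fun _ => a) ∘ e.symm) i)
      ((Sum.elim y (fun _ => b) ∘ e.symm) j)).submatrix e e =
      fromBlocks P (Matrix.of fun i (_ : Fin 1) => K (x i) b)
        (Matrix.of fun (_ : Fin 1) j => K a (y j)) (Matrix.of fun _ _ => K a b) := by
    ext i j
    rcases i with i | i <;> rcases j with j | j <;> simp [hPdef]
  have hu : IsUnit P.det := isUnit_iff_ne_zero.mpr hP
  let _ := P.invertibleOfIsUnitDet hu
  rw [hb, det_fromBlocks₁₁, mul_eq_zero, or_iff_right hP, det_fin_one,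
    Matrix.sub_apply, sub_eq_zero, Matrix.of_apply] at h0
  rw [h0, Matrix.mul_apply]
  refine Finset.sum_congr rfl fun i _ => ?_
  rw [Matrix.mul_apply, Finset.sum_mul, Matrix.invOf_eq_nonsing_inv]
  rfl

theorem VanishingMinors.exists_expansion {X Y : Type*} {K : X → Y → ℂ} {N : ℕ}
    (h : VanishingMinors K (N + 1)) :
    ∃ (r : ℕ) (x : Fin r → X) (y : Fin r → Y) (Q : Matrix (Fin r) (Fin r) ℂ),
      (Matrix.of fun i j => K (x i) (y j)) * Q = 1 ∧
      ∀ a b, K a b = ∑ i, ∑ j, K a (y j) * Q j i * K (x i) b := by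
  classical
  have hex : ∃ N, VanishingMinors K N := ⟨_, h⟩
  obtain ⟨hr, hmin⟩ := (⟨Nat.find_spec hex, fun m hm => Nat.find_min hex hm⟩ :
    VanishingMinors K (Nat.find hex) ∧ ∀ m < Nat.find hex, ¬ VanishingMinors K m)
  rcases hN : Nat.find hex with _ | r
  · rw [hN] at hr
    simpa using hr Fin.elim0
  · rw [hN] at hr hmin
    have := hmin r (Nat.lt_succ_self r)
    simp only [VanishingMinors, not_forall] at this
    obtain ⟨x, y, hP⟩ := this
    exact ⟨r, x, y, _, Matrix.mul_nonsing_inv _ (isUnit_iff_ne_zero.mpr hP),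
      hr.schur_expansion x y hP⟩

/-- A kernel whose rows lie in a space of dimension less than `N` has vanishing `N × N` minors. -/
theorem vanishingMinors_of_mem {X Y : Type*} {K : X → Y → ℂ} (W : Submodule ℂ (Y → ℂ))
    [FiniteDimensional ℂ W] {N : ℕ} (hN : Module.finrank ℂ W < N) (hK : ∀ x, K x ∈ W) :
    VanishingMinors K N := by
  intro x y
  have hdep : ¬ LinearIndependent ℂ (fun i => (⟨K (x i), hK _⟩ : W)) := by
    intro hli
    have := hli.fintype_card_le_finrank
    simp at this
    omega
  obtain ⟨g, hg, i, hi⟩ := Fintype.not_linearIndependent_iff.mp hdep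
  rw [← Matrix.exists_vecMul_eq_zero_iff]
  refine ⟨g, fun h => hi (congrFun h i), ?_⟩
  ext j
  have := congrFun (congrArg Subtype.val hg) (y j)
  simpa [Matrix.vecMul, dotProduct] using this

/-- The Hankel matrix of size `n` of the sequence `u`, with offset `m`. -/
def hankel (u : ℤ → ℂ) (n : ℕ) (m : ℤ) : Matrix (Fin n) (Fin n) ℂ :=
  Matrix.of fun i j => u (m + ((i : ℕ) + (j : ℕ) : ℕ))

theorem eq_zero_of_hankel {u : ℤ → ℂ} {n : ℕ} {m : ℤ} (h : (hankel u n m).det ≠ 0)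
    {c : Fin n → ℂ} (hc : ∀ i : ℕ, i < n → ∑ j : Fin n, u (m + (i + (j : ℕ) : ℕ)) * c j = 0) :
    c = 0 := by
  by_contra h0
  exact h (Matrix.exists_mulVec_eq_zero_iff.mp ⟨c, h0, funext fun i => hc i i.2⟩)

theorem eq_zero_of_hankel_succ_of_last {u : ℤ → ℂ} {n : ℕ} {m : ℤ} (h : (hankel u n m).det ≠ 0)
    {c : Fin (n + 1) → ℂ} (hl : c (Fin.last n) = 0)
    (hc : ∀ i : ℕ, i < n → ∑ j : Fin (n + 1), u (m + (i + (j : ℕ) : ℕ)) * c j = 0) : c = 0 := by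
  have : (fun j : Fin n => c j.castSucc) = 0 := eq_zero_of_hankel h fun i hi => by
    have := hc i hi
    rw [Fin.sum_univ_castSucc, hl, mul_zero, add_zero] at this
    exact this
  ext j
  refine Fin.lastCases hl (fun j => congrFun this j) j

theorem eq_zero_of_hankel_succ_of_zero {u : ℤ → ℂ} {n : ℕ} {m : ℤ}
    (h : (hankel u n (m + 1)).det ≠ 0) {c : Fin (n + 1) → ℂ} (hl : c 0 = 0)
    (hc : ∀ i : ℕ, i < n → ∑ j : Fin (n + 1), u (m + (i + (j : ℕ) : ℕ)) * c j = 0) : c = 0 := by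
  have : (fun j : Fin n => c j.succ) = 0 := eq_zero_of_hankel h fun i hi => by
    have := hc i hi
    rw [Fin.sum_univ_succ, hl, mul_zero, zero_add] at this
    rw [← this]
    refine Finset.sum_congr rfl fun j _ => ?_
    congr 2
    simp
    ring
  ext j
  refine Fin.cases hl (fun j => congrFun this j) j

theorem exists_hankel_ker {u : ℤ → ℂ} {n : ℕ} {m : ℤ} (h : (hankel u n m).det = 0) :
    ∃ c : Fin n → ℂ, c ≠ 0 ∧ ∀ i : ℕ, i < n → ∑ j : Fin n, u (m + (i + (j : ℕ) : ℕ)) * c j = 0 := by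
  obtain ⟨c, hc, h⟩ := Matrix.exists_mulVec_eq_zero_iff.mpr h
  exact ⟨c, hc, fun i hi => congrFun h ⟨i, hi⟩⟩

theorem hankel_det_ne_zero_pred {u : ℤ → ℂ} {n : ℕ} {m : ℤ} (h : (hankel u (n + 1) m).det = 0)
    (h1 : (hankel u n (m + 1)).det ≠ 0) : (hankel u n m).det ≠ 0 := by
  intro h0
  obtain ⟨c, hc, hcu⟩ := exists_hankel_ker h
  obtain ⟨d, hd, hdu⟩ := exists_hankel_ker h0
  have hc0 : c 0 ≠ 0 := fun h => hc (eq_zero_of_hankel_succ_of_zero h1 h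
    fun i hi => hcu i (by omega))
  have hcl : c (Fin.last n) ≠ 0 := fun hl => hc (eq_zero_of_hankel_succ_of_last h1 hl
    fun i hi => by
      rw [← hcu (i + 1) (by omega)]
      refine Finset.sum_congr rfl fun j _ => ?_
      congr 2
      push_cast
      ring)
  set D : Fin (n + 1) → ℂ := Fin.snoc d 0 with hD
  have hDl : D (Fin.last n) = 0 := by simp [hD]
  have hDs : ∀ j : Fin n, D j.castSucc = d j := fun j => by simp [hD]
  have key : (D - (D 0 / c 0) • c) = 0 := by
    refine eq_zero_of_hankel_succ_of_zero h1 (by simp [hc0]) fun i hi => ?_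
    have e1 : ∑ j : Fin (n + 1), u (m + (i + (j : ℕ) : ℕ)) * D j = 0 := by
      rw [Fin.sum_univ_castSucc, hDl, mul_zero, add_zero, ← hdu i hi]
      exact Finset.sum_congr rfl fun j _ => by rw [hDs]; rfl
    have e2 := hcu i (by omega)
    simp only [Pi.sub_apply, Pi.smul_apply, smul_eq_mul, mul_sub, Finset.sum_sub_distrib, e1]
    rw [zero_sub, neg_eq_zero, ← mul_zero (D 0 / c 0), ← e2, Finset.mul_sum]
    exact Finset.sum_congr rfl fun j _ => by ring
  have hl := congrFun key (Fin.last n)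
  simp [hDl, hcl, hc0] at hl
  rw [hl, zero_div, zero_smul, sub_zero] at key
  exact hd (funext fun j => by rw [← hDs, key]; rfl)

theorem hankel_det_ne_zero_succ {u : ℤ → ℂ} {n : ℕ} {m : ℤ} (h : (hankel u (n + 1) m).det = 0)
    (h1 : (hankel u n (m + 1)).det ≠ 0) : (hankel u n (m + 2)).det ≠ 0 := by
  intro h0
  obtain ⟨c, hc, hcu⟩ := exists_hankel_ker h
  obtain ⟨d, hd, hdu⟩ := exists_hankel_ker h0
  have hshift : ∀ c : Fin (n + 1) → ℂ, ∀ i,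
      ∑ j : Fin (n + 1), u (m + 1 + (i + (j : ℕ) : ℕ)) * c j =
        ∑ j : Fin (n + 1), u (m + (i + 1 + (j : ℕ) : ℕ)) * c j := fun c i => by
    refine Finset.sum_congr rfl fun j _ => ?_
    congr 2
    push_cast
    ring
  have hc0 : c 0 ≠ 0 := fun h => hc (eq_zero_of_hankel_succ_of_zero h1 h
    fun i hi => hcu i (by omega))
  have hcl : c (Fin.last n) ≠ 0 := fun hl => hc (eq_zero_of_hankel_succ_of_last h1 hl
    fun i hi => by rw [hshift, hcu (i + 1) (by omega)])
  set D : Fin (n + 1) → ℂ := Fin.cons 0 d with hD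
  have hDl : D 0 = 0 := by simp [hD]
  have hDs : ∀ j : Fin n, D j.succ = d j := fun j => by simp [hD]
  have key : (D - (D (Fin.last n) / c (Fin.last n)) • c) = 0 := by
    refine eq_zero_of_hankel_succ_of_last h1 (by simp [hcl]) fun i hi => ?_
    rw [hshift]
    have e1 : ∑ j : Fin (n + 1), u (m + (i + 1 + (j : ℕ) : ℕ)) * D j = 0 := by
      rw [Fin.sum_univ_succ, hDl, mul_zero, zero_add, ← hdu i hi]
      refine Finset.sum_congr rfl fun j _ => ?_
      rw [hDs]
      congr 2
      simp
      ring
    have e2 := hcu (i + 1) (by omega)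
    simp only [Pi.sub_apply, Pi.smul_apply, smul_eq_mul, mul_sub, Finset.sum_sub_distrib, e1]
    rw [zero_sub, neg_eq_zero, ← mul_zero (D (Fin.last n) / c (Fin.last n)), ← e2, Finset.mul_sum]
    exact Finset.sum_congr rfl fun j _ => by ring
  have hl := congrFun key 0
  simp [hDl, hcl, hc0] at hl
  rw [hl, zero_div, zero_smul, sub_zero] at key
  exact hd (funext fun j => by rw [← hDs, key]; rfl)

theorem hankel_det_ne_zero {u : ℤ → ℂ} {n : ℕ} (h : ∀ m, (hankel u (n + 1) m).det = 0)
    {m₀ : ℤ} (h₀ : (hankel u n m₀).det ≠ 0) (m : ℤ) : (hankel u n m).det ≠ 0 := by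
  induction m using Int.inductionOn' (b := m₀) with
  | zero => exact h₀
  | succ k _ ih =>
    have := hankel_det_ne_zero_succ (n := n) (m := k - 1) (h _) (by simpa using ih)
    convert this using 3
    ring
  | pred k _ ih => exact hankel_det_ne_zero_pred (h _) (by simpa using ih)

/-- A function annihilated by a monic polynomial in a translation has all its translates by
multiples of the step in the span of finitely many. -/
theorem translate_mem_span {G : Type*} [AddCommGroup G] {f : G → ℂ} {h : G} {n : ℕ}
    {c : Fin (n + 1) → ℂ} (hc : c (Fin.last n) = 1)
    (hf : ∀ x, ∑ j, c j * f (x + (j : ℕ) • h) = 0) (m : ℤ) :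
    (fun x => f (x + m • h)) ∈
      Submodule.span ℂ (Set.range fun (i : Fin n) x => f (x + (i : ℕ) • h)) := by
  set S := Submodule.span ℂ (Set.range fun (i : Fin n) x => f (x + (i : ℕ) • h)) with hS
  let T : (G → ℂ) →ₗ[ℂ] (G → ℂ) := LinearMap.funLeft ℂ ℂ (· + h)
  have hTinj : Function.Injective T :=
    LinearMap.funLeft_injective_of_surjective _ _ _ (add_right_surjective h)
  have hlast : (fun x => f (x + n • h)) ∈ S := by
    have : (fun x => f (x + n • h)) = -∑ j : Fin n, c j.castSucc • fun x => f (x + (j : ℕ) • h) := by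
      ext x
      have := hf x
      rw [Fin.sum_univ_castSucc, hc] at this
      simp only [Fin.val_last, one_mul, Fin.val_castSucc] at this
      simp only [Pi.neg_apply, Finset.sum_apply, Pi.smul_apply, smul_eq_mul]
      exact eq_neg_of_add_eq_zero_right this
    rw [this]
    exact S.neg_mem (S.sum_mem fun j _ => S.smul_mem _ (Submodule.subset_span ⟨j, rfl⟩))
  have hmap : S.map T ≤ S := by
    rw [hS, Submodule.map_span_le, ← hS]
    rintro _ ⟨i, rfl⟩
    have : T (fun x => f (x + (i : ℕ) • h)) = fun x => f (x + ((i : ℕ) + 1) • h) := by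
      ext x
      change f (x + h + (i : ℕ) • h) = _
      congr 1
      rw [add_smul, one_smul]
      abel
    rw [this]
    rcases Nat.lt_or_ge ((i : ℕ) + 1) n with hi | hi
    · exact Submodule.subset_span ⟨⟨_, hi⟩, rfl⟩
    · have : (i : ℕ) + 1 = n := by omega
      rw [this]
      exact hlast
  have : FiniteDimensional ℂ S := FiniteDimensional.span_of_finite ℂ (Set.finite_range _)
  have hmapeq : S.map T = S := Submodule.eq_of_le_of_finrank_eq hmap
    (Submodule.equivMapOfInjective T hTinj S).finrank_eq.symm
  have hTf : ∀ k : ℤ, T (fun x => f (x + k • h)) = fun x => f (x + (k + 1) • h) := fun k => by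
    ext x
    change f (x + h + k • h) = _
    congr 1
    rw [add_smul, one_smul]
    abel
  induction m using Int.induction_on with
  | zero =>
    rcases Nat.eq_zero_or_pos n with rfl | hn
    · simpa using hlast
    · refine Submodule.subset_span ⟨⟨0, hn⟩, ?_⟩
      simp
  | succ k ih => rw [← hTf]; exact hmap ⟨_, ih, rfl⟩
  | pred k ih =>
    rw [← hmapeq] at ih
    obtain ⟨g, hg, hgT⟩ := ih
    have := hTf (-(k : ℤ) - 1)
    rw [sub_add_cancel, ← hgT] at this
    rwa [hTinj this]

theorem VanishingMinors.succ {X Y : Type*} {K : X → Y → ℂ} {N : ℕ} (h : VanishingMinors K N) :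
    VanishingMinors K (N + 1) := by
  intro x y
  rw [Matrix.det_succ_row_zero]
  refine Finset.sum_eq_zero fun j _ => ?_
  have := h (x ∘ Fin.succ) (y ∘ j.succAbove)
  rw [mul_eq_zero]
  exact Or.inr this

theorem exists_recurrence_of_hankel {u : ℤ → ℂ} {n : ℕ} (h : ∀ m, (hankel u (n + 1) m).det = 0)
    (hne : ∀ m, (hankel u n m).det ≠ 0) :
    ∃ c : Fin (n + 1) → ℂ, c (Fin.last n) = 1 ∧ ∀ m, ∑ j, c j * u (m + (j : ℕ)) = 0 := by
  have hex : ∀ m, ∃ c : Fin (n + 1) → ℂ, c (Fin.last n) = 1 ∧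
      ∀ i : ℕ, i < n + 1 → ∑ j : Fin (n + 1), u (m + (i + (j : ℕ) : ℕ)) * c j = 0 := fun m => by
    obtain ⟨c, hc, hcu⟩ := exists_hankel_ker (h m)
    have hl : c (Fin.last n) ≠ 0 := fun hl =>
      hc (eq_zero_of_hankel_succ_of_last (hne m) hl fun i hi => hcu i (by omega))
    refine ⟨(c (Fin.last n))⁻¹ • c, by simp [hl], fun i hi => ?_⟩
    rw [← mul_zero (c (Fin.last n))⁻¹, ← hcu i hi, Finset.mul_sum]
    refine Finset.sum_congr rfl fun j _ => ?_
    simp only [Pi.smul_apply, smul_eq_mul]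
    ring
  choose c hc1 hc using hex
  have hstep : ∀ m, c (m + 1) = c m := fun m => by
    rw [← sub_eq_zero]
    refine eq_zero_of_hankel_succ_of_last (hne (m + 1)) (by simp [hc1]) fun i hi => ?_
    have e : ∑ j : Fin (n + 1), u (m + 1 + (i + (j : ℕ) : ℕ)) * c m j = 0 := by
      rw [← hc m (i + 1) (by omega)]
      refine Finset.sum_congr rfl fun j _ => ?_
      congr 2
      push_cast
      ring
    simp only [Pi.sub_apply, mul_sub, Finset.sum_sub_distrib, e, hc (m + 1) i (by omega), sub_zero]
  have hconst : ∀ m, c m = c 0 := fun m => by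
    induction m using Int.induction_on with
    | zero => rfl
    | succ k ih => rw [hstep, ih]
    | pred k ih => rw [← ih, ← hstep, sub_add_cancel]
  refine ⟨c 0, hc1 0, fun m => ?_⟩
  rw [← hc m 0 (by omega)]
  refine Finset.sum_congr rfl fun j _ => ?_
  rw [hconst m, mul_comm, zero_add]

theorem vanishingMinors_of_recurrence {G : Type*} [AddCommGroup G] {f : G → ℂ} {h : G} {n : ℕ}
    {c : Fin (n + 1) → ℂ} (hc : c (Fin.last n) = 1)
    (hf : ∀ x, ∑ j, c j * f (x + (j : ℕ) • h) = 0) :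
    VanishingMinors (fun (m : ℤ) x => f (x + m • h)) (n + 1) := by
  have := FiniteDimensional.span_of_finite ℂ
    (Set.finite_range fun (i : Fin n) x => f (x + (i : ℕ) • h))
  refine vanishingMinors_of_mem _ ?_ (translate_mem_span hc hf)
  rw [Nat.lt_succ_iff]
  exact (finrank_range_le_card (R := ℂ) fun (i : Fin n) x => f (x + (i : ℕ) • h)).trans (by simp)

theorem vanishingMinors_of_hankel {u : ℤ → ℂ} {n : ℕ} (h : ∀ m, (hankel u (n + 1) m).det = 0) :
    VanishingMinors (fun a b => u (a + b)) (n + 1) := by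
  induction n with
  | zero =>
    intro x y
    simpa [hankel] using h (x 0 + y 0)
  | succ n ih =>
    by_cases h0 : ∀ m, (hankel u (n + 1) m).det = 0
    · exact (ih h0).succ
    · push Not at h0
      obtain ⟨m₀, h₀⟩ := h0
      obtain ⟨c, hc, hcu⟩ := exists_recurrence_of_hankel h (hankel_det_ne_zero h h₀)
      have := vanishingMinors_of_recurrence (f := u) (h := 1) hc (by simpa using hcu)
      simpa [add_comm] using this

theorem exists_exp_smul_of_continuous {𝔸 : Type*} [NormedRing 𝔸] [NormedAlgebra ℝ 𝔸]
    [CompleteSpace 𝔸] {M : ℝ → 𝔸} (hM : Continuous M) (h0 : M 0 = 1)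
    (hadd : ∀ s t, M (s + t) = M s * M t) :
    ∃ A : 𝔸, ∀ t : ℝ, M t = NormedSpace.exp (t • A) := by
  let Φ : ℝ → 𝔸 := fun t => ∫ s in (0 : ℝ)..t, M s
  have hΦ : ∀ t, HasDerivAt Φ (M t) t := fun t => (hM.integral_hasStrictDerivAt 0 t).hasDerivAt
  have hΦ0 : Φ 0 = 0 := intervalIntegral.integral_same
  have hlim : Tendsto (fun ε : ℝ => ε⁻¹ • Φ ε) (𝓝[≠] 0) (𝓝 1) := by
    have := (hΦ 0).tendsto_slope_zero
    simpa [hΦ0, h0] using this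
  obtain ⟨ε, hε⟩ := (hlim.eventually (Units.isOpen.mem_nhds isUnit_one)).exists
  obtain ⟨B, hB⟩ := hε.exists_right_inv
  have hint : ∀ t, M t * Φ ε = Φ (t + ε) - Φ t := fun t => by
    have h1 : M t * Φ ε = ∫ s in (0 : ℝ)..ε, M (t + s) := by
      have := (ContinuousLinearMap.mul ℝ 𝔸 (M t)).intervalIntegral_comp_comm
        (hM.intervalIntegrable 0 ε (μ := MeasureTheory.volume))
      simp only [ContinuousLinearMap.mul_apply', ← hadd] at this
      exact this.symm
    rw [h1, intervalIntegral.integral_comp_add_left, add_zero]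
    exact (intervalIntegral.integral_interval_sub_left (hM.intervalIntegrable _ _)
      (hM.intervalIntegrable _ _)).symm
  have hMeq : ∀ t, M t = (ε⁻¹ • (Φ (t + ε) - Φ t)) * B := fun t => by
    rw [← hint, ← mul_smul_comm, mul_assoc, hB, mul_one]
  let A : 𝔸 := (ε⁻¹ • (M ε - 1)) * B
  have hder : ∀ t, HasDerivAt M (M t * A) t := fun t => by
    have h1 : HasDerivAt (fun t => (ε⁻¹ • (Φ (t + ε) - Φ t)) * B)
        ((ε⁻¹ • (M (t + ε) - M t)) * B) t :=
      ((((hΦ (t + ε)).comp_add_const t ε).sub (hΦ t)).const_smul ε⁻¹).mul_const B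
    refine (h1.congr_of_eventuallyEq (Eventually.of_forall hMeq)).congr_deriv ?_
    rw [hadd, ← mul_assoc, mul_smul_comm, mul_sub, mul_one]
  refine ⟨A, fun t => ?_⟩
  let : NormedAlgebra ℚ 𝔸 := NormedAlgebra.restrictScalars ℚ ℝ 𝔸
  have hconst : ∀ t, M t * NormedSpace.exp (t • -A) = 1 := by
    have hd : ∀ t, HasDerivAt (fun t => M t * NormedSpace.exp (t • -A)) 0 t := fun t => by
      refine ((hder t).mul (hasDerivAt_exp_smul_const' (𝕂 := ℝ) (-A) t)).congr_deriv ?_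
      rw [mul_assoc, neg_mul, mul_neg, add_neg_cancel]
    intro t
    have := is_const_of_deriv_eq_zero (fun t => (hd t).differentiableAt) (fun t => (hd t).deriv) t 0
    simpa [h0] using this
  have h2 : NormedSpace.exp (t • -A) * NormedSpace.exp (t • A) = 1 := by
    rw [← NormedSpace.exp_add_of_commute, smul_neg, neg_add_cancel, NormedSpace.exp_zero]
    rw [smul_neg]
    exact (Commute.refl _).neg_left
  calc M t = M t * (NormedSpace.exp (t • -A) * NormedSpace.exp (t • A)) := by rw [h2, mul_one]
    _ = _ := by rw [← mul_assoc, hconst, one_mul]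

/-- A function on a group whose translation kernel has finite rank is a matrix coefficient of a
finite-dimensional representation. -/
theorem VanishingMinors.exists_matrix_coeff {G : Type*} [AddCommGroup G] [TopologicalSpace G]
    [ContinuousAdd G] {u : G → ℂ} (hu : Continuous u) {N : ℕ}
    (h : VanishingMinors (fun a b => u (a + b)) (N + 1)) :
    ∃ (r : ℕ) (M : G → Matrix (Fin r) (Fin r) ℂ) (a b : Fin r → ℂ), Continuous M ∧ M 0 = 1 ∧
      (∀ g g', M (g + g') = M g * M g') ∧ ∀ g, u g = a ⬝ᵥ (M g *ᵥ b) := by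
  obtain ⟨r, s, t, Q, hQ, hexp⟩ := h.exists_expansion
  refine ⟨r, fun g => (Matrix.of fun i j => u (s i + g + t j)) * Q, fun i => ∑ j, u (t j) * Q j i,
    fun i => u (s i), ?_, ?_, fun g g' => ?_, fun g => ?_⟩
  · refine Continuous.matrix_mul (continuous_matrix fun i j => ?_) continuous_const
    exact hu.comp (by fun_prop)
  · simpa using hQ
  · rw [← Matrix.mul_assoc]
    refine congrArg (· * Q) (Matrix.ext fun i l => ?_)
    simp only [Matrix.mul_apply, Matrix.of_apply, Finset.sum_mul]
    rw [show s i + (g + g') + t l = s i + g + (g' + t l) by abel, hexp (s i + g) (g' + t l)]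
    simp only [add_assoc]
  · have e1 := hexp 0 g
    have e2 : ∀ i, u (s i + g) = ∑ i', ∑ j, u (s i + g + t j) * Q j i' * u (s i') := fun i => by
      have := hexp (s i + g) 0
      simpa using this
    simp only [zero_add] at e1
    rw [e1]
    simp only [dotProduct, Matrix.mulVec, Matrix.mul_apply, Matrix.of_apply, Finset.sum_mul, e2]

section
open scoped Matrix.Norms.Operator

theorem exists_entire_extension_of_vanishingMinors {u : ℝ → ℂ} (hu : Continuous u) {N : ℕ}
    (h : VanishingMinors (fun a b => u (a + b)) (N + 1)) :
    ∃ U : ℂ → ℂ, Differentiable ℂ U ∧ ∀ t : ℝ, U t = u t := by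
  obtain ⟨r, M, a, b, hM, h0, hadd, hMu⟩ := h.exists_matrix_coeff hu
  obtain ⟨A, hA⟩ := exists_exp_smul_of_continuous hM h0 hadd
  refine ⟨fun z => a ⬝ᵥ (NormedSpace.exp (z • A) *ᵥ b), ?_, fun t => ?_⟩
  · let L : Matrix (Fin r) (Fin r) ℂ →ₗ[ℂ] ℂ :=
      { toFun := fun X => a ⬝ᵥ (X *ᵥ b)
        map_add' := fun X Y => by rw [Matrix.add_mulVec, dotProduct_add]
        map_smul' := fun c X => by rw [Matrix.smul_mulVec, dotProduct_smul]; rfl }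
    exact (LinearMap.toContinuousLinearMap L).differentiable.comp
      (differentiable_exp_smul_const (𝕂 := ℂ) A)
  · have hs : (t : ℂ) • A = t • A := by
      ext i j
      simp
    beta_reduce
    rw [hMu, hA, ← hs]
    rfl

end

theorem tendsto_intFloor_mul_div (t : ℝ) :
    Tendsto (fun q : ℕ => (⌊t * q⌋ : ℝ) / q) atTop (𝓝 t) := by
  have h1 : Tendsto (fun q : ℕ => t - 1 / (q : ℝ)) atTop (𝓝 t) := by
    simpa using tendsto_const_nhds.sub (tendsto_one_div_atTop_nhds_zero_nat (𝕜 := ℝ))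
  refine tendsto_of_tendsto_of_tendsto_of_le_of_le' h1 tendsto_const_nhds ?_ ?_
  · filter_upwards [eventually_gt_atTop 0] with q hq
    have hq' : (0 : ℝ) < q := by exact_mod_cast hq
    rw [le_div_iff₀ hq', sub_mul, div_mul_cancel₀ _ hq'.ne']
    linarith [Int.lt_floor_add_one (t * q)]
  · filter_upwards [eventually_gt_atTop 0] with q hq
    have hq' : (0 : ℝ) < q := by exact_mod_cast hq
    rw [div_le_iff₀ hq']
    exact Int.floor_le _

theorem vanishingMinors_of_hankel_real {u : ℝ → ℂ} (hu : Continuous u) {n : ℕ}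
    (h : ∀ x h : ℝ, (Matrix.of fun i j : Fin (n + 1) => u (x + ((i : ℕ) + (j : ℕ)) • h)).det = 0) :
    VanishingMinors (fun a b => u (a + b)) (n + 1) := by
  intro s t
  have hcont : Continuous fun p : (Fin (n + 1) → ℝ) × (Fin (n + 1) → ℝ) =>
      (Matrix.of fun i j => u (p.1 i + p.2 j)).det :=
    Continuous.matrix_det (continuous_matrix fun i j => hu.comp (by fun_prop))
  have hlim : Tendsto (fun q : ℕ => ((fun i => (⌊s i * q⌋ : ℝ) / q, fun i => (⌊t i * q⌋ : ℝ) / q) :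
      (Fin (n + 1) → ℝ) × (Fin (n + 1) → ℝ))) atTop (𝓝 (s, t)) :=
    (tendsto_pi_nhds.mpr fun i => tendsto_intFloor_mul_div _).prodMk_nhds
      (tendsto_pi_nhds.mpr fun i => tendsto_intFloor_mul_div _)
  refine tendsto_nhds_unique ((hcont.tendsto _).comp hlim) ?_
  refine tendsto_const_nhds.congr fun q => ?_
  have hh : ∀ m : ℤ, (hankel (fun m => u ((m : ℝ) / q)) (n + 1) m).det = 0 := fun m => by
    rw [← h (m / q) (1 / q)]
    congr 1
    ext i j
    simp only [hankel, Matrix.of_apply]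
    congr 1
    push_cast
    simp only [nsmul_eq_mul]
    push_cast
    ring
  have := vanishingMinors_of_hankel hh (fun i => ⌊s i * q⌋) (fun i => ⌊t i * q⌋)
  rw [← this]
  simp only [Function.comp]
  congr 1
  ext i j
  simp only [Matrix.of_apply]
  push_cast
  rw [add_div]

theorem Differentiable.matrix_det {n : ℕ} {A : ℂ → Matrix (Fin n) (Fin n) ℂ}
    (hA : ∀ i j, Differentiable ℂ fun z => A z i j) : Differentiable ℂ fun z => (A z).det := by
  simp only [Matrix.det_apply]
  exact Differentiable.fun_sum fun σ _ =>
    (Differentiable.fun_finsetProd fun i _ => hA _ _).const_smul _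

theorem eq_zero_of_eventually_ofReal {g : ℂ → ℂ} (hg : Differentiable ℂ g)
    (h : ∀ᶠ t : ℝ in 𝓝 0, g t = 0) : ∀ z, g z = 0 := by
  have ht : Tendsto ((↑) : ℝ → ℂ) (𝓝[≠] 0) (𝓝[≠] (0 : ℂ)) := by
    refine tendsto_nhdsWithin_iff.mpr ⟨?_, ?_⟩
    · exact (Complex.continuous_ofReal.tendsto' 0 0 (by simp)).mono_left nhdsWithin_le_nhds
    · filter_upwards [self_mem_nhdsWithin] with t ht
      simpa using ht
  have hf : ∃ᶠ z in 𝓝[≠] (0 : ℂ), g z = (fun _ => 0) z :=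
    ht.frequently (h.filter_mono nhdsWithin_le_nhds).frequently
  have := AnalyticOnNhd.eq_of_frequently_eq (fun z _ => hg.analyticAt z)
    (fun z _ => analyticAt_const) hf
  exact fun z => congrFun this z

/-- The quotient of two entire functions is constant if it is bounded. -/
theorem mul_eq_mul_of_norm_le_mul {D B : ℂ → ℂ} (hD : Differentiable ℂ D)
    (hB : Differentiable ℂ B) {K : ℝ} (h : ∀ z, B z ≠ 0 → ‖D z‖ ≤ K * ‖B z‖) (z w : ℂ) :
    D z * B w = D w * B z := by
  by_cases hB0 : ∀ z, B z = 0
  · simp [hB0]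
  have hBne : ∀ c, ∀ᶠ w in 𝓝[≠] c, B w ≠ 0 := fun c => by
    by_contra hc
    refine hB0 fun z => ?_
    have hc' : ∃ᶠ w in 𝓝[≠] c, B w = (fun _ => 0) w := by
      exact (Filter.not_eventually.mp hc).mono fun w hw => not_not.mp hw
    exact congrFun (AnalyticOnNhd.eq_of_frequently_eq (fun z _ => hB.analyticAt z)
      (fun z _ => analyticAt_const) hc') z
  let q : ℂ → ℂ := fun z => D z / B z
  have hq : ∀ z, B z ≠ 0 → DifferentiableAt ℂ q z := fun z hz => (hD z).div (hB z) hz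
  have hqK : ∀ z, B z ≠ 0 → ‖q z‖ ≤ K := fun z hz => by
    rw [norm_div, div_le_iff₀ (norm_pos_iff.mpr hz)]
    exact h z hz
  let Q : ℂ → ℂ := fun c => limUnder (𝓝[≠] c) q
  have hQq : ∀ z, B z ≠ 0 → Q z = q z := fun z hz =>
    ((hq z hz).continuousAt.tendsto.mono_left nhdsWithin_le_nhds).limUnder_eq
  have hupd : ∀ c, ∃ s ∈ 𝓝 c, DifferentiableOn ℂ (Function.update q c (Q c)) s ∧
      ∀ w ∈ s, Q w = Function.update q c (Q c) w := fun c => by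
    refine ⟨{w | w ≠ c → B w ≠ 0}, eventually_nhdsWithin_iff.mp (hBne c), ?_, ?_⟩
    · refine Complex.differentiableOn_update_limUnder_of_bddAbove
        (eventually_nhdsWithin_iff.mp (hBne c)) ?_ ?_
      · exact fun w hw => (hq w (hw.1 hw.2)).differentiableWithinAt
      · refine ⟨K, ?_⟩
        rintro _ ⟨w, hw, rfl⟩
        exact hqK w (hw.1 hw.2)
    · intro w hw
      by_cases hwc : w = c
      · subst hwc
        simp
      · rw [Function.update_of_ne hwc, hQq w (hw hwc)]
  have hQd : Differentiable ℂ Q := fun c => by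
    obtain ⟨s, hs, hds, heq⟩ := hupd c
    exact (hds.differentiableAt hs).congr_of_eventuallyEq (Filter.mem_of_superset hs heq)
  have hQb : ∀ c, ‖Q c‖ ≤ K := fun c =>
    le_of_tendsto (hQd.continuous.norm.continuousAt.tendsto.mono_left
      (nhdsWithin_le_nhds (s := {c}ᶜ)))
      ((hBne c).mono fun w hw => (hQq w hw).symm ▸ hqK w hw)
  have hconst : ∀ z, Q z = Q 0 := fun z => hQd.apply_eq_apply_of_bounded
    (isBounded_iff_forall_norm_le.mpr ⟨K, by rintro _ ⟨c, rfl⟩; exact hQb c⟩) z 0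
  have hDB : ∀ z, D z = Q 0 * B z := by
    have hfr : ∃ᶠ z in 𝓝[≠] (0 : ℂ), D z = (fun z => Q 0 * B z) z := by
      refine ((hBne 0).mono fun w hw => ?_).frequently
      rw [← hconst w, hQq w hw]
      exact (div_mul_cancel₀ _ hw).symm
    exact congrFun (AnalyticOnNhd.eq_of_frequently_eq (fun z _ => hD.analyticAt z)
      (fun z _ => (hB.const_mul _).analyticAt z) hfr)
  rw [hDB z, hDB w]
  ring

theorem le_of_pow_le_mul_pow {a b c : ℝ} (hb : 0 < b)
    (h : ∀ m : ℕ, a ^ m ≤ c * b ^ m) : a ≤ b := by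
  by_contra! hab
  have h1 : 1 < a / b := (one_lt_div hb).mpr hab
  obtain ⟨m, hm⟩ := ((tendsto_pow_atTop_atTop_of_one_lt h1).eventually_gt_atTop c).exists
  rw [div_pow, lt_div_iff₀ (pow_pos hb m)] at hm
  exact absurd (h m) (not_le.mpr hm)

theorem norm_det_sub_smul_one_le {n : ℕ} {A : Matrix (Fin n) (Fin n) ℂ} {K R : ℝ} (hR : 0 < R)
    (hA : ∀ (m : ℕ) i j, ‖(A ^ m) i j‖ ≤ K * R ^ m) (μ : ℂ) :
    ‖(A - μ • (1 : Matrix (Fin n) (Fin n) ℂ)).det‖ ≤ (R + ‖μ‖) ^ n := by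
  have hpow : ∀ (m : ℕ) i j, ‖((A - μ • (1 : Matrix (Fin n) (Fin n) ℂ)) ^ m) i j‖ ≤
      K * (R + ‖μ‖) ^ m := fun m i j => by
    have hc : Commute A ((-μ) • (1 : Matrix (Fin n) (Fin n) ℂ)) :=
      (Commute.one_right A).smul_right _
    rw [sub_eq_add_neg, ← neg_smul, hc.add_pow, Matrix.sum_apply, add_pow, Finset.mul_sum]
    refine norm_sum_le_of_le _ fun k _ => ?_
    rw [smul_pow, one_pow, mul_smul_comm, mul_one, ← nsmul_eq_mul', Matrix.smul_apply,
      Matrix.smul_apply, nsmul_eq_mul, smul_eq_mul, norm_mul, norm_mul, norm_pow, norm_neg,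
      Complex.norm_natCast]
    calc _ ≤ (m.choose k : ℝ) * (‖μ‖ ^ (m - k) * (K * R ^ k)) := by
          gcongr
          exact hA k i j
      _ = _ := by ring
  refine le_of_pow_le_mul_pow (c := n.factorial * K ^ n)
    (pow_pos (by positivity) n) fun m => ?_
  rw [← norm_pow, ← Matrix.det_pow]
  have := Matrix.det_le (abv := NormedField.toAbsoluteValue ℂ) (hpow m)
  simp only [Fintype.card_fin, nsmul_eq_mul] at this
  refine this.trans (le_of_eq ?_)
  rw [mul_pow, mul_assoc, ← pow_mul, ← pow_mul, mul_comm m n]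

theorem hankel_eq_pow_mul {v : ℤ → ℂ} {n : ℕ} (h : ∀ m, (hankel v (n + 1) m).det = 0)
    (hP : (hankel v n 0).det ≠ 0) (k : ℕ) :
    hankel v n k = (hankel v n 1 * (hankel v n 0)⁻¹) ^ k * hankel v n 0 := by
  have hP' : hankel v n 0 = Matrix.of fun i j : Fin n => v (((i : ℕ) : ℤ) + ((j : ℕ) : ℤ)) := by
    ext i j
    simp [hankel]
  have hexp := (vanishingMinors_of_hankel h).schur_expansion (fun i : Fin n => ((i : ℕ) : ℤ))
    (fun j : Fin n => ((j : ℕ) : ℤ)) (hP' ▸ hP)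
  rw [← hP'] at hexp
  induction k with
  | zero => simp
  | succ k ih =>
    rw [pow_succ', Matrix.mul_assoc, ← ih]
    ext i j
    simp only [Matrix.mul_apply, Finset.sum_mul]
    have := hexp (1 + (i : ℕ)) (k + (j : ℕ))
    convert this using 1
    · simp only [hankel, Matrix.of_apply]
      congr 1
      push_cast
      ring
    · refine Finset.sum_congr rfl fun a _ => Finset.sum_congr rfl fun b _ => ?_
      rw [show ((a : ℕ) : ℤ) + (k + (j : ℕ)) = k + ((a : ℕ) + (j : ℕ)) by ring]
      simp only [hankel, Matrix.of_apply, Nat.cast_add, add_assoc]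

theorem norm_det_hankel_sub_le {v : ℤ → ℂ} {n : ℕ} (h : ∀ m, (hankel v (n + 1) m).det = 0)
    (hP : (hankel v n 0).det ≠ 0) {R : ℝ} (hR : 1 ≤ R)
    (hv : ∀ᶠ k : ℕ in atTop, ‖v k‖ ≤ R ^ (k + 1)) (μ : ℂ) :
    ‖(hankel v n 1 - μ • hankel v n 0).det‖ ≤ (R + ‖μ‖) ^ n * ‖(hankel v n 0).det‖ := by
  have hu : IsUnit (hankel v n 0).det := isUnit_iff_ne_zero.mpr hP
  set C := hankel v n 1 * (hankel v n 0)⁻¹ with hC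
  have hR0 : 0 < R := by linarith
  obtain ⟨K, hK0, hK⟩ : ∃ K : ℝ, 0 ≤ K ∧ ∀ k : ℕ, ‖v k‖ ≤ K * R ^ k := by
    obtain ⟨m₀, hm₀⟩ := eventually_atTop.mp hv
    refine ⟨R + ∑ k ∈ Finset.range m₀, ‖v k‖, by positivity, fun k => ?_⟩
    rcases lt_or_ge k m₀ with hk | hk
    · have h1 : ‖v k‖ ≤ ∑ k ∈ Finset.range m₀, ‖v k‖ :=
        Finset.single_le_sum (f := fun k : ℕ => ‖v k‖) (fun _ _ => norm_nonneg _)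
          (Finset.mem_range.mpr hk)
      have h2 : 1 ≤ R ^ k := one_le_pow₀ hR
      have h3 := h1.trans (le_mul_of_one_le_right ((norm_nonneg _).trans h1) h2)
      rw [add_mul]
      exact h3.trans (le_add_of_nonneg_left (by positivity))
    · have h1 : 0 ≤ ∑ k ∈ Finset.range m₀, ‖v k‖ := by positivity
      have h2 : 0 < R ^ k := by positivity
      have := hm₀ k hk
      rw [pow_succ'] at this
      nlinarith
  have hpow : ∀ k : ℕ, C ^ k = hankel v n k * (hankel v n 0)⁻¹ := fun k => by
    rw [hankel_eq_pow_mul h hP, Matrix.mul_assoc, Matrix.mul_nonsing_inv _ hu, Matrix.mul_one]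
  obtain ⟨L, hL⟩ : ∃ L : ℝ, ∀ i j, ‖(hankel v n 0)⁻¹ i j‖ ≤ L := by
    refine ⟨∑ i, ∑ j, ‖(hankel v n 0)⁻¹ i j‖, fun i j => ?_⟩
    exact (Finset.single_le_sum (f := fun j => ‖(hankel v n 0)⁻¹ i j‖)
      (fun _ _ => norm_nonneg _) (Finset.mem_univ j)).trans
      (Finset.single_le_sum (f := fun i => ∑ j, ‖(hankel v n 0)⁻¹ i j‖)
      (fun _ _ => by positivity) (Finset.mem_univ i))
  have hdet : hankel v n 1 - μ • hankel v n 0 = (C - μ • 1) * hankel v n 0 := by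
    rw [Matrix.sub_mul, hC, Matrix.mul_assoc, Matrix.nonsing_inv_mul _ hu, Matrix.mul_one,
      Matrix.smul_mul, Matrix.one_mul]
  rw [hdet, Matrix.det_mul, norm_mul]
  refine mul_le_mul_of_nonneg_right ?_ (norm_nonneg _)
  refine norm_det_sub_smul_one_le (K := n * (K * R ^ (2 * n) * L)) hR0 (fun m i j => ?_) μ
  rw [hpow, Matrix.mul_apply]
  have : ∀ l ∈ Finset.univ, ‖hankel v n m i l * (hankel v n 0)⁻¹ l j‖ ≤
      K * R ^ (2 * n) * L * R ^ m := fun l _ => by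
    rw [norm_mul]
    have h1 : ‖hankel v n m i l‖ ≤ K * R ^ (2 * n) * R ^ m := by
      have := hK (m + (i + l))
      push_cast at this
      simp only [hankel, Matrix.of_apply]
      push_cast
      refine this.trans ?_
      rw [mul_assoc, ← pow_add]
      gcongr ?_ * ?_
      exact pow_le_pow_right₀ hR (by omega)
    calc _ ≤ (K * R ^ (2 * n) * R ^ m) * L :=
          mul_le_mul h1 (hL l j) (norm_nonneg _) (by positivity)
      _ = _ := by ring
  refine (norm_sum_le_of_le _ this).trans (le_of_eq ?_)
  simp
  ring

section
open scoped Matrix.Norms.Operator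

theorem exists_norm_le_pow_of_hankel {v : ℤ → ℂ} {n : ℕ}
    (h : ∀ m, (hankel v (n + 1) m).det = 0) :
    ∃ M : ℕ, ∀ k : ℕ, ‖v k‖ ≤ ((M : ℝ) + 1) ^ (k + 1) := by
  obtain ⟨r, M, a, b, -, h0, hadd, hv⟩ :=
    (vanishingMinors_of_hankel h).exists_matrix_coeff (continuous_of_discreteTopology (f := v))
  have hC : ∀ X : Matrix (Fin r) (Fin r) ℂ, ‖a ⬝ᵥ (X *ᵥ b)‖ ≤ (∑ i, ‖a i‖) * ‖b‖ * ‖X‖ := by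
    intro X
    rw [dotProduct, mul_assoc, Finset.sum_mul]
    refine norm_sum_le_of_le _ fun i _ => ?_
    rw [norm_mul, mul_comm ‖b‖]
    gcongr
    exact (norm_le_pi_norm _ i).trans (Matrix.linfty_opNorm_mulVec X b)
  set C := (∑ i, ‖a i‖) * ‖b‖
  have hC0 : 0 ≤ C := by positivity
  have hpow : ∀ k : ℕ, ‖M k‖ ≤ ‖(1 : Matrix (Fin r) (Fin r) ℂ)‖ * ‖M 1‖ ^ k := fun k => by
    induction k with
    | zero => simp [h0]
    | succ k ih =>
      rw [Nat.cast_succ, hadd, pow_succ, ← mul_assoc]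
      exact (norm_mul_le _ _).trans (mul_le_mul_of_nonneg_right ih (norm_nonneg _))
  obtain ⟨K, hK⟩ := exists_nat_ge
    (max (C * ‖(1 : Matrix (Fin r) (Fin r) ℂ)‖) ‖M 1‖)
  refine ⟨K, fun k => ?_⟩
  calc ‖v k‖ = ‖a ⬝ᵥ (M k *ᵥ b)‖ := by rw [hv]
    _ ≤ C * ‖M k‖ := hC _
    _ ≤ C * (‖(1 : Matrix (Fin r) (Fin r) ℂ)‖ * ‖M 1‖ ^ k) := by gcongr; exact hpow k
    _ = (C * ‖(1 : Matrix (Fin r) (Fin r) ℂ)‖) * ‖M 1‖ ^ k := by ring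
    _ ≤ ((K : ℝ) + 1) * ((K : ℝ) + 1) ^ k := by
      gcongr
      · exact (le_max_left _ _).trans (hK.trans (by linarith))
      · exact (le_max_right _ _).trans (hK.trans (by linarith))
    _ = _ := by ring

end

theorem sum_charpoly_coeff_mul_eq_zero {v : ℤ → ℂ} {n : ℕ} (hn : 0 < n)
    (h : ∀ m, (hankel v (n + 1) m).det = 0) (hP : (hankel v n 0).det ≠ 0) :
    ∑ j : Fin (n + 1), (hankel v n 1 * (hankel v n 0)⁻¹).charpoly.coeff j * v (j : ℕ) = 0 := by
  have h1 := Matrix.aeval_self_charpoly (hankel v n 1 * (hankel v n 0)⁻¹)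
  rw [Polynomial.aeval_eq_sum_range, Matrix.charpoly_natDegree_eq_dim, Fintype.card_fin] at h1
  have h2 := congrArg (fun X => (X * hankel v n 0) ⟨0, hn⟩ ⟨0, hn⟩) h1
  simp only [Matrix.sum_mul, Matrix.smul_mul, ← hankel_eq_pow_mul h hP, Matrix.sum_apply,
    Matrix.smul_apply, Matrix.zero_mul, Matrix.zero_apply] at h2
  rw [← h2, Finset.sum_range]
  simp [hankel]

theorem hankel_det_eq_zero_of_ofReal {U : ℤ → ℂ → ℂ} (hU : ∀ m, Differentiable ℂ (U m)) {n : ℕ}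
    (h : ∀ (z s : ℝ) (m : ℤ), (hankel (fun m => U m (z + m * s)) n m).det = 0) (z s : ℂ) (m : ℤ) :
    (hankel (fun m => U m (z + m * s)) n m).det = 0 := by
  have h1 : ∀ (s : ℝ) (z : ℂ), (hankel (fun m => U m (z + m * s)) n m).det = 0 := fun s =>
    eq_zero_of_eventually_ofReal
      (Differentiable.matrix_det fun i j => (hU _).comp (by fun_prop))
      (Eventually.of_forall fun z => h z s m)
  exact eq_zero_of_eventually_ofReal
    (g := fun s => (hankel (fun m => U m (z + m * s)) n m).det)
    (Differentiable.matrix_det fun i j => (hU _).comp (by fun_prop))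
    (Eventually.of_forall fun s => h1 s z) s

/-- The characteristic polynomial of the recurrence satisfied by `m ↦ U m (z + m * s)` does not
depend on `z`. -/
theorem hankel_det_sub_mul_eq {U : ℤ → ℂ → ℂ} (hU : ∀ m, Differentiable ℂ (U m)) {n : ℕ}
    (h : ∀ (z s : ℂ) (m : ℤ), (hankel (fun m => U m (z + m * s)) (n + 1) m).det = 0)
    (μ z w s : ℂ) :
    (hankel (fun m => U m (z + m * s)) n 1 - μ • hankel (fun m => U m (z + m * s)) n 0).det *
      (hankel (fun m => U m (w + m * s)) n 0).det =
    (hankel (fun m => U m (w + m * s)) n 1 - μ • hankel (fun m => U m (w + m * s)) n 0).det *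
      (hankel (fun m => U m (z + m * s)) n 0).det := by
  let E : ℕ → Set (ℂ × ℂ) := fun M =>
    {p | ∀ k : ℕ, ‖U k (p.1 + k * p.2)‖ ≤ ((M : ℝ) + 1) ^ (k + 1)}
  have hclosed : ∀ M, IsClosed (E M) := fun M => by
    simp only [E, Set.ofPred_forall]
    refine isClosed_iInter fun k => isClosed_le ?_ continuous_const
    exact ((hU k).continuous.comp (by fun_prop)).norm
  have hcover : ⋃ M, E M = Set.univ := Set.eq_univ_of_forall fun p => by
    obtain ⟨M, hM⟩ := exists_norm_le_pow_of_hankel (h p.1 p.2)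
    exact Set.mem_iUnion.mpr ⟨M, fun k => by simpa using hM k⟩
  obtain ⟨M, ⟨z₀, s₀⟩, hp⟩ := nonempty_interior_of_iUnion_of_closed hclosed hcover
  obtain ⟨δ, hδ, hball⟩ := Metric.mem_nhds_iff.mp (mem_interior_iff_mem_nhds.mp hp)
  have hgrowth : ∀ s ∈ Metric.ball s₀ (δ / 2), ∀ z : ℂ,
      ∀ᶠ k : ℕ in atTop, ‖U k (z + k * s)‖ ≤ ((M : ℝ) + 1) ^ (k + 1) := by
    intro s hs z
    have hlim : Tendsto (fun k : ℕ => ‖z - z₀‖ / k) atTop (𝓝 0) :=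
      tendsto_const_div_atTop_nhds_zero_nat _
    filter_upwards [hlim.eventually_lt_const (half_pos hδ), eventually_gt_atTop 0] with k hk hk0
    have hk' : (k : ℂ) ≠ 0 := by exact_mod_cast hk0.ne'
    have hmem : (z₀, s + (z - z₀) / k) ∈ E M := by
      refine hball ?_
      rw [← ball_prod_same]
      refine ⟨Metric.mem_ball_self hδ, ?_⟩
      rw [Metric.mem_ball, dist_eq_norm] at hs ⊢
      calc ‖s + (z - z₀) / k - s₀‖ = ‖(s - s₀) + (z - z₀) / k‖ := by congr 1; ring
        _ ≤ ‖s - s₀‖ + ‖(z - z₀) / k‖ := norm_add_le _ _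
        _ < δ / 2 + δ / 2 := by
          refine add_lt_add hs ?_
          rwa [norm_div, Complex.norm_natCast]
        _ = δ := add_halves δ
    convert hmem k using 3
    simp only
    field_simp
    ring
  have hcomp : ∀ (m : ℤ) (s : ℂ), Differentiable ℂ fun z => U m (z + m * s) :=
    fun m s => (hU m).comp (by fun_prop)
  have hcomp' : ∀ (m : ℤ) (z : ℂ), Differentiable ℂ fun s => U m (z + m * s) :=
    fun m z => (hU m).comp (by fun_prop)
  have hBz : ∀ s, Differentiable ℂ fun z => (hankel (fun m => U m (z + m * s)) n 0).det :=
    fun s => Differentiable.matrix_det fun i j => hcomp _ s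
  have hDz : ∀ s, Differentiable ℂ fun z => (hankel (fun m => U m (z + m * s)) n 1 -
      μ • hankel (fun m => U m (z + m * s)) n 0).det := fun s =>
    Differentiable.matrix_det fun i j =>
      (hcomp _ s).sub ((hcomp _ s).const_smul μ)
  have hlocal : ∀ s ∈ Metric.ball s₀ (δ / 2),
      (hankel (fun m => U m (z + m * s)) n 1 - μ • hankel (fun m => U m (z + m * s)) n 0).det *
        (hankel (fun m => U m (w + m * s)) n 0).det =
      (hankel (fun m => U m (w + m * s)) n 1 - μ • hankel (fun m => U m (w + m * s)) n 0).det *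
        (hankel (fun m => U m (z + m * s)) n 0).det := fun s hs =>
    mul_eq_mul_of_norm_le_mul (hDz s) (hBz s)
      (fun z hz => norm_det_hankel_sub_le (h z s) hz (by simp) (hgrowth s hs z) μ) z w
  have hB : ∀ z, Differentiable ℂ fun s => (hankel (fun m => U m (z + m * s)) n 0).det :=
    fun z => Differentiable.matrix_det fun i j => hcomp' _ z
  have hD : ∀ z, Differentiable ℂ fun s => (hankel (fun m => U m (z + m * s)) n 1 -
      μ • hankel (fun m => U m (z + m * s)) n 0).det := fun z =>
    Differentiable.matrix_det fun i j =>
      (hcomp' _ z).sub ((hcomp' _ z).const_smul μ)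
  exact congrFun (AnalyticOnNhd.eq_of_eventuallyEq
    (fun s _ => ((hD z).mul (hB w)).analyticAt s) (fun s _ => ((hD w).mul (hB z)).analyticAt s)
    (z₀ := s₀) (by
      filter_upwards [Metric.ball_mem_nhds s₀ (half_pos hδ)] with s hs
      exact hlocal s hs)) s

/-- `f` solves the Popoviciu–Ionescu functional equation of size `n`. -/
def HankelEq {E : Type*} [AddCommGroup E] (f : E → ℂ) (n : ℕ) : Prop :=
  ∀ x h, (Matrix.of fun i j : Fin n => f (x + ((i : ℕ) + (j : ℕ)) • h)).det = 0

theorem HankelEq.hankel_det {E : Type*} [AddCommGroup E] {f : E → ℂ} {n : ℕ} (hf : HankelEq f n)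
    (x h : E) (m : ℤ) : (hankel (fun m => f (x + m • h)) n m).det = 0 := by
  rw [← hf (x + m • h) h]
  congr 1
  ext i j
  simp only [hankel, Matrix.of_apply, add_smul, natCast_zsmul, add_assoc]

section
variable {E : Type*} [NormedAddCommGroup E] [NormedSpace ℝ E] {f : E → ℂ} {n : ℕ}

theorem HankelEq.exists_entire (hf : HankelEq f (n + 1)) (hc : Continuous f) (x k : E) :
    ∃ U : ℂ → ℂ, Differentiable ℂ U ∧ ∀ t : ℝ, U t = f (x + t • k) := by
  have hu : Continuous fun t : ℝ => f (x + t • k) := hc.comp (by fun_prop)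
  refine exists_entire_extension_of_vanishingMinors hu
    (vanishingMinors_of_hankel_real (n := n) hu ?_)
  intro t h
  rw [← hf (x + t • k) (h • k)]
  congr 1
  ext i j
  simp only [Matrix.of_apply, add_smul, smul_assoc, add_assoc]

theorem HankelEq.det_sub_mul_eq (hf : HankelEq f (n + 1)) (hc : Continuous f) (x k h : E) (μ : ℂ) :
    (hankel (fun m => f (x + k + m • h)) n 1 - μ • hankel (fun m => f (x + k + m • h)) n 0).det *
      (hankel (fun m => f (x + m • h)) n 0).det =
    (hankel (fun m => f (x + m • h)) n 1 - μ • hankel (fun m => f (x + m • h)) n 0).det *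
      (hankel (fun m => f (x + k + m • h)) n 0).det := by
  choose U hU hUf using fun m : ℤ => hf.exists_entire hc (x + m • h) k
  have hreal : ∀ z s : ℝ, (fun m : ℤ => U m (z + m * s)) =
      fun m => f ((x + z • k) + m • (h + s • k)) := fun z s => by
    funext m
    have := hUf m (z + m * s)
    push_cast at this
    rw [this, add_smul, smul_add, mul_smul, Int.cast_smul_eq_zsmul]
    congr 1
    abel
  have h0 := hreal 0 0
  have h1 := hreal 1 0
  have := hankel_det_sub_mul_eq hU (n := n) (hankel_det_eq_zero_of_ofReal hU
    fun z s m => by rw [hreal]; exact hf.hankel_det _ _ _) μ (1 : ℝ) (0 : ℝ) (0 : ℝ)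
  rw [h0, h1] at this
  simpa using this

end

theorem eval_charpoly_mul_inv_mul_det {n : ℕ} {H₀ : Matrix (Fin n) (Fin n) ℂ} (h : H₀.det ≠ 0)
    (H₁ : Matrix (Fin n) (Fin n) ℂ) (μ : ℂ) :
    (H₁ * H₀⁻¹).charpoly.eval μ * H₀.det = (-1) ^ n * (H₁ - μ • H₀).det := by
  have e : (Matrix.scalar (Fin n) μ - H₁ * H₀⁻¹) * H₀ = -(H₁ - μ • H₀) := by
    rw [Matrix.sub_mul, Matrix.mul_assoc, Matrix.nonsing_inv_mul _ (isUnit_iff_ne_zero.mpr h),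
      Matrix.mul_one, neg_sub, Matrix.scalar_apply, ← Matrix.smul_eq_diagonal_mul]
  rw [Matrix.eval_charpoly, ← Matrix.det_mul, e, Matrix.det_neg, Fintype.card_fin]

section
variable {E : Type*} [NormedAddCommGroup E] [NormedSpace ℝ E] {f : E → ℂ} {n : ℕ}

/-- Where the `n`-th Hankel determinant does not vanish identically, `f` satisfies a linear
recurrence with constant coefficients in the step `h`. -/
theorem HankelEq.exists_recurrence (hf : HankelEq f (n + 1)) (hc : Continuous f) (hn : 0 < n)
    {x₀ h : E} (h₀ : (hankel (fun m => f (x₀ + m • h)) n 0).det ≠ 0) :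
    ∃ c : Fin (n + 1) → ℂ, c (Fin.last n) = 1 ∧ ∀ x, ∑ j, c j * f (x + (j : ℕ) • h) = 0 := by
  let H : E → ℤ → Matrix (Fin n) (Fin n) ℂ := fun x => hankel (fun m => f (x + m • h)) n
  let χ := (H x₀ 1 * (H x₀ 0)⁻¹).charpoly
  have hχ : ∀ x, (H x 0).det ≠ 0 → (H x 1 * (H x 0)⁻¹).charpoly = χ := fun x hx => by
    refine Polynomial.funext fun μ => ?_
    have e1 := eval_charpoly_mul_inv_mul_det hx (H x 1) μ
    have e2 := eval_charpoly_mul_inv_mul_det h₀ (H x₀ 1) μ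
    have e3 := hf.det_sub_mul_eq hc x₀ (x - x₀) h μ
    rw [add_sub_cancel] at e3
    refine mul_right_cancel₀ (mul_ne_zero hx h₀) ?_
    calc _ = ((H x 1 * (H x 0)⁻¹).charpoly.eval μ * (H x 0).det) * (H x₀ 0).det := by ring
      _ = (-1) ^ n * ((H x 1 - μ • H x 0).det * (H x₀ 0).det) := by rw [e1]; ring
      _ = (-1) ^ n * ((H x₀ 1 - μ • H x₀ 0).det * (H x 0).det) := by rw [e3]
      _ = (χ.eval μ * (H x₀ 0).det) * (H x 0).det := by rw [e2]; ring
      _ = _ := by ring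
  have hgood : ∀ x, (H x 0).det ≠ 0 → ∑ j : Fin (n + 1), χ.coeff j * f (x + (j : ℕ) • h) = 0 :=
    fun x hx => by
      have := sum_charpoly_coeff_mul_eq_zero hn (hf.hankel_det x h) hx
      simp only [natCast_zsmul] at this
      rw [← this, ← hχ x hx]
  refine ⟨fun j => χ.coeff j, ?_, fun x => ?_⟩
  · have h1 : χ.natDegree = n := by
      rw [Matrix.charpoly_natDegree_eq_dim, Fintype.card_fin]
    have h2 : χ.Monic := Matrix.charpoly_monic _
    change χ.coeff n = 1
    rw [← h1]
    exact h2
  · choose U hU hUf using fun m : ℕ => hf.exists_entire hc (x₀ + m • h) (x - x₀)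
    have hcont : Continuous fun t : ℝ => (H (x₀ + t • (x - x₀)) 0).det :=
      Continuous.matrix_det (continuous_matrix fun i j => hc.comp (by fun_prop))
    have hne : ∀ᶠ t : ℝ in 𝓝 0, (H (x₀ + t • (x - x₀)) 0).det ≠ 0 :=
      hcont.continuousAt.eventually_ne (by simpa using h₀)
    have hg : ∀ t : ℝ, ∑ j : Fin (n + 1), χ.coeff j * U j t =
        ∑ j : Fin (n + 1), χ.coeff j * f (x₀ + t • (x - x₀) + (j : ℕ) • h) := fun t => by
      simp only [hUf, add_right_comm]
    have h1 := eq_zero_of_eventually_ofReal (g := fun z => ∑ j : Fin (n + 1), χ.coeff j * U j z)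
      (Differentiable.fun_sum fun j _ => (hU j).const_mul _)
      (hne.mono fun t ht => (hg t).trans (hgood _ ht)) ((1 : ℝ) : ℂ)
    rw [hg, one_smul, add_sub_cancel] at h1
    exact h1

theorem translate_add_mem_span {G : Type*} [AddCommGroup G] {f : G → ℂ} {h h' : G} {n : ℕ}
    {c c' : Fin (n + 1) → ℂ} (hc : c (Fin.last n) = 1) (hc' : c' (Fin.last n) = 1)
    (hf : ∀ x, ∑ j, c j * f (x + (j : ℕ) • h) = 0)
    (hf' : ∀ x, ∑ j, c' j * f (x + (j : ℕ) • h') = 0) (m m' : ℤ) :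
    (fun x => f (x + (m • h + m' • h'))) ∈ Submodule.span ℂ
      (Set.range fun (p : Fin n × Fin n) x => f (x + ((p.1 : ℕ) • h + (p.2 : ℕ) • h'))) := by
  set W := Submodule.span ℂ
    (Set.range fun (p : Fin n × Fin n) x => f (x + ((p.1 : ℕ) • h + (p.2 : ℕ) • h'))) with hW
  let T : G → (G → ℂ) →ₗ[ℂ] (G → ℂ) := fun y => LinearMap.funLeft ℂ ℂ (· + y)
  have h1 : ∀ j : Fin n, (fun x => f (x + (m • h + (j : ℕ) • h'))) ∈ W := fun j => by
    have := Submodule.mem_map_of_mem (f := T ((j : ℕ) • h')) (translate_mem_span hc hf m)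
    rw [Submodule.map_span, ← Set.range_comp] at this
    have e : (fun x => f (x + (m • h + (j : ℕ) • h'))) =
        T ((j : ℕ) • h') fun x => f (x + m • h) := by
      funext x
      simp only [T, LinearMap.funLeft_apply]
      congr 1
      abel
    rw [e]
    refine Submodule.span_mono ?_ this
    rintro _ ⟨i, rfl⟩
    refine ⟨(i, j), ?_⟩
    funext x
    simp only [T, Function.comp, LinearMap.funLeft_apply]
    congr 1
    abel
  have := Submodule.mem_map_of_mem (f := T (m • h)) (translate_mem_span hc' hf' m')
  rw [Submodule.map_span, ← Set.range_comp] at this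
  have e : (fun x => f (x + (m • h + m' • h'))) = T (m • h) fun x => f (x + m' • h') := by
    funext x
    simp only [T, LinearMap.funLeft_apply]
    congr 1
    abel
  rw [e]
  refine Submodule.span_le.mpr ?_ this
  rintro _ ⟨j, rfl⟩
  refine (congrArg (· ∈ W) ?_).mp (h1 j)
  funext x
  simp only [T, Function.comp, LinearMap.funLeft_apply]
  congr 1
  abel

/-- Translates of `f` by the integer multiples of a small vector span a space of bounded
dimension. -/
theorem HankelEq.eventually_vanishingMinors (hf : HankelEq f (n + 1)) (hc : Continuous f)
    (hn : 0 < n) {x₀ h₀ : E} (h₀ne : (hankel (fun m => f (x₀ + m • h₀)) n 0).det ≠ 0) :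
    ∀ᶠ y : E in 𝓝 0, VanishingMinors (fun (m : ℤ) x => f (x + m • y)) (n * n + 1) := by
  have hcont : Continuous fun y : E => (hankel (fun m => f (x₀ + m • (h₀ + y))) n 0).det :=
    Continuous.matrix_det (continuous_matrix fun i j => hc.comp (by fun_prop))
  filter_upwards [hcont.continuousAt.eventually_ne (by simpa using h₀ne)] with y hy
  obtain ⟨c, hc1, hcf⟩ := hf.exists_recurrence hc hn h₀ne
  obtain ⟨c', hc1', hcf'⟩ := hf.exists_recurrence hc hn hy
  let g : Fin n × Fin n → E → ℂ := fun p x => f (x + ((p.1 : ℕ) • h₀ + (p.2 : ℕ) • (h₀ + y)))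
  have := FiniteDimensional.span_of_finite ℂ (Set.finite_range g)
  refine vanishingMinors_of_mem (Submodule.span ℂ (Set.range g)) (Nat.lt_succ_of_le ?_) fun m => ?_
  rotate_left
  · convert translate_add_mem_span hc1 hc1' hcf hcf' (-m) m using 3
    simp only [smul_add, neg_smul, neg_add_cancel_left]
  · refine (finrank_range_le_card _).trans ?_
    simp

/-- Translates along a line span a finite-dimensional space. -/
theorem HankelEq.vanishingMinors_line (hf : HankelEq f (n + 1)) (hc : Continuous f)
    (hn : 0 < n) {x₀ h₀ : E} (h₀ne : (hankel (fun m => f (x₀ + m • h₀)) n 0).det ≠ 0) (k : E) :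
    VanishingMinors (fun (t : ℝ) x => f (x + t • k)) (n * n + 1) := by
  intro t x
  have hcont : Continuous fun s : Fin (n * n + 1) → ℝ =>
      (Matrix.of fun i j => f (x j + s i • k)).det :=
    Continuous.matrix_det (continuous_matrix fun i j => hc.comp (by fun_prop))
  have hlim : Tendsto (fun (q : ℕ) i => (⌊t i * q⌋ : ℝ) / q) atTop (𝓝 t) :=
    tendsto_pi_nhds.mpr fun i => tendsto_intFloor_mul_div _
  have hstep : Tendsto (fun q : ℕ => (1 / (q : ℝ)) • k) atTop (𝓝 0) := by
    simpa using (tendsto_one_div_atTop_nhds_zero_nat (𝕜 := ℝ)).smul_const k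
  refine tendsto_nhds_unique ((hcont.tendsto _).comp hlim) ?_
  refine tendsto_const_nhds.congr' ?_
  filter_upwards [hstep.eventually (hf.eventually_vanishingMinors hc hn h₀ne)] with q hq
  rw [← hq (fun i => ⌊t i * q⌋) x]
  simp only [Function.comp]
  congr 1
  ext i j
  simp only [Matrix.of_apply]
  rw [← Int.cast_smul_eq_zsmul ℝ, smul_smul, mul_one_div]

end

section
variable {d : ℕ}

theorem IsExpPoly.of_fintype {ι : Type*} [Fintype ι] {f : (Fin d → ℝ) → ℂ}
    (P : ι → MvPolynomial (Fin d) ℂ) (lam : ι → Fin d → ℂ)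
    (h : ∀ x : Fin d → ℝ, f x = ∑ k, MvPolynomial.eval (fun i => (x i : ℂ)) (P k) *
      Complex.exp (∑ i, lam k i * x i)) : IsExpPoly f := by
  let e := Fintype.equivFin ι
  refine ⟨Fintype.card ι, P ∘ e.symm, lam ∘ e.symm, fun x => ?_⟩
  rw [h, ← e.symm.sum_comp]
  rfl

theorem IsExpPoly.term (P : MvPolynomial (Fin d) ℂ) (lam : Fin d → ℂ) :
    IsExpPoly fun x => MvPolynomial.eval (fun i => (x i : ℂ)) P *
      Complex.exp (∑ i, lam i * x i) :=
  .of_fintype (fun _ : Unit => P) (fun _ => lam) fun x => by simp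

theorem IsExpPoly.const (c : ℂ) : IsExpPoly fun _ : Fin d → ℝ => c := by
  simpa using IsExpPoly.term (MvPolynomial.C c) (0 : Fin d → ℂ)

theorem IsExpPoly.add {f g : (Fin d → ℝ) → ℂ} (hf : IsExpPoly f) (hg : IsExpPoly g) :
    IsExpPoly fun x => f x + g x := by
  obtain ⟨m, P, lam, hf⟩ := hf
  obtain ⟨m', P', lam', hg⟩ := hg
  refine .of_fintype (Sum.elim P P') (Sum.elim lam lam') fun x => ?_
  rw [hf, hg, Fintype.sum_sum_type]
  rfl

theorem IsExpPoly.mul {f g : (Fin d → ℝ) → ℂ} (hf : IsExpPoly f) (hg : IsExpPoly g) :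
    IsExpPoly fun x => f x * g x := by
  obtain ⟨m, P, lam, hf⟩ := hf
  obtain ⟨m', P', lam', hg⟩ := hg
  refine .of_fintype (fun p : Fin m × Fin m' => P p.1 * P' p.2)
    (fun p => lam p.1 + lam' p.2) fun x => ?_
  rw [hf, hg, Finset.sum_mul_sum, Fintype.sum_prod_type]
  refine Finset.sum_congr rfl fun i _ => Finset.sum_congr rfl fun j _ => ?_
  simp only [map_mul, Pi.add_apply, add_mul, Finset.sum_add_distrib, Complex.exp_add]
  ring

theorem IsExpPoly.sum {ι : Type*} (s : Finset ι) {f : ι → (Fin d → ℝ) → ℂ}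
    (hf : ∀ i ∈ s, IsExpPoly (f i)) : IsExpPoly fun x => ∑ i ∈ s, f i x := by
  classical
  induction s using Finset.induction_on with
  | empty => simpa using IsExpPoly.const 0
  | insert a s ha ih =>
    simp only [Finset.sum_insert ha]
    exact (hf a (Finset.mem_insert_self a s)).add
      (ih fun i hi => hf i (Finset.mem_insert_of_mem hi))

section
open scoped Matrix.Norms.Operator

theorem exp_smul_mulVec_of_pow_mulVec_eq_zero {r : ℕ} {A : Matrix (Fin r) (Fin r) ℂ} {μ : ℂ}
    {N : ℕ} {v : Fin r → ℂ} (hv : ((A - μ • (1 : Matrix (Fin r) (Fin r) ℂ)) ^ N) *ᵥ v = 0) (t : ℂ) :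
    NormedSpace.exp (t • A) *ᵥ v = Complex.exp (μ * t) • ∑ k ∈ Finset.range N,
      ((k.factorial : ℂ)⁻¹ * t ^ k) • ((A - μ • (1 : Matrix (Fin r) (Fin r) ℂ)) ^ k *ᵥ v) := by
  set B := A - μ • (1 : Matrix (Fin r) (Fin r) ℂ) with hB
  have hA : t • A = (μ * t) • (1 : Matrix (Fin r) (Fin r) ℂ) + t • B := by
    rw [hB, smul_sub, smul_smul, mul_comm μ t, add_sub_cancel]
  have hscal : NormedSpace.exp ((μ * t) • (1 : Matrix (Fin r) (Fin r) ℂ)) =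
      Complex.exp (μ * t) • (1 : Matrix (Fin r) (Fin r) ℂ) := by
    rw [← Matrix.diagonal_one, ← Matrix.diagonal_smul, Matrix.exp_diagonal, ← Matrix.diagonal_smul]
    congr 1
    funext i
    rw [Pi.coe_exp]
    simp [Complex.exp_eq_exp_ℂ]
  have hzero : ∀ k ∉ Finset.range N, B ^ k *ᵥ v = 0 := fun k hk => by
    rw [← Nat.sub_add_cancel (not_lt.mp (mt Finset.mem_range.mpr hk)), pow_add,
      ← Matrix.mulVec_mulVec, hv, Matrix.mulVec_zero]
  have hexp : NormedSpace.exp (t • B) *ᵥ v =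
      ∑ k ∈ Finset.range N, ((k.factorial : ℂ)⁻¹ * t ^ k) • (B ^ k *ᵥ v) := by
    have h1 := NormedSpace.exp_series_hasSum_exp' (𝕂 := ℂ) (t • B)
    have h2 := h1.map (AddMonoidHom.mk' (fun X : Matrix (Fin r) (Fin r) ℂ => X *ᵥ v)
      fun X Y => Matrix.add_mulVec X Y v) (Continuous.matrix_mulVec continuous_id continuous_const)
    refine h2.unique ?_
    have h3 : ∀ k, (AddMonoidHom.mk' (fun X : Matrix (Fin r) (Fin r) ℂ => X *ᵥ v)
        fun X Y => Matrix.add_mulVec X Y v) ((k.factorial : ℂ)⁻¹ • (t • B) ^ k) =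
        ((k.factorial : ℂ)⁻¹ * t ^ k) • (B ^ k *ᵥ v) := fun k => by
      rw [AddMonoidHom.mk'_apply, smul_pow, smul_smul, Matrix.smul_mulVec]
    refine HasSum.congr_fun ?_ h3
    refine hasSum_sum_of_ne_finset_zero fun k hk => ?_
    rw [hzero k hk, smul_zero]
  rw [hA, Matrix.exp_add_of_commute _ _ ((Commute.one_left _).smul_left _), hscal,
    Matrix.smul_mul, Matrix.one_mul, Matrix.smul_mulVec, hexp]

end

theorem isExpPoly_exp_smul {r : ℕ} (A : Matrix (Fin r) (Fin r) ℂ) (j : Fin d) (i k : Fin r) :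
    IsExpPoly fun x => NormedSpace.exp ((x j : ℂ) • A) i k := by
  suffices h : ∀ v : Fin r → ℂ, ∀ i,
      IsExpPoly fun x => (NormedSpace.exp ((x j : ℂ) • A) *ᵥ v) i by
    simpa using h (Pi.single k 1) i
  intro v
  have hmem : v ∈ ⨆ μ, Module.End.maxGenEigenspace (Matrix.toLinAlgEquiv' A) μ := by
    rw [Module.End.iSup_maxGenEigenspace_eq_top]
    trivial
  induction hmem using Submodule.iSup_induction' with
  | zero => exact fun i => by simpa using IsExpPoly.const 0
  | add v w _ _ hv hw =>
    intro i
    simpa only [Matrix.mulVec_add, Pi.add_apply] using (hv i).add (hw i)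
  | mem μ v hv =>
    obtain ⟨N, hN⟩ := (Module.End.mem_maxGenEigenspace _ _ _).mp hv
    rw [← map_one (Matrix.toLinAlgEquiv' (R := ℂ) (n := Fin r)), ← map_smul, ← map_sub, ← map_pow,
      Matrix.toLinAlgEquiv'_apply] at hN
    intro i
    simp only [exp_smul_mulVec_of_pow_mulVec_eq_zero hN, Pi.smul_apply, Finset.sum_apply,
      smul_eq_mul]
    refine IsExpPoly.mul ?_ (IsExpPoly.sum _ fun k _ => ?_)
    · simpa [Pi.single_apply] using IsExpPoly.term 1 (Pi.single j μ)
    · refine IsExpPoly.mul ?_ (IsExpPoly.const _)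
      refine (congrArg IsExpPoly (funext fun x => ?_)).mp (IsExpPoly.term
        (MvPolynomial.C (k.factorial : ℂ)⁻¹ * MvPolynomial.X j ^ k) (0 : Fin d → ℂ))
      rw [map_mul, map_pow, MvPolynomial.eval_C, MvPolynomial.eval_X]
      simp

section
open scoped Matrix.Norms.Operator

/-- Entries of a continuous finite-dimensional representation of `ℝ^d` are exponential
polynomials. -/
theorem isExpPoly_of_continuous_hom {r : ℕ} {M : (Fin d → ℝ) → Matrix (Fin r) (Fin r) ℂ}
    (hM : Continuous M) (h0 : M 0 = 1) (hadd : ∀ x y, M (x + y) = M x * M y) (i k : Fin r) :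
    IsExpPoly fun x => M x i k := by
  have hline : ∀ j : Fin d, ∀ i k, IsExpPoly fun x => M (Pi.single j (x j)) i k := fun j i k => by
    obtain ⟨A, hA⟩ := exists_exp_smul_of_continuous (M := fun t : ℝ => M (Pi.single j t))
      (hM.comp (continuous_single (A := fun _ => ℝ) j)) (by simpa using h0) fun s t => by rw [Pi.single_add, hadd]
    have hA' : ∀ t : ℝ, M (Pi.single j t) = NormedSpace.exp ((t : ℂ) • A) := fun t => by
      have hs : (t : ℂ) • A = t • A := by
        ext i j
        simp
      rw [hs]
      exact hA t
    simp only [hA']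
    exact isExpPoly_exp_smul A j i k
  have key : ∀ (S : Finset (Fin d)) (i k : Fin r),
      IsExpPoly fun x => M (∑ j ∈ S, Pi.single j (x j)) i k := by
    intro S
    induction S using Finset.induction_on with
    | empty => exact fun i k => by simpa [h0] using IsExpPoly.const _
    | insert j S hj ih =>
      intro i k
      simp only [Finset.sum_insert hj, hadd, Matrix.mul_apply]
      exact IsExpPoly.sum _ fun l _ => (hline j i l).mul (ih l k)
  simpa only [Finset.univ_sum_single] using key Finset.univ i k

end

theorem exists_finiteDimensional_translates {f : (Fin d → ℝ) → ℂ} {N : ℕ}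
    (h : ∀ k, VanishingMinors (fun (t : ℝ) x => f (x + t • k)) (N + 1)) :
    ∃ W : Submodule ℂ ((Fin d → ℝ) → ℂ), FiniteDimensional ℂ W ∧
      ∀ y, (fun x => f (x + y)) ∈ W := by
  let T : (Fin d → ℝ) → ((Fin d → ℝ) → ℂ) →ₗ[ℂ] ((Fin d → ℝ) → ℂ) :=
    fun y => LinearMap.funLeft ℂ ℂ (· + y)
  have key : ∀ S : Finset (Fin d), ∃ W : Submodule ℂ ((Fin d → ℝ) → ℂ), FiniteDimensional ℂ W ∧
      ∀ y : Fin d → ℝ, (fun x => f (x + ∑ j ∈ S, Pi.single j (y j))) ∈ W := by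
    intro S
    induction S using Finset.induction_on with
    | empty =>
      refine ⟨Submodule.span ℂ {f}, inferInstance, fun y => ?_⟩
      simp [Submodule.mem_span_singleton_self]
    | insert a S ha ih =>
      obtain ⟨W, hW, hWf⟩ := ih
      obtain ⟨r, s, z, Q, -, hexp⟩ := (h (Pi.single a 1)).exists_expansion
      refine ⟨⨆ i : Fin r, W.map (T (s i • Pi.single a 1)), inferInstance, fun y => ?_⟩
      have e : (fun x => f (x + ∑ j ∈ insert a S, Pi.single j (y j))) =
          ∑ i, (∑ j, f (z j + y a • Pi.single a 1) * Q j i) •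
            T (s i • Pi.single a 1) fun x => f (x + ∑ j ∈ S, Pi.single j (y j)) := by
        funext x
        have h1 := hexp (y a) (x + ∑ j ∈ S, Pi.single j (y j))
        have h2 : x + ∑ j ∈ insert a S, (Pi.single j (y j) : Fin d → ℝ) =
            (x + ∑ j ∈ S, Pi.single j (y j)) + y a • Pi.single a 1 := by
          rw [Finset.sum_insert ha, ← Pi.single_smul, smul_eq_mul, mul_one]
          abel
        rw [h2, h1]
        simp only [Finset.sum_apply, Pi.smul_apply, T, LinearMap.funLeft_apply, smul_eq_mul,
          Finset.sum_mul, add_right_comm]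
      rw [e]
      exact Submodule.sum_mem _ fun i _ => Submodule.smul_mem _ _
        (Submodule.mem_iSup_of_mem i (Submodule.mem_map_of_mem (hWf y)))
  obtain ⟨W, hW, hWf⟩ := key Finset.univ
  exact ⟨W, hW, fun y => by simpa only [Finset.univ_sum_single] using hWf y⟩

theorem HankelEq.isExpPoly {f : (Fin d → ℝ) → ℂ} {n : ℕ} (hf : HankelEq f (n + 1))
    (hc : Continuous f) : IsExpPoly f := by
  classical
  have hex : ∃ n, HankelEq f (n + 1) := ⟨n, hf⟩
  obtain ⟨n, hn, hmin⟩ : ∃ n, HankelEq f (n + 1) ∧ ∀ m < n, ¬ HankelEq f (m + 1) :=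
    ⟨Nat.find hex, Nat.find_spec hex, fun m hm => Nat.find_min hex hm⟩
  rcases n with - | n
  · have : f = fun _ => 0 := funext fun x => by simpa using hn x 0
    exact this ▸ IsExpPoly.const 0
  have hne := hmin n n.lt_succ_self
  simp only [HankelEq, not_forall] at hne
  obtain ⟨x₀, h₀, hdet⟩ := hne
  have hdet' : (hankel (fun m => f (x₀ + m • h₀)) (n + 1) 0).det ≠ 0 := by
    convert hdet using 2
    ext i j
    simp only [hankel, Matrix.of_apply, zero_add, natCast_zsmul]
  obtain ⟨W, hW, hWf⟩ := exists_finiteDimensional_translates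
    (hn.vanishingMinors_line hc n.succ_pos hdet')
  have hV : VanishingMinors (fun y x => f (y + x)) (Module.finrank ℂ W + 1) :=
    vanishingMinors_of_mem W (Nat.lt_succ_self _) fun y => by simpa only [add_comm] using hWf y
  obtain ⟨r, M, a, b, hM, h0, hadd, hfM⟩ := hV.exists_matrix_coeff hc
  have e : f = fun x => ∑ i, a i * ∑ j, M x i j * b j := funext hfM
  rw [e]
  exact IsExpPoly.sum _ fun i _ => (IsExpPoly.const _).mul (IsExpPoly.sum _ fun j _ =>
    (isExpPoly_of_continuous_hom hM h0 hadd i j).mul (IsExpPoly.const _))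

end

end

theorem popoviciu_ionescu_several_variables
    {d n : ℕ} (hn : 1 ≤ n) (f : (Fin d → ℝ) → ℂ) (hf : Continuous f)
    (heq : ∀ x h : Fin d → ℝ,
      Matrix.det (fun i j : Fin (n + 1) => f (x + ((i : ℕ) + (j : ℕ)) • h)) = 0) :
    IsExpPoly f := by
  exact HankelEq.isExpPoly (n := n) heq hf
end
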